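/- arXiv:2111.10590 — 8 statements merged into one kernel-verified Lean document; each statement's English description precedes it below -/
import Mathlib

section
/- For every integer n > 7, the number of partitions of n with all parts at least 2 and more odd parts than even parts is strictly less than the number of partitions of n with all parts at least 2 and more even parts than odd parts; that is, q_o(n) < q_e(n). -/
/-- The number of odd parts of a partition, counted with multiplicity. -/
def Nat.Partition.oddCount {n : ℕ} (l : n.Partition) : ℕ :=
  (l.parts.filter (fun p => p % 2 = 1)).card

/-- The number of even parts of a partition, counted with multiplicity. -/
def Nat.Partition.evenCount {n : ℕ} (l : n.Partition) : ℕ :=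
  (l.parts.filter (fun p => p % 2 = 0)).card


namespace QBias
open PowerSeries

/-- coefficientwise nonnegativity -/
def NN (f : PowerSeries ℤ) : Prop := ∀ n, 0 ≤ coeff n f

theorem NN.add {f g : PowerSeries ℤ} (hf : NN f) (hg : NN g) : NN (f + g) := by
  intro n; rw [map_add]; exact add_nonneg (hf n) (hg n)

theorem NN.mul {f g : PowerSeries ℤ} (hf : NN f) (hg : NN g) : NN (f * g) := by
  intro n; rw [coeff_mul]; exact Finset.sum_nonneg fun p _ => mul_nonneg (hf _) (hg _)

theorem NN.zero : NN 0 := by intro n; simp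
theorem NN.one : NN 1 := by intro n; rw [coeff_one]; split_ifs <;> simp
theorem NN.x : NN X := by intro n; rw [coeff_X]; split_ifs <;> simp

theorem NN.pow {f : PowerSeries ℤ} (hf : NN f) (k : ℕ) : NN (f ^ k) := by
  induction k with
  | zero => simpa using NN.one
  | succ k ih => rw [pow_succ]; exact ih.mul hf

theorem NN.sum {ι : Type*} (s : Finset ι) (f : ι → PowerSeries ℤ) (h : ∀ i ∈ s, NN (f i)) :
    NN (∑ i ∈ s, f i) := by
  intro n; rw [map_sum]; exact Finset.sum_nonneg fun i hi => h i hi n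

theorem NN.congr {f g : PowerSeries ℤ} (hf : NN f) (h : g = f) : NN g := h ▸ hf

/-- The variable `Q = q ^ 2`. -/
noncomputable def Q : PowerSeries ℤ := X ^ 2

theorem NN.q : NN Q := NN.x.pow 2
theorem NN.qp (k : ℕ) : NN (Q ^ k) := NN.q.pow k

noncomputable def geo (d : ℕ) : PowerSeries ℤ := PowerSeries.mk fun n => if d ∣ n then 1 else 0

theorem geo_nn (d : ℕ) : NN (geo d) := by
  intro n; rw [geo, coeff_mk]; split_ifs <;> simp

theorem geo_mul (d : ℕ) (hd : 0 < d) : geo d * (1 - X ^ d) = 1 := by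
  ext n
  rw [mul_sub, mul_one, map_sub, coeff_mul_X_pow', geo, coeff_mk, coeff_one]
  by_cases h : d ≤ n
  · have hn : n ≠ 0 := by omega
    rw [if_pos h, coeff_mk, if_neg hn]
    have : d ∣ n - d ↔ d ∣ n := by
      rw [Nat.dvd_sub_iff_left h (dvd_refl d)]
    simp [this]
  · rw [if_neg h]
    by_cases hn : n = 0
    · simp [hn]
    · have : ¬ d ∣ n := fun hdvd => h (Nat.le_of_dvd (by omega) hdvd)
      simp [hn, this]

/-- `P k = ∏_{i=1}^k 1/(1-Q^i)`. -/
noncomputable def P : ℕ → PowerSeries ℤ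
  | 0 => 1
  | k + 1 => P k * geo (2 * (k + 1))

theorem P_zero : P 0 = 1 := rfl

theorem P_succ (k : ℕ) : P k = P (k + 1) * (1 - Q ^ (k + 1)) := by
  rw [P, Q, ← pow_mul, mul_assoc, geo_mul _ (by omega), mul_one]

theorem P_nn (k : ℕ) : NN (P k) := by
  induction k with
  | zero => exact NN.one
  | succ k ih => exact ih.mul (geo_nn _)

theorem P_factor (a r : ℕ) : ∃ R, NN R ∧ P (a + r) = P a * R := by
  induction r with
  | zero => exact ⟨1, NN.one, by simp⟩
  | succ r ih =>
    obtain ⟨R, hR, h⟩ := ih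
    refine ⟨R * geo (2 * (a + r + 1)), hR.mul (geo_nn _), ?_⟩
    rw [← add_assoc, P, h, mul_assoc]

theorem P1_mul : P 1 * (1 - Q) = 1 := by
  have := P_succ 0
  rw [P_zero] at this
  simpa using this.symm

theorem one_sub_q (a : ℕ) : ∃ R, NN R ∧ 1 - Q ^ a = (1 - Q) * R := by
  refine ⟨∑ i ∈ Finset.range a, Q ^ i, NN.sum _ _ fun i _ => NN.qp i, ?_⟩
  rw [mul_neg_geom_sum]

theorem P_sub1 (k a : ℕ) : NN (P (k + 1) * (1 - Q ^ a)) := by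
  obtain ⟨R, hR, h⟩ := P_factor 1 k
  obtain ⟨S, hS, h'⟩ := one_sub_q a
  refine (hR.mul hS).congr ?_
  rw [add_comm k 1, h, h']
  linear_combination (R * S) * P1_mul

theorem P2_mul : P 2 * (1 - Q) * (1 - Q ^ 2) = 1 := by
  have h1 := P_succ 1
  have := P1_mul
  rw [h1] at this
  linear_combination this

theorem P_sub2 (k a b : ℕ) (hb : Even b) :
    NN (P (k + 2) * (1 - Q ^ a) * (1 - Q ^ b)) := by
  obtain ⟨R, hR, h⟩ := P_factor 2 k
  obtain ⟨S, hS, h'⟩ := one_sub_q a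
  obtain ⟨c, rfl⟩ := hb
  have hc : 1 - Q ^ (c + c) = (1 - Q ^ 2) * ∑ i ∈ Finset.range c, (Q ^ 2) ^ i := by
    rw [mul_neg_geom_sum, ← pow_mul, two_mul]
  have hT : NN (∑ i ∈ Finset.range c, (Q ^ 2) ^ i) := NN.sum _ _ fun i _ => (NN.qp 2).pow i
  refine ((hR.mul hS).mul hT).congr ?_
  rw [add_comm k 2, h, h', hc]
  linear_combination (R * S * (∑ i ∈ Finset.range c, (Q ^ 2) ^ i)) * P2_mul

theorem P_sub2' (k a : ℕ) :
    NN (P (k + 2) * (1 - Q ^ a) * (1 - Q ^ (a + 1))) := by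
  rcases Nat.even_or_odd a with h | h
  · exact (P_sub2 k (a + 1) a h).congr (by ring)
  · exact P_sub2 k a (a + 1) h.add_one

theorem P_mono (a r : ℕ) : NN (P (a + r) - P a) := by
  induction r with
  | zero => simpa using NN.zero
  | succ r ih =>
    refine (ih.add ((NN.qp (a + r + 1)).mul (P_nn (a + r + 1)))).congr ?_
    rw [← add_assoc]
    linear_combination -(P_succ (a + r))

theorem P1_sub (a : ℕ) : NN (P 1 - Q ^ a - Q ^ (a + 2)) := by
  have h1 : NN (∑ i ∈ Finset.range a, Q ^ i) := NN.sum _ _ fun i _ => NN.qp i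
  refine ((h1.add (NN.qp (a + 1))).add ((NN.qp (a + 3)).mul (P_nn 1))).congr ?_
  have h2 := mul_neg_geom_sum Q a
  have h3 := P1_mul
  linear_combination (∑ i ∈ Finset.range a, Q ^ i + Q ^ a * (1 + Q + Q ^ 2)) * h3
    - P 1 * h2

/-- `k` odd parts, `m` even parts. -/
noncomputable def G (k m : ℕ) : PowerSeries ℤ := X ^ (3 * k + 2 * m) * (P k * P m)

theorem G_nn (k m : ℕ) : NN (G k m) := (NN.x.pow _).mul ((P_nn k).mul (P_nn m))

theorem even_case (k e : ℕ) : NN (G k (k + 2 * e) - G (k + 2 * e) k) := by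
  rcases e with _ | e
  · simpa using NN.zero
  have := P_sub1 (k + 2 * e + 1) (e + 1)
  refine ((NN.x.pow (5 * k + 4 * (e + 1))).mul ((P_nn k).mul this)).congr ?_
  rw [G, G, Q, show k + 2 * (e + 1) = k + 2 * e + 1 + 1 by ring]
  ring

theorem odd_case (k j : ℕ) :
    NN (G (k + 1) (k + 1 + (2 * j + 5)) - G (k + (2 * j + 5)) k) := by
  have h1 := P_sub1 (k + 2 * j + 4) j
  have h2 := P_mono k 1
  have h3 := P_mono (k + 2 * j + 5) 1
  refine ((NN.x.pow (5 * k + 15 + 4 * j)).mul ((((P_nn k).mul h1).add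
    (h2.mul (P_nn (k + 2 * j + 5 + 1)))).add ((P_nn k).mul h3))).congr ?_
  rw [G, G, Q, show k + 1 + (2 * j + 5) = k + 2 * j + 5 + 1 by ring,
    show k + (2 * j + 5) = k + 2 * j + 5 by ring, show k + 2 * j + 4 + 1 = k + 2 * j + 5 by ring]
  ring

/-- main inequality, difference one, `k = j + 3` -/
theorem core1 (j : ℕ) : NN ((1 - Q) * P (j + 4) * P (j + 2)
    + Q ^ 2 * (1 - Q ^ 2) * P (j + 6) * P (j + 2) + Q ^ 4 * P (j + 5) * P (j + 4)
    - Q ^ 2 * P (j + 4) * P (j + 3)) := by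
  have n1 : NN (Q ^ 2 * P (j + 2) * (Q ^ (j + 5) * (P (j + 5) * (1 - Q ^ 2))
      + Q ^ (j + 6) * (P (j + 6) * (1 - Q ^ 2)))) :=
    ((NN.qp 2).mul (P_nn _)).mul (((NN.qp _).mul (P_sub1 (j + 4) 2)).add
      ((NN.qp _).mul (P_sub1 (j + 5) 2)))
  have n2 : NN (Q ^ 4 * P (j + 4) * (Q ^ (j + 4) * (P (j + 4) - P (j + 3))
      + Q ^ (j + 5) * (P (j + 5) - P (j + 3)))) :=
    ((NN.qp 4).mul (P_nn _)).mul (((NN.qp _).mul (P_mono (j + 3) 1)).add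
      ((NN.qp _).mul (P_mono (j + 3) 2)))
  have n3 : NN (P (j + 2) * (1 - Q ^ (j + 5)) * (1 - Q ^ (j + 5 + 1))
      + (1 + Q) * Q ^ (j + 8) * P (j + 3) * (P 1 - Q ^ j - Q ^ (j + 2))
      + Q ^ (2 * j + 10) * P (j + 3) + Q ^ (2 * j + 11) * (P (j + 3) - P (j + 2))) :=
    (((P_sub2' j (j + 5)).add ((((NN.one.add NN.q).mul (NN.qp _)).mul (P_nn _)).mul
      (P1_sub j))).add ((NN.qp _).mul (P_nn _))).add ((NN.qp _).mul (P_mono (j + 2) 1))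
  have n4 : NN (P (j + 4) * (1 - Q ^ 1)) := P_sub1 (j + 3) 1
  refine ((n1.add n2).add (n4.mul n3)).congr ?_
  have h2 := P_succ (j + 2)
  have h3 := P_succ (j + 3)
  have h4 := P_succ (j + 4)
  have h5 := P_succ (j + 5)
  have h1 := P1_mul
  simp only [add_assoc, Nat.reduceAdd] at h2 h3 h4 h5 ⊢
  generalize P (j + 6) = p6 at *
  generalize P (j + 5) = p5 at *
  generalize P (j + 4) = p4 at *
  generalize P (j + 3) = p3 at *
  generalize P (j + 2) = p2 at *
  generalize P 1 = p1 at *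
  have e : -(p4 * (1 + Q) * Q ^ (j + 8) * p3) * (p1 * (1 - Q)) =
    -(p4 * (1 + Q) * Q ^ (j + 8) * p3) := by rw [h1, mul_one]
  clear h1 n1 n2 n3 n4
  subst h2; subst h3
  subst h4; subst h5
  linear_combination e

theorem P_geq (k : ℕ) : P (k + 1) = P k + Q ^ (k + 1) * P (k + 1) := by
  linear_combination -(P_succ k)

/-- `k = 1` with the help of `G 0 3` -/
theorem core1_one : NN (P 3 + Q ^ 3 * P 3 * P 2 - Q * P 2 * P 1) := by
  have n1 : NN (1 + P 3 * Q ^ 3 * (Q ^ 3 + Q ^ 3 * P 1 + Q ^ 2 * P 2)) :=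
    NN.one.add (((P_nn 3).mul (NN.qp 3)).mul (((NN.qp 3).add ((NN.qp 3).mul (P_nn 1))).add
      ((NN.qp 2).mul (P_nn 2))))
  refine n1.congr ?_
  have h1 := P1_mul
  have h2 := P_succ 1
  have h3 := P_succ 2
  simp only [Nat.reduceAdd] at h2 h3
  generalize P 3 = p3 at *
  generalize P 2 = p2 at *
  generalize P 1 = p1 at *
  have e0 : p3 * (1 - Q ^ 3) * (1 - Q ^ 2) * (1 - Q) = 1 := by rw [← h3, ← h2, h1]
  linear_combination -(Q ^ 3 * p3) * h2 - Q * p1 * h3 + p3 * (Q ^ 3 - Q) * (1 + Q + Q ^ 2) * h1 + e0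

theorem core3_one : NN (P 5 + Q ^ 3 * P 5 * P 2 - Q ^ 2 * P 4 * P 1) := by
  have n1 : NN (P 5 * (1 - Q ^ 2) + P 5 * Q ^ 3 * (Q ^ 4 * P 1 + Q ^ 2 * P 2)) :=
    (P_sub1 4 2).add (((P_nn 5).mul (NN.qp 3)).mul (((NN.qp 4).mul (P_nn 1)).add
      ((NN.qp 2).mul (P_nn 2))))
  refine n1.congr ?_
  have h1 := P1_mul
  have h2 := P_succ 1
  have h3 := P_succ 4
  simp only [Nat.reduceAdd] at h2 h3
  generalize P 5 = p5 at *
  generalize P 4 = p4 at *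
  generalize P 2 = p2 at *
  generalize P 1 = p1 at *
  linear_combination -(Q ^ 3 * p5) * h2 - Q ^ 2 * p1 * h3 - p5 * Q ^ 2 * h1

theorem core1_two : NN ((1 - Q) * P 3 * P 1 + Q ^ 2 * (1 - Q ^ 2) * P 5 * P 1
    + Q ^ 4 * P 4 * P 3 - Q ^ 2 * P 3 * P 2 - P 0 * P 0) := by
  have n1 : NN (Q ^ 2 * P 1 * (Q ^ 4 * (P 4 * (1 - Q ^ 2)) + Q ^ 5 * (P 5 * (1 - Q ^ 2)))) :=
    ((NN.qp 2).mul (P_nn _)).mul (((NN.qp _).mul (P_sub1 3 2)).add ((NN.qp _).mul (P_sub1 4 2)))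
  have n0 : NN (P 1 - Q ^ 3 * P 0) := by
    refine ((P1_sub 3).add (NN.qp 5)).congr ?_
    rw [P_zero]; ring
  have n2 : NN (Q ^ 2 * P 3 * (Q ^ 7 * (P 2 - P 0) + Q ^ 8 * (P 3 - P 0)
      + Q ^ 6 * ((P 4 - P 1) + (P 1 - Q ^ 3 * P 0)))) :=
    ((NN.qp 2).mul (P_nn _)).mul ((((NN.qp _).mul (P_mono 0 2)).add
      ((NN.qp _).mul (P_mono 0 3))).add ((NN.qp _).mul ((P_mono 1 3).add n0)))
  have n3 : NN (((Q ^ 2 + (Q + Q ^ 2 + Q ^ 3 + Q ^ 4) * (1 + Q ^ 2)) * (1 + Q ^ 3) + Q ^ 3)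
      * (P 0 * P 0)) :=
    ((((NN.qp 2).add ((((NN.q.add (NN.qp 2)).add (NN.qp 3)).add (NN.qp 4)).mul
      (NN.one.add (NN.qp 2)))).mul (NN.one.add (NN.qp 3))).add (NN.qp 3)).mul
      ((P_nn 0).mul (P_nn 0))
  refine (((n1.add n2).add n3).add ((NN.qp 15).mul ((P_nn 3).mul (P_nn 0)))).congr ?_
  clear n0 n1 n2 n3
  have h0 := P_succ 0
  have h1 := P_succ 1
  have h2 := P_succ 2
  have h3 := P_succ 3
  have h4 := P_succ 4
  simp only [Nat.reduceAdd] at *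
  rw [h0, h1, h2, h3, h4]
  ring

theorem core3 (j : ℕ) : NN (Q ^ 4 * (1 - Q ^ 3) * P (j + 7) * P (j + 1)
    + Q ^ 6 * P (j + 6) * P (j + 3) - Q ^ 5 * P (j + 5) * P (j + 2)) := by
  have n1 : NN (Q ^ 4 * P (j + 1) * (Q ^ (j + 6) * (P (j + 6) * (1 - Q ^ 3))
      + Q ^ (j + 7) * (P (j + 7) * (1 - Q ^ 3)))) :=
    ((NN.qp 4).mul (P_nn _)).mul (((NN.qp _).mul (P_sub1 (j + 5) 3)).add
      ((NN.qp _).mul (P_sub1 (j + 6) 3)))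
  have n2 : NN (Q ^ (j + 12) * (P (j + 6) * P (j + 3))) :=
    (NN.qp _).mul ((P_nn _).mul (P_nn _))
  have n3 : NN (P (j + 5) * Q ^ (j + 9) * (P (j + 3) - P (j + 2))) :=
    ((P_nn _).mul (NN.qp _)).mul (P_mono (j + 2) 1)
  have n4 : NN (P (j + 5) * (1 - Q ^ 1)) := P_sub1 (j + 4) 1
  have n5 : NN (Q ^ 4 * P (j + 1) + Q ^ 6 * (P (j + 1) * (1 - Q ^ (j + 1)))
      + Q ^ (j + 9) * P (j + 2) * (P 1 - Q ^ j - Q ^ (j + 2) + Q ^ (j + 2))) :=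
    (((NN.qp _).mul (P_nn _)).add ((NN.qp _).mul (P_sub1 j (j + 1)))).add
      (((NN.qp _).mul (P_nn _)).mul ((P1_sub j).add (NN.qp _)))
  refine (((n1.add n2).add n3).add (n4.mul n5)).congr ?_
  clear n1 n2 n3 n4 n5
  have h1 := P1_mul
  have h2 := P_succ (j + 1)
  have h3 := P_succ (j + 2)
  have h4 := P_succ (j + 3)
  have h5 := P_succ (j + 4)
  have h6 := P_succ (j + 5)
  have h7 := P_succ (j + 6)
  simp only [add_assoc, Nat.reduceAdd] at *
  generalize P (j + 7) = p7 at *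
  generalize P (j + 6) = p6 at *
  generalize P (j + 5) = p5 at *
  generalize P (j + 4) = p4 at *
  generalize P (j + 3) = p3 at *
  generalize P (j + 2) = p2 at *
  generalize P (j + 1) = p1 at *
  generalize P 1 = p at *
  have e : -(p5 * Q ^ (j + 9) * p2) * (p * (1 - Q)) = -(p5 * Q ^ (j + 9) * p2) := by
    rw [h1, mul_one]
  clear h1
  subst h2; subst h3; subst h4; subst h5; subst h6; subst h7
  linear_combination e

theorem zero1 : NN (Q ^ 2 * P 1 * P 2 - P 1 * P 0 + (1 + Q) * (P 0 * P 0) - Q ^ 3 * P 1 * P 0) := by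
  refine (((NN.qp 4).mul ((P_nn 1).mul (P_nn 1))).add
    ((NN.qp 4).mul ((P_nn 1).mul (P_nn 2)))).congr ?_
  have h0 := P_succ 0
  have h1 := P_succ 1
  simp only [Nat.reduceAdd] at *
  rw [h0, h1]
  ring

theorem zero3 : NN (Q * P 1 * P 4 - P 3 * P 0 + P 0 * P 0) := by
  have n1 : NN (P 3 * P 0 * (Q ^ 3 + 2 * Q ^ 4 + 2 * Q ^ 5)) := by
    rw [two_mul, two_mul]
    exact ((P_nn _).mul (P_nn _)).mul (((NN.qp _).add ((NN.qp _).add (NN.qp _))).add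
      ((NN.qp _).add (NN.qp _)))
  refine ((n1.add ((NN.qp 7).mul ((P_nn 3).mul (P_nn 1)))).add
    ((NN.qp 5).mul ((P_nn 1).mul (P_nn 4)))).congr ?_
  have h0 := P_succ 0
  have h1 := P_succ 1
  have h2 := P_succ 2
  have h3 := P_succ 3
  simp only [Nat.reduceAdd] at *
  rw [h0, h1, h2, h3]
  ring

/-- combination of the terms with differences `1`, `2` and `4` -/
noncomputable def F1 (j : ℕ) : PowerSeries ℤ :=
  (G j (j + 2) - G (j + 2) j) + (G j (j + 4) - G (j + 4) j) + (G (j + 2) (j + 3) - G (j + 2) (j + 1))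

/-- combination of the terms with differences `3` and `6` -/
noncomputable def F3 (j : ℕ) : PowerSeries ℤ :=
  (G j (j + 6) - G (j + 6) j) + (G (j + 2) (j + 5) - G (j + 4) (j + 1))

theorem F1_nn (j : ℕ) : NN (F1 (j + 2)) := by
  refine ((NN.x.pow (5 * j + 14)).mul (core1 j)).congr ?_
  simp only [F1, G, Q, add_assoc, Nat.reduceAdd]
  ring

theorem F3_nn (j : ℕ) : NN (F3 (j + 1)) := by
  refine ((NN.x.pow (5 * j + 9)).mul (core3 j)).congr ?_
  simp only [F3, G, Q, add_assoc, Nat.reduceAdd]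
  ring

theorem F1_one : NN (F1 1 - X ^ 9) := by
  refine ((NN.x.pow 9).mul core1_two).congr ?_
  simp only [F1, G, Q, Nat.reduceAdd, P_zero]
  ring

theorem F1_zero : NN (F1 0 + G 0 3) := by
  refine (((even_case 0 1).add (even_case 0 2)).add ((NN.x.pow 6).mul core1_one)).congr ?_
  simp only [F1, G, Q, Nat.reduceAdd, Nat.reduceMul, P_zero]
  ring

theorem F3_zero : NN (F3 0 + G 0 5) := by
  refine ((even_case 0 3).add ((NN.x.pow 10).mul core3_one)).congr ?_
  simp only [F3, G, Q, Nat.reduceAdd, Nat.reduceMul, P_zero]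
  ring

theorem Z1 : NN (G 1 2 - G 1 0 + X ^ 3 + X ^ 5 - X ^ 9 * P 1) := by
  refine ((NN.x.pow 3).mul zero1).congr ?_
  simp only [G, Q, P_zero]
  ring

theorem Z3 : NN (G 1 4 - G 3 0 + X ^ 9) := by
  refine ((NN.x.pow 9).mul zero3).congr ?_
  simp only [G, Q, P_zero]
  ring

/-- difference of the truncated generating functions, for a fixed difference `d` -/
noncomputable def D (K d : ℕ) : PowerSeries ℤ :=
  ∑ k ∈ Finset.range (K + 1), G k (k + d) - ∑ k ∈ Finset.range K, G (k + d) k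

theorem D_even (K e : ℕ) : NN (D K (2 * e)) := by
  refine ((NN.sum (Finset.range K) _ fun k _ => even_case k e).add (G_nn K (K + 2 * e))).congr ?_
  rw [D, Finset.sum_range_succ, Finset.sum_sub_distrib]
  ring

theorem D_odd (K j : ℕ) : NN (D K (2 * j + 5) - G 0 (2 * j + 5)) := by
  refine (NN.sum (Finset.range K) _ fun k _ => odd_case k j).congr ?_
  rw [D, Finset.sum_range_succ', Finset.sum_sub_distrib]
  simp only [zero_add]
  ring

theorem D_large (K d : ℕ) : NN (D K (d + 7)) := by
  rcases Nat.even_or_odd' d with ⟨c, rfl | rfl⟩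
  · refine ((D_odd K (c + 1)).add (G_nn 0 (2 * (c + 1) + 5))).congr ?_
    rw [show 2 * (c + 1) + 5 = 2 * c + 7 by ring]; ring
  · exact (D_even K (c + 4)).congr (by rw [show 2 * (c + 4) = 2 * c + 1 + 7 by ring])

theorem D_small (M : ℕ) :
    NN (D (M + 3) 1 + D (M + 3) 2 + D (M + 3) 3 + D (M + 3) 4 + D (M + 3) 5 + D (M + 3) 6
      - (X ^ 2 * P 1 + X ^ 9 * P 1 - X ^ 3 - X ^ 5)) := by
  have s1 : NN (∑ j ∈ Finset.range M, F1 (j + 2)) := NN.sum _ _ fun j _ => F1_nn j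
  have s3 : NN (∑ j ∈ Finset.range (M + 1), F3 (j + 1)) := NN.sum _ _ fun j _ => F3_nn j
  have t (e : ℕ) : NN ((G (M + 2) (M + 2 + 2 * e) - G (M + 2 + 2 * e) (M + 2))
      + G (M + 3) (M + 3 + 2 * e)) := (even_case _ _).add (G_nn _ _)
  refine ((((((((((s1.add s3).add F1_one).add F1_zero).add F3_zero).add Z1).add Z3).add
    (t 1)).add (t 2)).add (t 3)).add (D_odd (M + 3) 0)).congr ?_
  have e1 : ∑ j ∈ Finset.range M, F1 (j + 2) = ∑ j ∈ Finset.range (M + 2), F1 j - F1 0 - F1 1 := by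
    rw [Finset.sum_range_succ', Finset.sum_range_succ']; ring
  have e3 : ∑ j ∈ Finset.range (M + 1), F3 (j + 1) = ∑ j ∈ Finset.range (M + 2), F3 j - F3 0 := by
    rw [Finset.sum_range_succ' F3 (M + 1)]; ring
  have d1 : D (M + 3) 1 = G 0 1 + (G 1 2 - G 1 0)
      + ∑ j ∈ Finset.range (M + 2), (G (j + 2) (j + 3) - G (j + 2) (j + 1)) := by
    rw [D, Finset.sum_range_succ', Finset.sum_range_succ',
      Finset.sum_range_succ' (fun k => G (k + 1) k), Finset.sum_sub_distrib]
    simp only [add_assoc, Nat.reduceAdd, zero_add]; ring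
  have d3 : D (M + 3) 3 = G 0 3 + (G 1 4 - G 3 0)
      + ∑ j ∈ Finset.range (M + 2), (G (j + 2) (j + 5) - G (j + 4) (j + 1)) := by
    rw [D, Finset.sum_range_succ', Finset.sum_range_succ',
      Finset.sum_range_succ' (fun k => G (k + 3) k), Finset.sum_sub_distrib]
    simp only [add_assoc, Nat.reduceAdd, zero_add]; ring
  have de (d : ℕ) : D (M + 3) d = ∑ j ∈ Finset.range (M + 2), (G j (j + d) - G (j + d) j)
      + (G (M + 2) (M + 2 + d) - G (M + 2 + d) (M + 2)) + G (M + 3) (M + 3 + d) := by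
    rw [D, Finset.sum_range_succ, Finset.sum_range_succ,
      Finset.sum_range_succ (fun k => G (k + d) k), Finset.sum_sub_distrib]
    ring
  rw [e1, e3, d1, d3, de 2, de 4, de 6]
  simp only [F1, F3, Finset.sum_add_distrib, mul_zero, zero_add, Nat.reduceMul]
  have g1 : G 0 1 = X ^ 2 * P 1 := by simp [G, P_zero]
  rw [g1]
  ring

theorem coeff_low (n : ℕ) (hn : 7 < n) :
    1 ≤ coeff n (X ^ 2 * P 1 + X ^ 9 * P 1 - X ^ 3 - X ^ 5 : PowerSeries ℤ) := by
  have hP : P 1 = geo 2 := by simp [P]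
  rw [hP]
  simp only [map_sub, map_add, coeff_X_pow_mul', coeff_X_pow, geo, coeff_mk]
  rw [if_neg (show n ≠ 3 by omega), if_neg (show n ≠ 5 by omega), if_pos (show 2 ≤ n by omega)]
  split_ifs <;> omega

theorem D_total (n M R : ℕ) (hn : 7 < n) :
    0 < coeff n (∑ d ∈ Finset.range (R + 6), D (M + 3) (d + 1)) := by
  have h1 := D_small M n
  have h2 := NN.sum (Finset.range R) (fun d => D (M + 3) (d + 7)) (fun d _ => D_large _ d) n
  have h3 := coeff_low n hn
  have e : ∑ d ∈ Finset.range (R + 6), D (M + 3) (d + 1) = ∑ d ∈ Finset.range R, D (M + 3) (d + 7)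
      + (D (M + 3) 1 + D (M + 3) 2 + D (M + 3) 3 + D (M + 3) 4 + D (M + 3) 5 + D (M + 3) 6) := by
    iterate 6 rw [Finset.sum_range_succ']
    simp only [add_assoc, Nat.reduceAdd, zero_add]
    ring
  rw [e, map_add]
  rw [map_sub] at h1
  linarith

end QBias

namespace QBias
open PowerSeries

/-- the multisets of positive integers with sum `n` -/
noncomputable def S (n : ℕ) : Finset (Multiset ℕ) :=
  (Finset.univ : Finset n.Partition).image Nat.Partition.parts

theorem mem_S {n : ℕ} {A : Multiset ℕ} : A ∈ S n ↔ (∀ p ∈ A, 0 < p) ∧ A.sum = n := by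
  simp only [S, Finset.mem_image, Finset.mem_univ, true_and]
  constructor
  · rintro ⟨l, rfl⟩
    exact ⟨fun p hp => l.parts_pos hp, l.parts_sum⟩
  · rintro ⟨h1, h2⟩
    exact ⟨⟨A, fun {i} hi => h1 i hi, h2⟩, rfl⟩

/-- multisets with `k` elements, all `≥ r` and of the parity of `r`, with sum `n` -/
noncomputable def T (r k n : ℕ) : Finset (Multiset ℕ) :=
  (S n).filter fun A => A.card = k ∧ ∀ p ∈ A, p % 2 = r % 2 ∧ r ≤ p

theorem mem_T {r k n : ℕ} (hr : 0 < r) {A : Multiset ℕ} :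
    A ∈ T r k n ↔ A.sum = n ∧ A.card = k ∧ ∀ p ∈ A, p % 2 = r % 2 ∧ r ≤ p := by
  rw [T, Finset.mem_filter, mem_S]
  constructor
  · rintro ⟨⟨_, h⟩, h'⟩; exact ⟨h, h'⟩
  · rintro ⟨h, h'⟩
    exact ⟨⟨fun p hp => lt_of_lt_of_le hr (h'.2 p hp).2, h⟩, h'⟩

theorem T_with (r k n : ℕ) (hr : 0 < r) :
    ((T r (k + 1) n).filter fun A => r ∈ A).card = if r ≤ n then (T r k (n - r)).card else 0 := by
  split_ifs with h
  · refine Finset.card_nbij' (fun A => A.erase r) (fun A => r ::ₘ A) ?_ ?_ ?_ ?_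
    · intro A hA
      simp only [Finset.coe_filter, Set.mem_ofPred_eq, Finset.mem_coe, mem_T hr] at hA ⊢
      obtain ⟨⟨h1, h2, h3⟩, h4⟩ := hA
      have h5 := Multiset.sum_erase h4
      refine ⟨by omega, by rw [Multiset.card_erase_of_mem h4, h2]; rfl, fun p hp => ?_⟩
      exact h3 p (Multiset.mem_of_mem_erase hp)
    · intro A hA
      simp only [Finset.coe_filter, Set.mem_ofPred_eq, Finset.mem_coe, mem_T hr] at hA ⊢
      obtain ⟨h1, h2, h3⟩ := hA
      refine ⟨⟨by rw [Multiset.sum_cons]; omega, by simp [h2], fun p hp => ?_⟩, by simp⟩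
      rcases Multiset.mem_cons.1 hp with rfl | hp
      · simp
      · exact h3 p hp
    · intro A hA
      simp only [Finset.coe_filter, Set.mem_ofPred_eq] at hA
      exact Multiset.cons_erase hA.2
    · intro A hA
      simp
  · rw [Finset.card_eq_zero, Finset.filter_eq_empty_iff]
    intro A hA hrA
    rw [mem_T hr] at hA
    have := Multiset.le_sum_of_mem hrA
    omega

theorem sum_map_add_two (A : Multiset ℕ) : (A.map (· + 2)).sum = A.sum + 2 * A.card := by
  induction A using Multiset.induction with
  | empty => simp
  | cons a A ih => simp only [Multiset.map_cons, Multiset.sum_cons, ih, Multiset.card_cons]; ring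

theorem map_sub_two (A : Multiset ℕ) (h : ∀ p ∈ A, 2 ≤ p) :
    (A.map (· - 2)).map (· + 2) = A := by
  rw [Multiset.map_map]
  conv_rhs => rw [← Multiset.map_id A]
  refine Multiset.map_congr rfl fun p hp => ?_
  have := h p hp
  simp only [Function.comp, id]; omega

theorem T_without (r k n : ℕ) (hr : 0 < r) :
    ((T r k n).filter fun A => ¬ r ∈ A).card = if 2 * k ≤ n then (T r k (n - 2 * k)).card else 0 := by
  have key : ∀ A ∈ (T r k n).filter (fun A => ¬ r ∈ A), ∀ p ∈ A, p % 2 = r % 2 ∧ r + 2 ≤ p := by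
    intro A hA p hp
    rw [Finset.mem_filter, mem_T hr] at hA
    have := hA.1.2.2 p hp
    have : p ≠ r := fun h => hA.2 (h ▸ hp)
    omega
  have key2 : ∀ A ∈ (T r k n).filter (fun A => ¬ r ∈ A), (A.map (· - 2)).map (· + 2) = A :=
    fun A hA => map_sub_two A fun p hp => by have := key A hA p hp; omega
  have key3 : ∀ A ∈ (T r k n).filter (fun A => ¬ r ∈ A), (A.map (· - 2)).sum + 2 * k = n := by
    intro A hA
    have h1 := sum_map_add_two (A.map (· - 2))
    rw [key2 A hA] at h1
    rw [Finset.mem_filter, mem_T hr] at hA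
    rw [Multiset.card_map, hA.1.2.1, hA.1.1] at h1
    exact h1.symm
  split_ifs with h
  · refine Finset.card_nbij' (fun A => A.map (· - 2)) (fun A => A.map (· + 2)) ?_ ?_ ?_ ?_
    · intro A hA
      have k1 := key A hA
      have k3 := key3 A hA
      simp only [Finset.coe_filter, Set.mem_ofPred_eq, Finset.mem_coe, mem_T hr] at hA ⊢
      refine ⟨by omega, by rw [Multiset.card_map]; exact hA.1.2.1, fun p hp => ?_⟩
      obtain ⟨x, hx, rfl⟩ := Multiset.mem_map.1 hp
      have := k1 x hx
      omega
    · intro A hA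
      simp only [Finset.coe_filter, Set.mem_ofPred_eq, Finset.mem_coe, mem_T hr] at hA ⊢
      obtain ⟨h1, h2, h3⟩ := hA
      refine ⟨⟨by rw [sum_map_add_two]; omega, by rw [Multiset.card_map]; exact h2,
        fun p hp => ?_⟩, fun hp => ?_⟩
      · obtain ⟨x, hx, rfl⟩ := Multiset.mem_map.1 hp
        have := h3 x hx
        omega
      · obtain ⟨x, hx, hx'⟩ := Multiset.mem_map.1 hp
        have := h3 x hx
        omega
    · intro A hA
      exact key2 A hA
    · intro A hA
      simp [Multiset.map_map]
  · rw [Finset.card_eq_zero]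
    by_contra hne
    obtain ⟨A, hA⟩ := Finset.nonempty_iff_ne_empty.2 hne
    have := key3 A hA
    omega

/-- generating function of `T` -/
noncomputable def U (r k : ℕ) : PowerSeries ℤ := PowerSeries.mk fun n => ((T r k n).card : ℤ)

theorem U_succ (r k : ℕ) (hr : 0 < r) :
    U r (k + 1) = X ^ r * U r k + X ^ (2 * (k + 1)) * U r (k + 1) := by
  ext n
  simp only [map_add, coeff_X_pow_mul', U, coeff_mk]
  rw [← Finset.card_filter_add_card_filter_not (s := T r (k + 1) n) (fun A => r ∈ A),
    T_with r k n hr, T_without r (k + 1) n hr]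
  push_cast
  rfl

theorem U_zero (r : ℕ) (hr : 0 < r) : U r 0 = 1 := by
  ext n
  rw [U, coeff_mk, coeff_one]
  have : T r 0 n = if n = 0 then {0} else ∅ := by
    ext A
    rw [mem_T hr, Multiset.card_eq_zero]
    constructor
    · rintro ⟨h, rfl, _⟩
      simp at h
      simp [h.symm]
    · intro h
      split_ifs at h with h0
      · rw [Finset.mem_singleton] at h
        subst h; simp [h0]
      · simp at h
  rw [this]
  split_ifs <;> simp

theorem U_eq (r k : ℕ) (hr : 0 < r) : U r k = X ^ (r * k) * P k := by
  induction k with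
  | zero => simp [U_zero r hr, P_zero]
  | succ k ih =>
    have h1 := U_succ r k hr
    have h2 := P_succ k
    have h3 := geo_mul (2 * (k + 1)) (by omega)
    rw [Q, ← pow_mul] at h2
    have h4 : U r (k + 1) * (1 - X ^ (2 * (k + 1))) = X ^ (r * (k + 1)) * P (k + 1) * (1 - X ^ (2 * (k + 1))) := by
      rw [mul_assoc, ← h2]
      rw [ih] at h1
      linear_combination h1
    linear_combination geo (2 * (k + 1)) * h4 - (U r (k + 1) - X ^ (r * (k + 1)) * P (k + 1)) * h3

/-- multisets with parts at least two and `k` odd, `m` even parts -/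
noncomputable def C (k m n : ℕ) : Finset (Multiset ℕ) :=
  (S n).filter fun A => (∀ p ∈ A, 2 ≤ p) ∧ (A.filter (fun p => p % 2 = 1)).card = k ∧
    (A.filter (fun p => p % 2 = 0)).card = m

theorem filter_split (A : Multiset ℕ) :
    A.filter (fun p => p % 2 = 1) + A.filter (fun p => p % 2 = 0) = A := by
  conv_rhs => rw [← Multiset.filter_add_not (fun p => p % 2 = 1) A]
  congr 1
  exact Multiset.filter_congr fun p _ => by omega

theorem C_card (k m n : ℕ) : ((C k m n).card : ℤ) = coeff n (G k m) := by
  have hG : G k m = U 3 k * U 2 m := by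
    rw [U_eq _ _ (by norm_num), U_eq _ _ (by norm_num), G]; ring
  rw [hG, coeff_mul]
  simp only [U, coeff_mk]
  have hf : ∀ A ∈ C k m n, ((A.filter (fun p => p % 2 = 1)).sum, (A.filter (fun p => p % 2 = 0)).sum)
      ∈ Finset.HasAntidiagonal.antidiagonal n := by
    intro A hA
    rw [C, Finset.mem_filter, mem_S] at hA
    rw [Finset.HasAntidiagonal.mem_antidiagonal, ← Multiset.sum_add, filter_split]
    exact hA.1.2
  rw [Finset.card_eq_sum_card_fiberwise (t := Finset.HasAntidiagonal.antidiagonal n) (fun A hA => hf A hA)]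
  push_cast
  refine Finset.sum_congr rfl fun ab hab => ?_
  rw [← Nat.cast_mul, ← Finset.card_product]
  congr 1
  rw [Finset.HasAntidiagonal.mem_antidiagonal] at hab
  refine Finset.card_nbij' (fun A => (A.filter (fun p => p % 2 = 1), A.filter (fun p => p % 2 = 0)))
    (fun BC => BC.1 + BC.2) ?_ ?_ ?_ ?_
  · intro A hA
    simp only [Finset.mem_coe, Finset.mem_filter, C, Finset.mem_product, Prod.ext_iff,
      mem_T (show 0 < 3 by norm_num), mem_T (show 0 < 2 by norm_num)] at hA ⊢
    obtain ⟨⟨h1, h2, h3, h4⟩, h5, h6⟩ := hA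
    refine ⟨⟨h5, h3, fun p hp => ?_⟩, h6, h4, fun p hp => ?_⟩
    · rw [Multiset.mem_filter] at hp
      have := h2 p hp.1
      omega
    · rw [Multiset.mem_filter] at hp
      have := h2 p hp.1
      omega
  · rintro ⟨A, B⟩ hA
    simp only [Finset.mem_coe, Finset.mem_filter, C, Finset.mem_product, Prod.ext_iff, mem_S,
      mem_T (show 0 < 3 by norm_num), mem_T (show 0 < 2 by norm_num)] at hA ⊢
    obtain ⟨⟨a1, a2, a3⟩, b1, b2, b3⟩ := hA
    have f1 : (A + B).filter (fun p => p % 2 = 1) = A := by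
      rw [Multiset.filter_add, Multiset.filter_eq_self.2, Multiset.filter_eq_nil.2, add_zero]
      · intro p hp; have := b3 p hp; omega
      · intro p hp; have := a3 p hp; omega
    have f2 : (A + B).filter (fun p => p % 2 = 0) = B := by
      rw [Multiset.filter_add, Multiset.filter_eq_nil.2, Multiset.filter_eq_self.2, zero_add]
      · intro p hp; have := b3 p hp; omega
      · intro p hp; have := a3 p hp; omega
    rw [f1, f2]
    have g : ∀ p ∈ A + B, 2 ≤ p := by
      intro p hp
      rcases Multiset.mem_add.1 hp with hp | hp
      · have := a3 p hp; omega
      · have := b3 p hp; omega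
    refine ⟨⟨⟨fun p hp => by have := g p hp; omega, by rw [Multiset.sum_add]; omega⟩, g, a2, b2⟩, a1, b1⟩
  · intro A _
    exact filter_split A
  · rintro ⟨A, B⟩ hA
    simp only [Finset.mem_coe, Finset.mem_product, 
      mem_T (show 0 < 3 by norm_num), mem_T (show 0 < 2 by norm_num)] at hA ⊢
    obtain ⟨⟨a1, a2, a3⟩, b1, b2, b3⟩ := hA
    refine Prod.ext ?_ ?_
    · change (A + B).filter (fun p => p % 2 = 1) = A
      rw [Multiset.filter_add, Multiset.filter_eq_self.2, Multiset.filter_eq_nil.2, add_zero]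
      · intro p hp; have := b3 p hp; omega
      · intro p hp; have := a3 p hp; omega
    · change (A + B).filter (fun p => p % 2 = 0) = B
      rw [Multiset.filter_add, Multiset.filter_eq_nil.2, Multiset.filter_eq_self.2, zero_add]
      · intro p hp; have := b3 p hp; omega
      · intro p hp; have := a3 p hp; omega

theorem card_le_of_mem_S {n : ℕ} (l : n.Partition) : l.oddCount + l.evenCount ≤ n := by
  have h : l.oddCount + l.evenCount = l.parts.card := by
    rw [Nat.Partition.oddCount, Nat.Partition.evenCount, ← Multiset.card_add, filter_split]
  rw [h]
  have := Multiset.card_nsmul_le_sum (s := l.parts) (a := 1) (fun p hp => l.parts_pos hp)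
  rw [l.parts_sum] at this
  simpa using this

theorem fiber_card (n k m : ℕ) :
    ((Finset.univ : Finset n.Partition).filter fun l => (∀ p ∈ l.parts, 2 ≤ p) ∧
      l.oddCount = k ∧ l.evenCount = m).card = (C k m n).card := by
  refine Finset.card_bij (fun l _ => l.parts) ?_ ?_ ?_
  · intro l hl
    rw [Finset.mem_filter] at hl
    rw [C, Finset.mem_filter, mem_S]
    exact ⟨⟨fun p hp => l.parts_pos hp, l.parts_sum⟩, hl.2⟩
  · intro l _ l' _ h
    exact Nat.Partition.ext h
  · intro A hA
    rw [C, Finset.mem_filter, mem_S] at hA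
    exact ⟨⟨A, fun {i} hi => hA.1.1 i hi, hA.1.2⟩, by rw [Finset.mem_filter]; exact ⟨Finset.mem_univ _, hA.2⟩, rfl⟩

theorem count_gen (n K R : ℕ) (hK : n < K) (hR : n < R) (a b : n.Partition → ℕ)
    (g : ℕ → ℕ → PowerSeries ℤ) (hab : ∀ l, a l + b l ≤ n)
    (hg : ∀ k m, (((Finset.univ : Finset n.Partition).filter fun l => (∀ p ∈ l.parts, 2 ≤ p) ∧
      a l = k ∧ b l = m).card : ℤ) = coeff n (g k m)) :
    (Nat.card {l : n.Partition // (∀ p ∈ l.parts, 2 ≤ p) ∧ a l < b l} : ℤ) =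
      coeff n (∑ d ∈ Finset.range R, ∑ k ∈ Finset.range K, g k (k + (d + 1))) := by
  classical
  rw [Nat.card_eq_fintype_card, Fintype.card_subtype]
  rw [Finset.card_eq_sum_card_fiberwise (f := fun l => (b l - a l - 1, a l))
    (t := Finset.range R ×ˢ Finset.range K)]
  · rw [Finset.sum_product]
    push_cast
    rw [map_sum]
    refine Finset.sum_congr rfl fun d _ => ?_
    rw [map_sum]
    refine Finset.sum_congr rfl fun k _ => ?_
    rw [← hg]
    congr 2
    ext l
    simp only [Finset.mem_filter, Finset.mem_univ, true_and, Prod.mk.injEq]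
    constructor
    · rintro ⟨⟨h1, h2⟩, h3, h4⟩
      exact ⟨h1, h4, by omega⟩
    · rintro ⟨h1, h2, h3⟩
      exact ⟨⟨h1, by omega⟩, by omega, h2⟩
  · intro l hl
    have := hab l
    simp only [Finset.coe_filter, Finset.mem_univ, true_and, Set.mem_ofPred_eq] at hl
    simp only [Finset.coe_product, Set.mem_prod, Finset.mem_coe, Finset.mem_range]
    omega

end QBias

/-- For every integer `n > 7`, the number of partitions of `n` with all parts at least `2`
and more odd parts than even parts is strictly less than the number of partitions of `n`
with all parts at least `2` and more even parts than odd parts. -/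
theorem qo_lt_qe (n : ℕ) (hn : 7 < n) :
    Nat.card {l : n.Partition // (∀ p ∈ l.parts, 2 ≤ p) ∧ l.evenCount < l.oddCount} <
      Nat.card {l : n.Partition // (∀ p ∈ l.parts, 2 ≤ p) ∧ l.oddCount < l.evenCount} := by
  have h1 := QBias.count_gen n (n + 3 + 1) (n + 6) (by omega) (by omega)
    Nat.Partition.oddCount Nat.Partition.evenCount QBias.G (fun l => QBias.card_le_of_mem_S l)
    (fun k m => by rw [QBias.fiber_card, QBias.C_card])
  have h2 := QBias.count_gen n (n + 3) (n + 6) (by omega) (by omega)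
    Nat.Partition.evenCount Nat.Partition.oddCount (fun k m => QBias.G m k)
    (fun l => by have := QBias.card_le_of_mem_S l; omega)
    (fun k m => by
      rw [← QBias.C_card, ← QBias.fiber_card]
      congr 2
      ext l
      simp only [Finset.mem_filter]
      tauto)
  have h3 := QBias.D_total n n n hn
  simp only [QBias.D, Finset.sum_sub_distrib, map_sub] at h3
  rw [← h1, ← h2] at h3
  omega
end

section
/- For every integer n ≥ 1, the number of partitions of n with no part equal to 2 and more odd parts than even parts is strictly greater than the number of partitions of n with no part equal to 2 and more even parts than odd parts; that is, p_o^{{2}}(n) > p_e^{{2}}(n). -/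
/-- Swap parity: even parts go down by one, odd parts go up by one. -/
def parFlip (p : ℕ) : ℕ := if p % 2 = 0 then p - 1 else p + 1

/-- The parts different from one. -/
def bigParts (t : Multiset ℕ) : Multiset ℕ := t.filter (fun p => p ≠ 1)

theorem parFlip_stats (s : Multiset ℕ) (hs : ∀ p ∈ s, 3 ≤ p) :
    (s.map parFlip).sum + (s.filter (fun p => p % 2 = 0)).card
      = s.sum + (s.filter (fun p => p % 2 = 1)).card ∧
    ((s.map parFlip).filter (fun p => p % 2 = 1)).card
      = (s.filter (fun p => p % 2 = 0)).card ∧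
    ((s.map parFlip).filter (fun p => p % 2 = 0)).card
      = (s.filter (fun p => p % 2 = 1)).card ∧
    (s.map parFlip).map parFlip = s ∧
    (∀ p ∈ s.map parFlip, 3 ≤ p) := by
  induction s using Multiset.induction_on with
  | empty => simp
  | cons a s ih =>
    obtain ⟨h1, h2, h3, h4, h5⟩ := ih (fun p hp => hs p (Multiset.mem_cons_of_mem hp))
    have ha : 3 ≤ a := hs a (Multiset.mem_cons_self a s)
    have hff : parFlip (parFlip a) = a := by unfold parFlip; split_ifs <;> omega
    have hf3 : 3 ≤ parFlip a := by unfold parFlip; split_ifs <;> omega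
    refine ⟨?_, ?_, ?_, ?_, ?_⟩
    · rcases Nat.mod_two_eq_zero_or_one a with h | h <;>
        simp [h, parFlip] at h1 ⊢ <;> omega
    · rcases Nat.mod_two_eq_zero_or_one a with h | h
      · have : parFlip a % 2 = 1 := by unfold parFlip; split_ifs; omega
        simp [h, this, h2]
      · have : parFlip a % 2 = 0 := by unfold parFlip; split_ifs <;> omega
        simp [h, this, h2]
    · rcases Nat.mod_two_eq_zero_or_one a with h | h
      · have : parFlip a % 2 = 1 := by unfold parFlip; split_ifs; omega
        simp [h, this, h3]
      · have : parFlip a % 2 = 0 := by unfold parFlip; split_ifs <;> omega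
        simp [h, this, h3]
    · rw [Multiset.map_cons, Multiset.map_cons, h4, hff]
    · intro p hp
      rw [Multiset.map_cons, Multiset.mem_cons] at hp
      rcases hp with rfl | hp
      · exact hf3
      · exact h5 p hp

theorem parts_decomp (t : Multiset ℕ) :
    t = bigParts t + Multiset.replicate (t.count 1) 1 := by
  have h := Multiset.filter_add_not (fun p => p ≠ 1) t
  simp only [not_not, Multiset.filter_eq'] at h
  exact h.symm

theorem ge_three {n : ℕ} (l : n.Partition) (h2 : 2 ∉ l.parts) :
    ∀ p ∈ bigParts l.parts, 3 ≤ p := by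
  intro p hp
  obtain ⟨hp, h1⟩ := Multiset.mem_filter.1 hp
  have := l.parts_pos hp
  have : p ≠ 2 := fun h => h2 (h ▸ hp)
  omega

theorem add_ones_stats (s : Multiset ℕ) (u : ℕ) :
    (s + Multiset.replicate u 1).sum = s.sum + u ∧
    ((s + Multiset.replicate u 1).filter (fun p => p % 2 = 1)).card
      = (s.filter (fun p => p % 2 = 1)).card + u ∧
    ((s + Multiset.replicate u 1).filter (fun p => p % 2 = 0)).card
      = (s.filter (fun p => p % 2 = 0)).card := by
  refine ⟨by simp, ?_, ?_⟩
  · rw [Multiset.filter_add, Multiset.card_add,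
      (Multiset.filter_eq_self (s := Multiset.replicate u 1)).2, Multiset.card_replicate]
    intro a ha
    rw [Multiset.eq_of_mem_replicate ha]
  · rw [Multiset.filter_add, Multiset.card_add,
      (Multiset.filter_eq_nil (s := Multiset.replicate u 1)).2, Multiset.card_zero, add_zero]
    intro a ha
    rw [Multiset.eq_of_mem_replicate ha]
    decide

theorem bigParts_add_ones (s : Multiset ℕ) (hs : ∀ p ∈ s, 3 ≤ p) (u : ℕ) :
    bigParts (s + Multiset.replicate u 1) = s := by
  unfold bigParts
  rw [Multiset.filter_add, (Multiset.filter_eq_self (s := s)).2,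
    (Multiset.filter_eq_nil (s := Multiset.replicate u 1)).2, add_zero]
  · intro a ha
    simp [Multiset.eq_of_mem_replicate ha]
  · intro a ha
    have := hs a ha
    omega

theorem partition_ext_big {n : ℕ} (l l' : n.Partition)
    (h : bigParts l.parts = bigParts l'.parts) : l = l' := by
  have e := parts_decomp l.parts
  have e' := parts_decomp l'.parts
  have s := (add_ones_stats (bigParts l.parts) (l.parts.count 1)).1
  have s' := (add_ones_stats (bigParts l'.parts) (l'.parts.count 1)).1
  rw [← e, l.parts_sum] at s
  rw [← e', l'.parts_sum, ← h] at s'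
  have hc : l.parts.count 1 = l'.parts.count 1 := by omega
  apply Nat.Partition.ext
  rw [e, e', h, hc]

theorem exists_image {n : ℕ} (l : n.Partition) (h2 : 2 ∉ l.parts)
    (hl : l.oddCount < l.evenCount) :
    ∃ m : n.Partition, (2 ∉ m.parts ∧ m.evenCount < m.oddCount) ∧
      bigParts m.parts = (bigParts l.parts).map parFlip ∧ bigParts m.parts ≠ 0 := by
  have hs := ge_three l h2
  have e := parts_decomp l.parts
  unfold Nat.Partition.oddCount Nat.Partition.evenCount at hl
  have hsum := l.parts_sum
  rw [e] at hl hsum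
  generalize bigParts l.parts = s at *
  generalize l.parts.count 1 = u at *
  obtain ⟨a1, a2, a3⟩ := add_ones_stats s u
  obtain ⟨f1, f2, f3, f4, f5⟩ := parFlip_stats s hs
  obtain ⟨b1, b2, b3⟩ := add_ones_stats (s.map parFlip) (n - (s.map parFlip).sum)
  rw [a1] at hsum
  rw [a2, a3] at hl
  refine ⟨⟨s.map parFlip + Multiset.replicate (n - (s.map parFlip).sum) 1, ?_, ?_⟩,
    ⟨?_, ?_⟩, ?_, ?_⟩
  · intro i hi
    rcases Multiset.mem_add.1 hi with hi | hi
    · have := f5 i hi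
      omega
    · rw [Multiset.eq_of_mem_replicate hi]
      exact one_pos
  · rw [b1]
    omega
  · intro hi
    rcases Multiset.mem_add.1 hi with hi | hi
    · have := f5 2 hi
      omega
    · have := Multiset.eq_of_mem_replicate hi
      omega
  · unfold Nat.Partition.oddCount Nat.Partition.evenCount
    simp only [b2, b3]
    omega
  · exact bigParts_add_ones _ f5 _
  · simp only [bigParts_add_ones _ f5 _]
    intro h0
    rw [Multiset.map_eq_zero] at h0
    subst h0
    simp at hl

/-- For every integer `n ≥ 1`, among partitions of `n` with no part equal to `2`, those with
more odd parts than even parts outnumber those with more even parts than odd parts. -/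
theorem po_gt_pe_no_two (n : ℕ) (hn : 1 ≤ n) :
    Nat.card {l : n.Partition // 2 ∉ l.parts ∧ l.evenCount < l.oddCount} >
      Nat.card {l : n.Partition // 2 ∉ l.parts ∧ l.oddCount < l.evenCount} := by
  classical
  choose F hF1 hF2 hF3 using fun l : {l : n.Partition // 2 ∉ l.parts ∧ l.oddCount < l.evenCount} =>
    exists_image l.1 l.2.1 l.2.2
  rw [gt_iff_lt, Nat.card_eq_fintype_card, Nat.card_eq_fintype_card]
  refine Fintype.card_lt_of_injective_not_surjective
    (fun l => ⟨F l, hF1 l⟩) ?_ ?_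
  · intro l l' h
    have h : F l = F l' := congrArg Subtype.val h
    apply Subtype.ext
    apply partition_ext_big
    have h4 := (parFlip_stats _ (ge_three l.1 l.2.1)).2.2.2.1
    have h4' := (parFlip_stats _ (ge_three l'.1 l'.2.1)).2.2.2.1
    rw [← h4, ← h4', ← hF2, ← hF2, h]
  · intro hsurj
    obtain ⟨b1, b2, b3⟩ := add_ones_stats 0 n
    have hb := bigParts_add_ones 0 (by simp) n
    rw [zero_add] at b1 b2 b3 hb
    let m : n.Partition := ⟨Multiset.replicate n 1, by
      intro i hi
      rw [Multiset.eq_of_mem_replicate hi]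
      exact one_pos, by simp⟩
    have hm : 2 ∉ m.parts ∧ m.evenCount < m.oddCount := by
      constructor
      · intro hi
        have := Multiset.eq_of_mem_replicate hi
        omega
      · unfold Nat.Partition.oddCount Nat.Partition.evenCount
        simp only [m, b2, b3]
        simp
        omega
    obtain ⟨l, hl⟩ := hsurj ⟨m, hm⟩
    have hl : F l = m := congrArg Subtype.val hl
    apply hF3 l
    rw [hl]
    exact hb
end

section
/- For every integer n > 8, the number of partitions of n with no part equal to 1 or 2 and more odd parts than even parts is strictly greater than the number of partitions of n with no part equal to 1 or 2 and more even parts than odd parts; that is, p_o^S(n) > p_e^S(n) for S = {1,2}. -/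
open PowerSeries

namespace OddEven

/-- Power series with nonnegative coefficients. -/
def NN (f : ℤ⟦X⟧) : Prop := ∀ n, 0 ≤ coeff n f

theorem NN.add {f g : ℤ⟦X⟧} (hf : NN f) (hg : NN g) : NN (f + g) := fun n => by
  rw [map_add]; exact add_nonneg (hf n) (hg n)

theorem NN.mul {f g : ℤ⟦X⟧} (hf : NN f) (hg : NN g) : NN (f * g) := fun n => by
  rw [coeff_mul]; exact Finset.sum_nonneg fun x _ => mul_nonneg (hf _) (hg _)

theorem NN.zero : NN 0 := fun n => by simp

theorem NN.one : NN 1 := fun n => by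
  rw [coeff_one]; split_ifs <;> norm_num

theorem NN.xpow (k : ℕ) : NN (X ^ k) := fun n => by
  rw [coeff_X_pow]; split_ifs <;> norm_num

theorem NN.sum {ι : Type*} (s : Finset ι) (f : ι → ℤ⟦X⟧) (h : ∀ i ∈ s, NN (f i)) :
    NN (∑ i ∈ s, f i) := fun n => by
  rw [map_sum]; exact Finset.sum_nonneg fun i hi => h i hi n

/-- The geometric series `1 / (1 - X ^ i)`. -/
def geo (i : ℕ) : ℤ⟦X⟧ := PowerSeries.mk fun n => if i ∣ n then 1 else 0

theorem geo_NN (i : ℕ) : NN (geo i) := fun n => by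
  rw [geo, coeff_mk]; split_ifs <;> norm_num

theorem geo_mul {i : ℕ} (hi : 0 < i) : (1 - X ^ i) * geo i = 1 := by
  ext n
  rw [sub_mul, one_mul, map_sub, coeff_X_pow_mul', geo, coeff_mk, coeff_one]
  by_cases h : i ≤ n
  · have h0 : n ≠ 0 := by omega
    have : i ∣ n - i ↔ i ∣ n := by
      rw [Nat.dvd_sub_iff_left h dvd_rfl]
    simp [h, h0, coeff_mk, this]
  · rw [if_neg h]
    by_cases h0 : n = 0
    · simp [h0]
    · have : ¬ i ∣ n := fun hd => h (Nat.le_of_dvd (Nat.pos_of_ne_zero h0) hd)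
      simp [h0, this]

/-- The variable `Q = X ^ 2`. -/
noncomputable def Q : ℤ⟦X⟧ := X ^ 2

theorem Q_pow (k : ℕ) : Q ^ k = X ^ (2 * k) := by rw [Q, ← pow_mul]

theorem Q_NN (k : ℕ) : NN (Q ^ k) := by rw [Q_pow]; exact NN.xpow _

/-- `p n` is the product of `1 / (1 - Q ^ i)` for `i = 1, ..., n`. -/
noncomputable def p : ℕ → ℤ⟦X⟧
  | 0 => 1
  | n + 1 => p n * geo (2 * (n + 1))

theorem p_zero : p 0 = 1 := rfl

theorem p_succ (n : ℕ) : p (n + 1) = p n * geo (2 * (n + 1)) := rfl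

theorem qgeo (n : ℕ) : (1 - Q ^ (n + 1)) * geo (2 * (n + 1)) = 1 := by
  rw [Q_pow]; exact geo_mul (by omega)

theorem p_rel (n : ℕ) : p n = (1 - Q ^ (n + 1)) * p (n + 1) := by
  rw [p_succ, mul_left_comm, qgeo, mul_one]

theorem p_NN (n : ℕ) : NN (p n) := by
  induction n with
  | zero => exact NN.one
  | succ n ih => exact ih.mul (geo_NN _)

theorem p1_NN {i n : ℕ} (h : i ≤ n) : NN ((1 - Q ^ i) * p n) := by
  induction n with
  | zero =>
    obtain rfl : i = 0 := by omega
    simpa using NN.zero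
  | succ n ih =>
    by_cases hi : i = n + 1
    · rw [hi, ← p_rel]; exact p_NN n
    · rw [p_succ, ← mul_assoc]; exact (ih (by omega)).mul (geo_NN _)

theorem p2_NN {i j n : ℕ} (hij : i ≠ j) (h : i ≤ n) (h' : j ≤ n) :
    NN ((1 - Q ^ i) * (1 - Q ^ j) * p n) := by
  induction n with
  | zero => omega
  | succ n ih =>
    by_cases hi : i = n + 1
    · have : (1 - Q ^ i) * (1 - Q ^ j) * p (n + 1) = (1 - Q ^ j) * p n := by
        rw [p_rel n, hi]; ring
      rw [this]; exact p1_NN (by omega)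
    · by_cases hj : j = n + 1
      · have : (1 - Q ^ i) * (1 - Q ^ j) * p (n + 1) = (1 - Q ^ i) * p n := by
          rw [p_rel n, hj]; ring
        rw [this]; exact p1_NN (by omega)
      · rw [p_succ, ← mul_assoc]; exact (ih (by omega) (by omega)).mul (geo_NN _)

/-- The geometric sum. -/
noncomputable def gs (k : ℕ) : ℤ⟦X⟧ := ∑ i ∈ Finset.range k, Q ^ i

theorem gs_NN (k : ℕ) : NN (gs k) := NN.sum _ _ fun i _ => Q_NN i

theorem gs_rel (k : ℕ) : 1 - Q ^ k = (1 - Q) * gs k := by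
  rw [gs, mul_neg_geom_sum]

/-! ### Certificates -/

theorem coeff_mul_geo {i : ℕ} (hi : 0 < i) (f : ℤ⟦X⟧) (m : ℕ) :
    coeff m (f * geo i) = coeff m f + if i ≤ m then coeff (m - i) (f * geo i) else 0 := by
  rw [← coeff_X_pow_mul', ← map_add]
  congr 1
  have := geo_mul hi
  linear_combination f * this

/-- `Rep f l`: the list `l` holds the initial coefficients of `f`, the others are nonnegative. -/
def Rep (f : ℤ⟦X⟧) (l : List ℤ) : Prop :=
  (∀ j < l.length, coeff j f = l.getD j 0) ∧ ∀ j, l.length ≤ j → 0 ≤ coeff j f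

/-- Check that `l'` is `l` divided by `1 - X ^ i`, with a nonnegative last window. -/
def chk (i : ℕ) (l l' : List ℤ) : Bool :=
  decide (0 < i) && decide (i ≤ l.length) && decide (l'.length = l.length) &&
  (List.range l.length).all (fun j =>
    decide (l'.getD j 0 = l.getD j 0 + if i ≤ j then l'.getD (j - i) 0 else 0)) &&
  (List.range i).all (fun j => decide (0 ≤ l'.getD (l.length - i + j) 0))

theorem Rep.step {f : ℤ⟦X⟧} {l l' : List ℤ} {i : ℕ} (h : Rep f l) (hc : chk i l l' = true) :
    Rep (f * geo i) l' := by
  simp only [chk, Bool.and_eq_true, decide_eq_true_eq, List.all_eq_true, List.mem_range] at hc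
  obtain ⟨⟨⟨⟨hi, hil⟩, hlen⟩, h1⟩, h2⟩ := hc
  obtain ⟨ha, hb⟩ := h
  have key : ∀ j < l.length, coeff j (f * geo i) = l'.getD j 0 := by
    intro j
    induction j using Nat.strong_induction_on with
    | _ j ih =>
      intro hj
      rw [coeff_mul_geo hi, h1 j hj, ha j hj]
      split_ifs with hij
      · rw [ih (j - i) (by omega) (by omega)]
      · rfl
  refine ⟨fun j hj => key j (hlen ▸ hj), ?_⟩
  rw [hlen]
  have key2 : ∀ j, l.length - i ≤ j → 0 ≤ coeff j (f * geo i) := by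
    intro j
    induction j using Nat.strong_induction_on with
    | _ j ih =>
      intro hj
      by_cases hjl : j < l.length
      · rw [key j hjl]
        have := h2 (j - (l.length - i)) (by omega)
        rwa [show l.length - i + (j - (l.length - i)) = j by omega] at this
      · rw [coeff_mul_geo hi, if_pos (by omega)]
        exact add_nonneg (hb j (by omega)) (ih (j - i) (by omega) (by omega))
  exact fun j hj => key2 j (by omega)

/-- Division of a coefficient list by `1 - X ^ i` (with a reversed accumulator). -/
def divAux (i : ℕ) : List ℤ → List ℤ → List ℤ
  | acc, [] => acc.reverse
  | acc, x :: xs => divAux i ((x + acc.getD (i - 1) 0) :: acc) xs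

/-- Run the complete certificate check. -/
def cert : List ℕ → List ℤ → Bool
  | [], l => l.all (fun x => decide (0 ≤ x))
  | i :: is, l => chk i l (divAux i [] l) && cert is (divAux i [] l)

theorem cert_NN : ∀ (is : List ℕ) (l : List ℤ) (f : ℤ⟦X⟧), Rep f l → cert is l = true →
    NN (f * (is.map geo).prod)
  | [], l, f, h, hc => by
    simp only [cert, List.all_eq_true, decide_eq_true_eq] at hc
    intro n
    simp only [List.map_nil, List.prod_nil, mul_one]
    by_cases hn : n < l.length
    · rw [h.1 n hn, List.getD_eq_getElem _ _ hn]
      exact hc _ (List.getElem_mem hn)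
    · exact h.2 n (by omega)
  | i :: is, l, f, h, hc => by
    simp only [cert, Bool.and_eq_true] at hc
    have := cert_NN is _ _ (h.step hc.1) hc.2
    simpa [mul_assoc] using this

/-- The power series with coefficient list `l` in `Q`. -/
def ser (l : List ℤ) : ℤ⟦X⟧ := PowerSeries.mk fun n => l.getD n 0

theorem ser_rep (l : List ℤ) : Rep (ser l) l :=
  ⟨fun j _ => by rw [ser, coeff_mk], fun j hj => by
    rw [ser, coeff_mk, List.getD_eq_default _ _ hj]⟩

theorem ser_nil : ser [] = 0 := by ext n; simp [ser]

theorem ser_cons (a : ℤ) (l : List ℤ) : ser (a :: l) = (a : ℤ⟦X⟧) + X * ser l := by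
  ext n
  have : ((a : ℤ) : ℤ⟦X⟧) = C a := (eq_intCast C a).symm
  rw [this]
  cases n with
  | zero => simp [ser]
  | succ n =>
    rw [map_add, coeff_C, coeff_succ_X_mul]
    simp [ser]

/-- Interleave a list with zeros. -/
def dbl : List ℤ → List ℤ
  | [] => []
  | a :: l => a :: 0 :: dbl l

/-- Polynomial in `Q` with given coefficients. -/
noncomputable def qpoly : List ℤ → ℤ⟦X⟧
  | [] => 0
  | a :: l => (a : ℤ⟦X⟧) + Q * qpoly l

theorem ser_dbl : ∀ l, ser (dbl l) = qpoly l
  | [] => ser_nil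
  | a :: l => by
    rw [dbl, ser_cons, ser_cons, ser_dbl l, qpoly, Q]; push_cast; ring

theorem cert_main (is : List ℕ) (l : List ℤ) (hc : cert is (dbl l) = true) :
    NN (qpoly l * (is.map geo).prod) := by
  rw [← ser_dbl]
  exact cert_NN _ _ _ (ser_rep _) hc

theorem r0 : p 0 = (1 - Q) * p 1 := by simpa using p_rel 0
theorem r1 : p 1 = (1 - Q ^ 2) * p 2 := p_rel 1
theorem r2 : p 2 = (1 - Q ^ 3) * p 3 := p_rel 2
theorem r3 : p 3 = (1 - Q ^ 4) * p 4 := p_rel 3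
theorem r4 : p 4 = (1 - Q ^ 5) * p 5 := p_rel 4
theorem r5 : p 5 = (1 - Q ^ 6) * p 6 := p_rel 5
theorem r6 : p 6 = (1 - Q ^ 7) * p 7 := p_rel 6

theorem l2_NN : NN ((1 - Q) * (p 2 * p 4 - Q ^ 3 * (p 3 * p 5) + Q ^ 6 * (p 4 * p 6))) := by
  have h := cert_main [2,4,4,6,6,8,8,10,12]
    [1, 0, 0, -2, -1, -1, 0, 2, 1, 3, 1, 1, -1, -2, -1, -1, 0, 0, 1, 0] (by decide +kernel)
  convert h using 1
  have h24 : p 2 * p 4 = ((1 - Q ^ 3)*(1 - Q ^ 4)) * ((1 - Q ^ 5)*(1 - Q ^ 6)) * (p 4 * p 6) := by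
    have ea : p 2 = ((1 - Q ^ 3)*(1 - Q ^ 4)) * p 4 := by
      rw [r2, r3]; ring
    have eb : p 4 = ((1 - Q ^ 5)*(1 - Q ^ 6)) * p 6 := by
      rw [r4, r5]; ring
    linear_combination p 4 * ea + ((1 - Q ^ 3)*(1 - Q ^ 4)) * p 4 * eb
  have h35 : p 3 * p 5 = ((1 - Q ^ 4)) * ((1 - Q ^ 6)) * (p 4 * p 6) := by
    have ea : p 3 = ((1 - Q ^ 4)) * p 4 := by
      rw [r3]
    have eb : p 5 = ((1 - Q ^ 6)) * p 6 := by
      rw [r5]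
    linear_combination p 5 * ea + ((1 - Q ^ 4)) * p 4 * eb
  have eA : (1 - Q) * p 4 = geo 4 * geo 6 * geo 8 := by
    have e := qgeo 0
    norm_num at e
    simp only [p_succ, p_zero]
    norm_num
    linear_combination (geo 4 * geo 6 * geo 8) * e
  have eB : p 6 = geo 2 * geo 4 * geo 6 * geo 8 * geo 10 * geo 12 := by
    simp only [p_succ, p_zero]
    norm_num
  have e : (List.map geo [2,4,4,6,6,8,8,10,12]).prod = (1 - Q) * p 4 * p 6 := by
    rw [eA, eB]
    simp only [List.map, List.prod_cons, List.prod_nil]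
    ring
  rw [e]
  simp only [qpoly]
  push_cast
  linear_combination ((1-Q)) * h24 + (-(1-Q)*Q^3) * h35

theorem m1_NN : NN ((1 - Q) * (p 1 * p 4 - Q ^ 3 * (p 2 * p 5) + Q ^ 5 * (p 3 * p 6))) := by
  have h := cert_main [2,4,4,6,6,8,10,12]
    [1, 0, -1, -2, 0, 1, 0, 1, 2, 2, -1, 0, -1, -1, -1, 0, 1, 0] (by decide +kernel)
  convert h using 1
  have h14 : p 1 * p 4 = ((1 - Q ^ 2)*(1 - Q ^ 3)) * ((1 - Q ^ 5)*(1 - Q ^ 6)) * (p 3 * p 6) := by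
    have ea : p 1 = ((1 - Q ^ 2)*(1 - Q ^ 3)) * p 3 := by
      rw [r1, r2]; ring
    have eb : p 4 = ((1 - Q ^ 5)*(1 - Q ^ 6)) * p 6 := by
      rw [r4, r5]; ring
    linear_combination p 4 * ea + ((1 - Q ^ 2)*(1 - Q ^ 3)) * p 3 * eb
  have h25 : p 2 * p 5 = ((1 - Q ^ 3)) * ((1 - Q ^ 6)) * (p 3 * p 6) := by
    have ea : p 2 = ((1 - Q ^ 3)) * p 3 := by
      rw [r2]
    have eb : p 5 = ((1 - Q ^ 6)) * p 6 := by
      rw [r5]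
    linear_combination p 5 * ea + ((1 - Q ^ 3)) * p 3 * eb
  have eA : (1 - Q) * p 3 = geo 4 * geo 6 := by
    have e := qgeo 0
    norm_num at e
    simp only [p_succ, p_zero]
    norm_num
    linear_combination (geo 4 * geo 6) * e
  have eB : p 6 = geo 2 * geo 4 * geo 6 * geo 8 * geo 10 * geo 12 := by
    simp only [p_succ, p_zero]
    norm_num
  have e : (List.map geo [2,4,4,6,6,8,10,12]).prod = (1 - Q) * p 3 * p 6 := by
    rw [eA, eB]
    simp only [List.map, List.prod_cons, List.prod_nil]
    ring
  rw [e]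
  simp only [qpoly]
  push_cast
  linear_combination ((1-Q)) * h14 + (-(1-Q)*Q^3) * h25

theorem m2_NN : NN ((1 - Q) * (p 2 * p 5 - Q ^ 3 * (p 3 * p 6) + Q ^ 5 * (p 4 * p 7))) := by
  have h := cert_main [2,4,4,6,6,8,8,10,12,14]
    [1, 0, 0, -2, -1, 1, -1, 1, 0, 1, 3, 1, 0, 0, -2, 0, -1, -1, 0, 0, 1, 0] (by decide +kernel)
  convert h using 1
  have h25 : p 2 * p 5 = ((1 - Q ^ 3)*(1 - Q ^ 4)) * ((1 - Q ^ 6)*(1 - Q ^ 7)) * (p 4 * p 7) := by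
    have ea : p 2 = ((1 - Q ^ 3)*(1 - Q ^ 4)) * p 4 := by
      rw [r2, r3]; ring
    have eb : p 5 = ((1 - Q ^ 6)*(1 - Q ^ 7)) * p 7 := by
      rw [r5, r6]; ring
    linear_combination p 5 * ea + ((1 - Q ^ 3)*(1 - Q ^ 4)) * p 4 * eb
  have h36 : p 3 * p 6 = ((1 - Q ^ 4)) * ((1 - Q ^ 7)) * (p 4 * p 7) := by
    have ea : p 3 = ((1 - Q ^ 4)) * p 4 := by
      rw [r3]
    have eb : p 6 = ((1 - Q ^ 7)) * p 7 := by
      rw [r6]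
    linear_combination p 6 * ea + ((1 - Q ^ 4)) * p 4 * eb
  have eA : (1 - Q) * p 4 = geo 4 * geo 6 * geo 8 := by
    have e := qgeo 0
    norm_num at e
    simp only [p_succ, p_zero]
    norm_num
    linear_combination (geo 4 * geo 6 * geo 8) * e
  have eB : p 7 = geo 2 * geo 4 * geo 6 * geo 8 * geo 10 * geo 12 * geo 14 := by
    simp only [p_succ, p_zero]
    norm_num
  have e : (List.map geo [2,4,4,6,6,8,8,10,12,14]).prod = (1 - Q) * p 4 * p 7 := by
    rw [eA, eB]
    simp only [List.map, List.prod_cons, List.prod_nil]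
    ring
  rw [e]
  simp only [qpoly]
  push_cast
  linear_combination ((1-Q)) * h25 + (-(1-Q)*Q^3) * h36

theorem O1_NN : NN ((1 - Q) * (p 0 * p 2) + Q * ((1 - Q) * (p 0 * p 2 - Q ^ 3 * (p 1 * p 3) + Q ^ 6 * (p 2 * p 4)))
    + Q ^ 3 * ((1 - Q) * (p 0 * p 3)) + Q ^ 4 * ((1 - Q) * (p 0 * p 3))
    + Q ^ 5 * ((1 - Q) * (p 0 * p 3 - Q ^ 3 * (p 1 * p 4) + Q ^ 5 * (p 2 * p 5)))
    + Q ^ 8 * ((1 - Q ^ 2) * (p 1 * p 5)) - Q ^ 3 * (p 0 * p 1)) := by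
  have h := cert_main [2,4,4,6,6,8,10]
    [1, 0, -2, -2, -1, 4, 4, 3, -2, -4, -4, -2, 2, 4, 4, -2, -4, -3, 1, 3, 1, 0, -1, 0] (by decide +kernel)
  convert h using 1
  have h02 : p 0 * p 2 = ((1 - Q)*(1 - Q ^ 2)*(1 - Q ^ 3)) * ((1 - Q ^ 3)*(1 - Q ^ 4)*(1 - Q ^ 5)) * (p 3 * p 5) := by
    have ea : p 0 = ((1 - Q)*(1 - Q ^ 2)*(1 - Q ^ 3)) * p 3 := by
      rw [r0, r1, r2]; ring
    have eb : p 2 = ((1 - Q ^ 3)*(1 - Q ^ 4)*(1 - Q ^ 5)) * p 5 := by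
      rw [r2, r3, r4]; ring
    linear_combination p 2 * ea + ((1 - Q)*(1 - Q ^ 2)*(1 - Q ^ 3)) * p 3 * eb
  have h13 : p 1 * p 3 = ((1 - Q ^ 2)*(1 - Q ^ 3)) * ((1 - Q ^ 4)*(1 - Q ^ 5)) * (p 3 * p 5) := by
    have ea : p 1 = ((1 - Q ^ 2)*(1 - Q ^ 3)) * p 3 := by
      rw [r1, r2]; ring
    have eb : p 3 = ((1 - Q ^ 4)*(1 - Q ^ 5)) * p 5 := by
      rw [r3, r4]; ring
    linear_combination p 3 * ea + ((1 - Q ^ 2)*(1 - Q ^ 3)) * p 3 * eb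
  have h24 : p 2 * p 4 = ((1 - Q ^ 3)) * ((1 - Q ^ 5)) * (p 3 * p 5) := by
    have ea : p 2 = ((1 - Q ^ 3)) * p 3 := by
      rw [r2]
    have eb : p 4 = ((1 - Q ^ 5)) * p 5 := by
      rw [r4]
    linear_combination p 4 * ea + ((1 - Q ^ 3)) * p 3 * eb
  have h03 : p 0 * p 3 = ((1 - Q)*(1 - Q ^ 2)*(1 - Q ^ 3)) * ((1 - Q ^ 4)*(1 - Q ^ 5)) * (p 3 * p 5) := by
    have ea : p 0 = ((1 - Q)*(1 - Q ^ 2)*(1 - Q ^ 3)) * p 3 := by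
      rw [r0, r1, r2]; ring
    have eb : p 3 = ((1 - Q ^ 4)*(1 - Q ^ 5)) * p 5 := by
      rw [r3, r4]; ring
    linear_combination p 3 * ea + ((1 - Q)*(1 - Q ^ 2)*(1 - Q ^ 3)) * p 3 * eb
  have h14 : p 1 * p 4 = ((1 - Q ^ 2)*(1 - Q ^ 3)) * ((1 - Q ^ 5)) * (p 3 * p 5) := by
    have ea : p 1 = ((1 - Q ^ 2)*(1 - Q ^ 3)) * p 3 := by
      rw [r1, r2]; ring
    have eb : p 4 = ((1 - Q ^ 5)) * p 5 := by
      rw [r4]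
    linear_combination p 4 * ea + ((1 - Q ^ 2)*(1 - Q ^ 3)) * p 3 * eb
  have h25 : p 2 * p 5 = ((1 - Q ^ 3)) * (1) * (p 3 * p 5) := by
    have ea : p 2 = ((1 - Q ^ 3)) * p 3 := by
      rw [r2]
    have eb : p 5 = (1) * p 5 := by
      ring
    linear_combination p 5 * ea + ((1 - Q ^ 3)) * p 3 * eb
  have h15 : p 1 * p 5 = ((1 - Q ^ 2)*(1 - Q ^ 3)) * (1) * (p 3 * p 5) := by
    have ea : p 1 = ((1 - Q ^ 2)*(1 - Q ^ 3)) * p 3 := by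
      rw [r1, r2]; ring
    have eb : p 5 = (1) * p 5 := by
      ring
    linear_combination p 5 * ea + ((1 - Q ^ 2)*(1 - Q ^ 3)) * p 3 * eb
  have h01 : p 0 * p 1 = ((1 - Q)*(1 - Q ^ 2)*(1 - Q ^ 3)) * ((1 - Q ^ 2)*(1 - Q ^ 3)*(1 - Q ^ 4)*(1 - Q ^ 5)) * (p 3 * p 5) := by
    have ea : p 0 = ((1 - Q)*(1 - Q ^ 2)*(1 - Q ^ 3)) * p 3 := by
      rw [r0, r1, r2]; ring
    have eb : p 1 = ((1 - Q ^ 2)*(1 - Q ^ 3)*(1 - Q ^ 4)*(1 - Q ^ 5)) * p 5 := by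
      rw [r1, r2, r3, r4]; ring
    linear_combination p 1 * ea + ((1 - Q)*(1 - Q ^ 2)*(1 - Q ^ 3)) * p 3 * eb
  have eA : (1 - Q) * p 3 = geo 4 * geo 6 := by
    have e := qgeo 0
    norm_num at e
    simp only [p_succ, p_zero]
    norm_num
    linear_combination (geo 4 * geo 6) * e
  have eB : p 5 = geo 2 * geo 4 * geo 6 * geo 8 * geo 10 := by
    simp only [p_succ, p_zero]
    norm_num
  have e : (List.map geo [2,4,4,6,6,8,10]).prod = (1 - Q) * p 3 * p 5 := by
    rw [eA, eB]
    simp only [List.map, List.prod_cons, List.prod_nil]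
    ring
  rw [e]
  simp only [qpoly]
  push_cast
  linear_combination ((1-Q)*(1+Q)) * h02 + (-(1-Q)*Q^4) * h13 + ((1-Q)*Q^7) * h24 + ((1-Q)*(Q^3+Q^4+Q^5)) * h03 + (-(1-Q)*Q^8) * h14 + ((1-Q)*Q^10) * h25 + (Q^8*(1-Q^2)) * h15 + (-Q^3) * h01

theorem E1_NN : NN (-((1 - Q) * (p 0 * p 2)) + Q ^ 3 * ((1 - Q) * (p 1 * p 3))
    + Q ^ 4 * ((1 - Q) * (p 1 * p 3 - Q ^ 3 * (p 2 * p 4) + Q ^ 6 * (p 3 * p 5)))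
    - Q ^ 4 * ((1 - Q) * (p 0 * p 3)) + Q ^ 6 * ((1 - Q) * (p 1 * p 4))
    + Q ^ 4 * ((1 - Q ^ 2) * (p 0 * p 4)) + (1 + Q ^ 2) * (p 0 * p 0) - Q ^ 3 * (p 0 * p 1)) := by
  have h := cert_main [2,4,4,6,6,8,10]
    [0, 0, 0, 0, 0, 3, 1, -3, -5, -5, 1, 3, 10, 6, 1, -6, -5, -5, -1, 4, 3, 1, -2, 0] (by decide +kernel)
  convert h using 1
  have h02 : p 0 * p 2 = ((1 - Q)*(1 - Q ^ 2)*(1 - Q ^ 3)) * ((1 - Q ^ 3)*(1 - Q ^ 4)*(1 - Q ^ 5)) * (p 3 * p 5) := by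
    have ea : p 0 = ((1 - Q)*(1 - Q ^ 2)*(1 - Q ^ 3)) * p 3 := by
      rw [r0, r1, r2]; ring
    have eb : p 2 = ((1 - Q ^ 3)*(1 - Q ^ 4)*(1 - Q ^ 5)) * p 5 := by
      rw [r2, r3, r4]; ring
    linear_combination p 2 * ea + ((1 - Q)*(1 - Q ^ 2)*(1 - Q ^ 3)) * p 3 * eb
  have h13 : p 1 * p 3 = ((1 - Q ^ 2)*(1 - Q ^ 3)) * ((1 - Q ^ 4)*(1 - Q ^ 5)) * (p 3 * p 5) := by
    have ea : p 1 = ((1 - Q ^ 2)*(1 - Q ^ 3)) * p 3 := by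
      rw [r1, r2]; ring
    have eb : p 3 = ((1 - Q ^ 4)*(1 - Q ^ 5)) * p 5 := by
      rw [r3, r4]; ring
    linear_combination p 3 * ea + ((1 - Q ^ 2)*(1 - Q ^ 3)) * p 3 * eb
  have h24 : p 2 * p 4 = ((1 - Q ^ 3)) * ((1 - Q ^ 5)) * (p 3 * p 5) := by
    have ea : p 2 = ((1 - Q ^ 3)) * p 3 := by
      rw [r2]
    have eb : p 4 = ((1 - Q ^ 5)) * p 5 := by
      rw [r4]
    linear_combination p 4 * ea + ((1 - Q ^ 3)) * p 3 * eb
  have h03 : p 0 * p 3 = ((1 - Q)*(1 - Q ^ 2)*(1 - Q ^ 3)) * ((1 - Q ^ 4)*(1 - Q ^ 5)) * (p 3 * p 5) := by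
    have ea : p 0 = ((1 - Q)*(1 - Q ^ 2)*(1 - Q ^ 3)) * p 3 := by
      rw [r0, r1, r2]; ring
    have eb : p 3 = ((1 - Q ^ 4)*(1 - Q ^ 5)) * p 5 := by
      rw [r3, r4]; ring
    linear_combination p 3 * ea + ((1 - Q)*(1 - Q ^ 2)*(1 - Q ^ 3)) * p 3 * eb
  have h14 : p 1 * p 4 = ((1 - Q ^ 2)*(1 - Q ^ 3)) * ((1 - Q ^ 5)) * (p 3 * p 5) := by
    have ea : p 1 = ((1 - Q ^ 2)*(1 - Q ^ 3)) * p 3 := by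
      rw [r1, r2]; ring
    have eb : p 4 = ((1 - Q ^ 5)) * p 5 := by
      rw [r4]
    linear_combination p 4 * ea + ((1 - Q ^ 2)*(1 - Q ^ 3)) * p 3 * eb
  have h04 : p 0 * p 4 = ((1 - Q)*(1 - Q ^ 2)*(1 - Q ^ 3)) * ((1 - Q ^ 5)) * (p 3 * p 5) := by
    have ea : p 0 = ((1 - Q)*(1 - Q ^ 2)*(1 - Q ^ 3)) * p 3 := by
      rw [r0, r1, r2]; ring
    have eb : p 4 = ((1 - Q ^ 5)) * p 5 := by
      rw [r4]
    linear_combination p 4 * ea + ((1 - Q)*(1 - Q ^ 2)*(1 - Q ^ 3)) * p 3 * eb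
  have h00 : p 0 * p 0 = ((1 - Q)*(1 - Q ^ 2)*(1 - Q ^ 3)) * ((1 - Q)*(1 - Q ^ 2)*(1 - Q ^ 3)*(1 - Q ^ 4)*(1 - Q ^ 5)) * (p 3 * p 5) := by
    have ea : p 0 = ((1 - Q)*(1 - Q ^ 2)*(1 - Q ^ 3)) * p 3 := by
      rw [r0, r1, r2]; ring
    have eb : p 0 = ((1 - Q)*(1 - Q ^ 2)*(1 - Q ^ 3)*(1 - Q ^ 4)*(1 - Q ^ 5)) * p 5 := by
      rw [r0, r1, r2, r3, r4]; ring
    linear_combination p 0 * ea + ((1 - Q)*(1 - Q ^ 2)*(1 - Q ^ 3)) * p 3 * eb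
  have h01 : p 0 * p 1 = ((1 - Q)*(1 - Q ^ 2)*(1 - Q ^ 3)) * ((1 - Q ^ 2)*(1 - Q ^ 3)*(1 - Q ^ 4)*(1 - Q ^ 5)) * (p 3 * p 5) := by
    have ea : p 0 = ((1 - Q)*(1 - Q ^ 2)*(1 - Q ^ 3)) * p 3 := by
      rw [r0, r1, r2]; ring
    have eb : p 1 = ((1 - Q ^ 2)*(1 - Q ^ 3)*(1 - Q ^ 4)*(1 - Q ^ 5)) * p 5 := by
      rw [r1, r2, r3, r4]; ring
    linear_combination p 1 * ea + ((1 - Q)*(1 - Q ^ 2)*(1 - Q ^ 3)) * p 3 * eb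
  have eA : (1 - Q) * p 3 = geo 4 * geo 6 := by
    have e := qgeo 0
    norm_num at e
    simp only [p_succ, p_zero]
    norm_num
    linear_combination (geo 4 * geo 6) * e
  have eB : p 5 = geo 2 * geo 4 * geo 6 * geo 8 * geo 10 := by
    simp only [p_succ, p_zero]
    norm_num
  have e : (List.map geo [2,4,4,6,6,8,10]).prod = (1 - Q) * p 3 * p 5 := by
    rw [eA, eB]
    simp only [List.map, List.prod_cons, List.prod_nil]
    ring
  rw [e]
  simp only [qpoly]
  push_cast
  linear_combination (-(1-Q)) * h02 + ((1-Q)*(Q^3+Q^4)) * h13 + (-(1-Q)*Q^7) * h24 + (-(1-Q)*Q^4) * h03 + ((1-Q)*Q^6) * h14 + (Q^4*(1-Q^2)) * h04 + ((1+Q^2)) * h00 + (-Q^3) * h01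

/-! ### Uniform positivity -/

theorem pos_ell (c : ℕ) : NN ((1 - Q) * (p (c + 3) * p (c + 5)
    - Q ^ 3 * (p (c + 4) * p (c + 6)) + Q ^ 6 * (p (c + 5) * p (c + 7)))) := by
  have a3 : p (c + 3) = (1 - Q ^ (c + 4)) * p (c + 4) := p_rel _
  have a4 : p (c + 4) = (1 - Q ^ (c + 5)) * p (c + 5) := p_rel _
  have a5 : p (c + 5) = (1 - Q ^ (c + 6)) * p (c + 6) := p_rel _
  have a6 : p (c + 6) = (1 - Q ^ (c + 7)) * p (c + 7) := p_rel _
  have t1 : NN (Q ^ 6 * (((1 - Q ^ (c + 1)) * (1 - Q ^ c) * p (c + 4)) *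
      ((1 - Q ^ 1) * p (c + 6)))) :=
    (Q_NN _).mul ((p2_NN (by omega) (by omega) (by omega)).mul (p1_NN (by omega)))
  have t2 : NN (gs (2 * c + 7) * (((1 - Q ^ 1) * (1 - Q ^ (c + 4)) * p (c + 4)) *
      ((1 - Q ^ 1) * (1 - Q ^ 3) * p (c + 6)))) :=
    (gs_NN _).mul ((p2_NN (by omega) (by omega) (by omega)).mul
      (p2_NN (by omega) (by omega) (by omega)))
  have t3 : NN (Q ^ (c + 11) * gs (2 * c) * (((1 - Q ^ 1) * p (c + 4)) *
      ((1 - Q ^ 1) * p (c + 6)))) :=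
    ((Q_NN _).mul (gs_NN _)).mul ((p1_NN (by omega)).mul (p1_NN (by omega)))
  have t4 : NN (Q ^ (3 * c + 14) * (p (c + 4) * ((1 - Q ^ 1) * p (c + 6)))) :=
    (Q_NN _).mul ((p_NN _).mul (p1_NN (by omega)))
  have t5 : NN (Q ^ (c + 11) * Q ^ (c + 5) * (p (c + 5) * ((1 - Q ^ 1) * p (c + 7)))) :=
    ((Q_NN _).mul (Q_NN _)).mul ((p_NN _).mul (p1_NN (by omega)))
  have t6 : NN ((Q ^ (c + 11) * Q ^ (c + 7) + Q ^ (c + 13)) *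
      (((1 - Q ^ (c + 5)) * p (c + 5)) * ((1 - Q ^ 1) * p (c + 7)))) :=
    (((Q_NN _).mul (Q_NN _)).add (Q_NN _)).mul ((p1_NN (by omega)).mul (p1_NN (by omega)))
  have h := ((((t1.add t2).add t3).add t4).add t5).add t6
  convert h using 1
  have g1 := gs_rel (2 * c + 7)
  have g2 := gs_rel (2 * c)
  have e35 : p (c + 3) * p (c + 5) = (1 - Q ^ (c + 4)) * (1 - Q ^ (c + 5)) *
      (1 - Q ^ (c + 6)) * (1 - Q ^ (c + 7)) * (p (c + 5) * p (c + 7)) := by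
    rw [a3, a4]
    linear_combination (1 - Q ^ (c + 4)) * (1 - Q ^ (c + 5)) * p (c + 5) *
      (a5 + (1 - Q ^ (c + 6)) * a6)
  have e46 : p (c + 4) * p (c + 6) =
      (1 - Q ^ (c + 5)) * (1 - Q ^ (c + 7)) * (p (c + 5) * p (c + 7)) := by
    rw [a4, a6]; ring
  have s2 : gs (2 * c + 7) * (((1 - Q ^ 1) * (1 - Q ^ (c + 4)) * p (c + 4)) *
      ((1 - Q ^ 1) * (1 - Q ^ 3) * p (c + 6))) = (1 - Q ^ (2 * c + 7)) * (1 - Q) *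
      (1 - Q ^ (c + 4)) * (1 - Q ^ 3) * (p (c + 4) * p (c + 6)) := by
    rw [g1]; ring
  have s3 : Q ^ (c + 11) * gs (2 * c) * (((1 - Q ^ 1) * p (c + 4)) * ((1 - Q ^ 1) * p (c + 6)))
      = Q ^ (c + 11) * (1 - Q ^ (2 * c)) * (1 - Q) * (p (c + 4) * p (c + 6)) := by
    rw [g2]; ring
  rw [s2, s3]
  have s1 : Q ^ 6 * (((1 - Q ^ (c + 1)) * (1 - Q ^ c) * p (c + 4)) * ((1 - Q ^ 1) * p (c + 6)))
      = Q ^ 6 * ((1 - Q ^ (c + 1)) * (1 - Q ^ c) * (1 - Q)) * (p (c + 4) * p (c + 6)) := by ring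
  have s4 : Q ^ (3 * c + 14) * (p (c + 4) * ((1 - Q ^ 1) * p (c + 6)))
      = Q ^ (3 * c + 14) * (1 - Q) * (p (c + 4) * p (c + 6)) := by ring
  rw [s1, s4, e35, e46]
  simp only [pow_add, pow_mul', pow_one]
  generalize Q ^ c = t
  ring

theorem pos_m (c : ℕ) : NN ((1 - Q) * (p (c + 3) * p (c + 6)
    - Q ^ 3 * (p (c + 4) * p (c + 7)) + Q ^ 5 * (p (c + 5) * p (c + 8)))) := by
  have a3 : p (c + 3) = (1 - Q ^ (c + 4)) * p (c + 4) := p_rel _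
  have a4 : p (c + 4) = (1 - Q ^ (c + 5)) * p (c + 5) := p_rel _
  have a6 : p (c + 6) = (1 - Q ^ (c + 7)) * p (c + 7) := p_rel _
  have a7 : p (c + 7) = (1 - Q ^ (c + 8)) * p (c + 8) := p_rel _
  have t1 : NN (Q ^ 5 * (((1 - Q ^ (c + 2)) * p (c + 4)) *
      ((1 - Q ^ 1) * (1 - Q ^ (c + 2)) * p (c + 7)))) :=
    (Q_NN _).mul ((p1_NN (by omega)).mul (p2_NN (by omega) (by omega) (by omega)))
  have t2 : NN (gs (2 * c + 9) * (((1 - Q ^ 1) * (1 - Q ^ (c + 4)) * p (c + 4)) *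
      ((1 - Q ^ 1) * (1 - Q ^ 3) * p (c + 7)))) :=
    (gs_NN _).mul ((p2_NN (by omega) (by omega) (by omega)).mul
      (p2_NN (by omega) (by omega) (by omega)))
  have t3 : NN ((Q ^ (2 * c + 11) + Q ^ (c + 10) * gs (2 * c + 3)) * (((1 - Q ^ 1) * p (c + 4)) *
      ((1 - Q ^ 1) * p (c + 7)))) :=
    ((Q_NN _).add ((Q_NN _).mul (gs_NN _))).mul ((p1_NN (by omega)).mul (p1_NN (by omega)))
  have t4 : NN (Q ^ (3 * c + 16) * (p (c + 4) * ((1 - Q ^ 1) * p (c + 7)))) :=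
    (Q_NN _).mul ((p_NN _).mul (p1_NN (by omega)))
  have t5 : NN (Q ^ (c + 10) * Q ^ (c + 5) * (p (c + 5) * ((1 - Q ^ 1) * p (c + 8)))) :=
    ((Q_NN _).mul (Q_NN _)).mul ((p_NN _).mul (p1_NN (by omega)))
  have t6 : NN ((Q ^ (c + 10) * Q ^ (c + 8) + Q ^ (c + 13)) *
      (((1 - Q ^ (c + 5)) * p (c + 5)) * ((1 - Q ^ 1) * p (c + 8)))) :=
    (((Q_NN _).mul (Q_NN _)).add (Q_NN _)).mul ((p1_NN (by omega)).mul (p1_NN (by omega)))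
  have h := ((((t1.add t2).add t3).add t4).add t5).add t6
  convert h using 1
  have g1 := gs_rel (2 * c + 9)
  have g2 := gs_rel (2 * c + 3)
  have e36 : p (c + 3) * p (c + 6) = (1 - Q ^ (c + 4)) * (1 - Q ^ (c + 5)) *
      (1 - Q ^ (c + 7)) * (1 - Q ^ (c + 8)) * (p (c + 5) * p (c + 8)) := by
    rw [a3, a4, a6, a7]; ring
  have e47 : p (c + 4) * p (c + 7) =
      (1 - Q ^ (c + 5)) * (1 - Q ^ (c + 8)) * (p (c + 5) * p (c + 8)) := by
    rw [a4, a7]; ring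
  have s2 : gs (2 * c + 9) * (((1 - Q ^ 1) * (1 - Q ^ (c + 4)) * p (c + 4)) *
      ((1 - Q ^ 1) * (1 - Q ^ 3) * p (c + 7))) = (1 - Q ^ (2 * c + 9)) * (1 - Q) *
      (1 - Q ^ (c + 4)) * (1 - Q ^ 3) * (p (c + 4) * p (c + 7)) := by
    rw [g1]; ring
  have s3 : (Q ^ (2 * c + 11) + Q ^ (c + 10) * gs (2 * c + 3)) *
      (((1 - Q ^ 1) * p (c + 4)) * ((1 - Q ^ 1) * p (c + 7)))
      = (Q ^ (2 * c + 11) * (1 - Q) + Q ^ (c + 10) * (1 - Q ^ (2 * c + 3))) * (1 - Q) *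
        (p (c + 4) * p (c + 7)) := by
    rw [g2]; ring
  rw [s2, s3]
  have s1 : Q ^ 5 * (((1 - Q ^ (c + 2)) * p (c + 4)) *
      ((1 - Q ^ 1) * (1 - Q ^ (c + 2)) * p (c + 7)))
      = Q ^ 5 * ((1 - Q ^ (c + 2)) ^ 2 * (1 - Q)) * (p (c + 4) * p (c + 7)) := by ring
  have s4 : Q ^ (3 * c + 16) * (p (c + 4) * ((1 - Q ^ 1) * p (c + 7)))
      = Q ^ (3 * c + 16) * (1 - Q) * (p (c + 4) * p (c + 7)) := by ring
  rw [s1, s4, e36, e47]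
  simp only [pow_add, pow_mul', pow_one]
  generalize Q ^ c = t
  ring

/-! ### The summation operator -/

/-- `S f` is the sum of `X ^ (7 b) f b` over all `b`. -/
noncomputable def S (f : ℕ → ℤ⟦X⟧) : ℤ⟦X⟧ :=
  PowerSeries.mk fun n => ∑ b ∈ Finset.range (n + 1), coeff n (X ^ (7 * b) * f b)

theorem coeff_S (f : ℕ → ℤ⟦X⟧) {n T : ℕ} (h : n < T) :
    coeff n (S f) = ∑ b ∈ Finset.range T, coeff n (X ^ (7 * b) * f b) := by
  rw [S, coeff_mk]
  apply Finset.sum_subset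
  · intro b hb; simp only [Finset.mem_range] at *; omega
  · intro b _ hb
    simp only [Finset.mem_range] at *
    rw [coeff_X_pow_mul', if_neg (by omega)]

theorem S_NN {f : ℕ → ℤ⟦X⟧} (h : ∀ b, NN (f b)) : NN (S f) := fun n => by
  rw [S, coeff_mk]
  exact Finset.sum_nonneg fun b _ => ((NN.xpow _).mul (h b)) n

theorem S_add (f g : ℕ → ℤ⟦X⟧) : S (fun b => f b + g b) = S f + S g := by
  ext n
  simp only [S, coeff_mk, map_add, mul_add, Finset.sum_add_distrib]

theorem S_mul (c : ℤ⟦X⟧) (f : ℕ → ℤ⟦X⟧) : S (fun b => c * f b) = c * S f := by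
  ext n
  have : ∀ k < n + 1, coeff k (S f) = coeff k (∑ b ∈ Finset.range (n + 1), X ^ (7 * b) * f b) := by
    intro k hk
    rw [coeff_S f hk, map_sum]
  rw [coeff_S _ (Nat.lt_succ_self n), coeff_mul, ← map_sum]
  rw [show ∑ b ∈ Finset.range (n + 1), X ^ (7 * b) * (c * f b)
    = c * ∑ b ∈ Finset.range (n + 1), X ^ (7 * b) * f b by
      rw [Finset.mul_sum]; exact Finset.sum_congr rfl fun b _ => by ring]
  rw [coeff_mul]
  refine Finset.sum_congr rfl fun x hx => ?_
  rw [this x.2 (by have := Finset.HasAntidiagonal.mem_antidiagonal.mp hx; omega)]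

theorem S_shift (f : ℕ → ℤ⟦X⟧) : S f = f 0 + X ^ 7 * S (fun b => f (b + 1)) := by
  ext n
  rw [← S_mul, coeff_S f (show n < n + 2 by omega), Finset.sum_range_succ', map_add,
    coeff_S _ (Nat.lt_succ_self n), add_comm]
  congr 1
  · simp
  · refine Finset.sum_congr rfl fun b _ => ?_
    congr 1; ring

/-- The series with difference `d` between the numbers of parts. -/
noncomputable def F (d : ℕ) : ℤ⟦X⟧ := S fun b => p b * p (b + d)

theorem F_NN (d : ℕ) : NN (F d) := S_NN fun _ => (p_NN _).mul (p_NN _)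

theorem F_even (k : ℕ) (c : ℕ) : NN ((X ^ c - X ^ (c + 2 * k)) * F (2 * k)) := by
  have : (X ^ c - X ^ (c + 2 * k)) * F (2 * k) =
      X ^ c * S fun b => p b * ((1 - Q ^ k) * p (b + 2 * k)) := by
    rw [show (fun b => p b * ((1 - Q ^ k) * p (b + 2 * k))) =
      fun b => (1 - Q ^ k) * (p b * p (b + 2 * k)) by funext b; ring, S_mul, ← F, Q_pow]
    ring
  rw [this]
  exact (NN.xpow _).mul (S_NN fun b => (p_NN _).mul (p1_NN (by omega)))

theorem F_seven (d : ℕ) : NN ((1 - X ^ 7) * F d) := by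
  have h : (1 - X ^ 7) * F d = p 0 * p (0 + d) + X ^ 7 * S fun b =>
      (Q ^ (b + 1) * (p (b + 1) * p (b + 1 + d)) +
        Q ^ (b + 1 + d) * (((1 - Q ^ (b + 1)) * p (b + 1)) * p (b + 1 + d))) := by
    have e : ∀ b, Q ^ (b + 1) * (p (b + 1) * p (b + 1 + d)) +
        Q ^ (b + 1 + d) * (((1 - Q ^ (b + 1)) * p (b + 1)) * p (b + 1 + d)) =
        p (b + 1) * p (b + 1 + d) + (-1) * (p b * p (b + d)) := by
      intro b
      rw [p_rel b, p_rel (b + d), show b + d + 1 = b + 1 + d by ring]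
      ring
    simp only [e]
    rw [S_add, S_mul, ← F, F]
    have := S_shift fun b => p b * p (b + d)
    linear_combination this
  rw [h]
  exact ((p_NN _).mul (p_NN _)).add ((NN.xpow _).mul (S_NN fun b =>
    ((Q_NN _).mul ((p_NN _).mul (p_NN _))).add
      ((Q_NN _).mul ((p1_NN le_rfl).mul (p_NN _)))))

theorem F_big (d : ℕ) (hd : 6 ≤ d) : NN ((X ^ (3 * d) - X ^ (4 * d)) * F d) := by
  obtain ⟨k, hk⟩ := Nat.even_or_odd' d
  rcases hk with rfl | hk
  · have := F_even k (3 * (2 * k))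
    convert this using 4
    ring
  · obtain ⟨j, rfl⟩ : ∃ j, d = 2 * j + 7 := ⟨k - 3, by omega⟩
    have h1 : NN (X ^ (3 * (2 * j + 7)) * ((1 - X ^ 7) * F (2 * j + 7))) :=
      (NN.xpow _).mul (F_seven _)
    have h2 : NN (X ^ (3 * (2 * j + 7) + 7) * S fun b => p b * ((1 - Q ^ j) * p (b + (2 * j + 7)))) :=
      (NN.xpow _).mul (S_NN fun b => (p_NN _).mul (p1_NN (by omega)))
    have h := h1.add h2
    convert h using 1
    rw [show (fun b => p b * ((1 - Q ^ j) * p (b + (2 * j + 7)))) =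
      fun b => (1 - Q ^ j) * (p b * p (b + (2 * j + 7))) by funext b; ring, S_mul, ← F, Q_pow]
    ring

theorem F_one : F 1 = (1 - Q ^ 2) * F 2 + X ^ 7 * (Q ^ 2 * F 3) := by
  have h1 := S_shift fun b => p b * p (b + 1)
  have h2 := S_shift fun b => p b * p (b + 2)
  have h3 : S (fun b => p (b + 1) * p (b + 1 + 1)) =
      S (fun b => (1 - Q ^ 2) * (p (b + 1) * p (b + 1 + 2)) + Q ^ 2 * (p b * p (b + 3))) := by
    congr 1
    funext b
    have a := p_rel b
    have c : p (b + 1 + 1) = (1 - Q ^ (b + 3)) * p (b + 3) := p_rel (b + 2)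
    rw [c, a, show b + 1 + 2 = b + 3 by ring]
    ring
  rw [S_add, S_mul, S_mul, ← F] at h3
  rw [F, h1, h3, show F 2 = _ from h2]
  have e : p (0 + 1) = (1 - Q ^ 2) * p (0 + 2) := p_rel 1
  rw [e]
  ring

/-! ### The main decomposition -/

/-- Auxiliary sequence for difference two. -/
noncomputable def y (b : ℕ) : ℤ⟦X⟧ := (1 - Q) * (p b * p (b + 2))

/-- Auxiliary sequence for difference three. -/
noncomputable def z (b : ℕ) : ℤ⟦X⟧ := (1 - Q) * (p b * p (b + 3))

/-- Auxiliary sequence for difference four. -/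
noncomputable def ee (b : ℕ) : ℤ⟦X⟧ := (1 - Q ^ 2) * (p b * p (b + 4))

/-- Three-term combination of `y`. -/
noncomputable def ell (b : ℕ) : ℤ⟦X⟧ :=
  (1 - Q) * (p b * p (b + 2) - Q ^ 3 * (p (b + 1) * p (b + 3)) + Q ^ 6 * (p (b + 2) * p (b + 4)))

/-- Three-term combination of `z`. -/
noncomputable def mm (b : ℕ) : ℤ⟦X⟧ :=
  (1 - Q) * (p b * p (b + 3) - Q ^ 3 * (p (b + 1) * p (b + 4)) + Q ^ 5 * (p (b + 2) * p (b + 5)))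

theorem S_three (a f : ℕ → ℤ⟦X⟧) (c1 c2 : ℤ⟦X⟧)
    (h : ∀ b, a b = f b + ((-c1) * f (b + 1) + c2 * f (b + 2))) :
    S a = S f - c1 * S (fun b => f (b + 1)) + c2 * S (fun b => f (b + 2)) := by
  rw [show a = fun b => f b + ((-c1) * f (b + 1) + c2 * f (b + 2)) from funext h,
    S_add, S_add, S_mul, S_mul]
  ring

theorem S_shift2 (f : ℕ → ℤ⟦X⟧) :
    S f = f 0 + X ^ 7 * f 1 + X ^ 14 * S (fun b => f (b + 2)) := by
  rw [S_shift f, S_shift fun b => f (b + 1)]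
  simp only [zero_add, add_assoc]
  norm_num
  ring

theorem S_shift3 (f : ℕ → ℤ⟦X⟧) :
    S f = f 0 + X ^ 7 * f 1 + X ^ 14 * f 2 + X ^ 21 * S (fun b => f (b + 3)) := by
  rw [S_shift2 f, S_shift fun b => f (b + 2)]
  simp only [zero_add, add_assoc]
  norm_num
  ring

theorem rest_NN : NN (S (fun b => z (b + 1)) - X ^ 2 * (1 - X ^ 2) * F 5) := by
  have h : S (fun b => z (b + 1)) - X ^ 2 * (1 - X ^ 2) * F 5 = S fun b =>
      ((1 - Q ^ 1) * p (b + 1)) * ((1 - Q ^ 1) * p (b + 5)) +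
      Q ^ (b + 2) * (((1 - Q ^ 1) * p (b + 1)) * ((1 - Q ^ 3) * p (b + 5))) := by
    rw [show X ^ 2 * (1 - X ^ 2) * F 5 = S fun b => (X ^ 2 * (1 - X ^ 2)) * (p b * p (b + 5)) by
      rw [S_mul, F]]
    rw [sub_eq_iff_eq_add, ← S_add]
    congr 1
    funext b
    have a := p_rel b
    have c : p (b + 1 + 3) = (1 - Q ^ (b + 5)) * p (b + 5) := p_rel (b + 4)
    rw [z, c, a, show (X : ℤ⟦X⟧) ^ 2 = Q from rfl]
    ring
  rw [h]
  exact S_NN fun b => ((p1_NN (by omega)).mul (p1_NN (by omega))).add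
    ((Q_NN _).mul ((p1_NN (by omega)).mul (p1_NN (by omega))))

/-- The first five terms. -/
noncomputable def T5 : ℤ⟦X⟧ := ∑ d ∈ Finset.range 5, (X ^ (3 * (d + 1)) - X ^ (4 * (d + 1))) * F (d + 1)

theorem T5_eq : ∃ N, NN N ∧ T5 = (X ^ 9 + X ^ 10) * geo 2 - X ^ 4 - X ^ 8 + N := by
  have hO := O1_NN
  have hE := E1_NN
  have hl2 : NN (ell 2) := l2_NN
  have hm1 : NN (mm 1) := m1_NN
  have hm2 : NN (mm 2) := m2_NN
  have hl3 : NN (S fun b => ell (b + 3)) := S_NN fun b => pos_ell b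
  have hm3 : NN (S fun b => mm (b + 3)) := S_NN fun b => pos_m b
  have he2 : NN (S fun b => ee (b + 2)) := S_NN fun b => by
    have : ee (b + 2) = p (b + 2) * ((1 - Q ^ 2) * p (b + 2 + 4)) := by rw [ee]; ring
    rw [this]
    exact (p_NN _).mul (p1_NN (by omega))
  have hf := F_seven 5
  have hr := rest_NN
  have tot := (((((((((((NN.xpow 3).mul hO).add ((NN.xpow 4).mul hE)).add
    ((NN.xpow 19).mul hl2)).add ((NN.xpow 20).mul hm1)).add ((NN.xpow 27).mul hm2)).add
    ((NN.xpow 26).mul hl3)).add ((NN.xpow 34).mul hm3)).add ((NN.xpow 26).mul he2)).add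
    ((NN.xpow 15).mul hf)).add ((NN.xpow 18).mul hr))
  refine ⟨_, tot, ?_⟩
  have F1 := F_one
  have Fy : S y = (1 - Q) * F 2 := S_mul _ _
  have Fz : S z = (1 - Q) * F 3 := S_mul _ _
  have Fe : S ee = (1 - Q ^ 2) * F 4 := S_mul _ _
  have Sl : S ell = S y - Q ^ 3 * S (fun b => y (b + 1)) + Q ^ 6 * S (fun b => y (b + 2)) :=
    S_three _ _ _ _ fun b => by
      simp only [ell, y, add_assoc]; norm_num; ring
  have Sm : S mm = S z - Q ^ 3 * S (fun b => z (b + 1)) + Q ^ 5 * S (fun b => z (b + 2)) :=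
    S_three _ _ _ _ fun b => by
      simp only [mm, z, add_assoc]; norm_num; ring
  have y1 := S_shift y
  have y2 := S_shift2 y
  have z1 := S_shift z
  have z2 := S_shift2 z
  have l3 := S_shift3 ell
  have m3 := S_shift3 mm
  have e2 := S_shift2 ee
  have p0 : p 0 = 1 := rfl
  have p1 : p 1 = geo 2 := by rw [p_succ, p0, one_mul]
  have ey0 : y 0 = (1 - Q) * (p 0 * p 2) := rfl
  have ey1 : y 1 = (1 - Q) * (p 1 * p 3) := rfl
  have ez0 : z 0 = (1 - Q) * (p 0 * p 3) := rfl
  have ez1 : z 1 = (1 - Q) * (p 1 * p 4) := rfl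
  have ee0 : ee 0 = (1 - Q ^ 2) * (p 0 * p 4) := rfl
  have ee1 : ee 1 = (1 - Q ^ 2) * (p 1 * p 5) := rfl
  have el0 : ell 0 = (1 - Q) * (p 0 * p 2 - Q ^ 3 * (p 1 * p 3) + Q ^ 6 * (p 2 * p 4)) := rfl
  have el1 : ell 1 = (1 - Q) * (p 1 * p 3 - Q ^ 3 * (p 2 * p 4) + Q ^ 6 * (p 3 * p 5)) := rfl
  have em0 : mm 0 = (1 - Q) * (p 0 * p 3 - Q ^ 3 * (p 1 * p 4) + Q ^ 5 * (p 2 * p 5)) := rfl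
  rw [← ey0, ← ey1, ← ez0, ← ez1, ← ee0, ← ee1, ← el0, ← el1, ← em0, p1, p0]
  have hQ : Q = X ^ 2 := rfl
  rw [hQ] at F1 Fy Fz Fe Sl Sm ⊢
  have hT : T5 = (X ^ 3 - X ^ 4) * F 1 + (X ^ 6 - X ^ 8) * F 2 + (X ^ 9 - X ^ 12) * F 3
      + (X ^ 12 - X ^ 16) * F 4 + (X ^ 15 - X ^ 20) * F 5 := by
    simp only [T5, Finset.sum_range_succ, Finset.sum_range_zero]
    norm_num
  clear tot hO hE hl2 hm1 hm2 hl3 hm3 he2 hf hr ey0 ey1 ez0 ez1 ee0 ee1 el0 el1 em0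
  have step1 : T5 = X ^ 3 * (1 - X + X ^ 2) * S y + X ^ 9 * (1 - X ^ 3 + X ^ 4) * S z
      + X ^ 11 * S z + X ^ 12 * S ee + (X ^ 15 - X ^ 20) * F 5 := by
    rw [hT, F1, Fy, Fz, Fe]; ring
  have step2 : X ^ 3 * (1 - X + X ^ 2) * S y = X ^ 3 * y 0 - X ^ 4 * y 0 + X ^ 10 * y 1
      + X ^ 5 * S ell := by
    linear_combination X ^ 3 * y2 - X ^ 4 * y1 - X ^ 5 * Sl
  have step3 : X ^ 9 * (1 - X ^ 3 + X ^ 4) * S z = X ^ 9 * z 0 - X ^ 12 * z 0 + X ^ 16 * z 1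
      + X ^ 13 * S mm := by
    linear_combination X ^ 9 * z2 - X ^ 12 * z1 - X ^ 13 * Sm
  linear_combination step1 + step2 + step3 + X ^ 5 * l3 + X ^ 13 * m3 + X ^ 12 * e2 + X ^ 11 * z1

theorem T5_coeff (n : ℕ) (hn : 8 < n) : 1 ≤ coeff n T5 := by
  obtain ⟨N, hN, h⟩ := T5_eq
  have h4 : n ≠ 4 := by omega
  have h8 : n ≠ 8 := by omega
  have := hN n
  rw [h, map_add, map_sub, map_sub, coeff_X_pow, coeff_X_pow, if_neg h4, if_neg h8, add_mul,
    map_add, coeff_X_pow_mul', coeff_X_pow_mul', if_pos (by omega), geo, coeff_mk, coeff_mk]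
  rcases Nat.even_or_odd' n with ⟨k, rfl | rfl⟩
  · rw [if_neg (by omega), if_pos (by omega), if_pos (by omega)]; omega
  · rw [if_pos (by omega)]
    split_ifs <;> omega

theorem total_pos (n : ℕ) (hn : 8 < n) :
    1 ≤ coeff n (∑ d ∈ Finset.range (n + 1), (X ^ (3 * (d + 1)) - X ^ (4 * (d + 1))) * F (d + 1)) := by
  obtain ⟨k, hk⟩ : ∃ k, n + 1 = 5 + k := ⟨n - 4, by omega⟩
  rw [hk, Finset.sum_range_add, map_add]
  have h1 := T5_coeff n hn
  rw [T5] at h1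
  have h2 := NN.sum (Finset.range k)
    (fun d => (X ^ (3 * (5 + d + 1)) - X ^ (4 * (5 + d + 1))) * F (5 + d + 1))
    (fun d _ => F_big _ (by omega)) n
  linarith

/-! ### Counting -/

/-- Multisets with `a` members, all in `{r, r + 2, r + 4, ...}`, and sum `i`. -/
def V (r a i : ℕ) : Set (Multiset ℕ) :=
  {m | m.card = a ∧ m.sum = i ∧ ∀ x ∈ m, ∃ k, x = 2 * k + r}

theorem V_zero (r i : ℕ) : V r 0 i = if i = 0 then {0} else ∅ := by
  ext m
  simp only [V, Set.mem_ofPred_eq, Multiset.card_eq_zero]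
  split_ifs with h
  · simp only [Set.mem_singleton_iff]
    constructor
    · exact fun h => h.1
    · rintro rfl; simp [h]
  · simp only [Set.mem_empty_iff_false, iff_false]
    rintro ⟨rfl, h1, -⟩
    simp at h1; omega

theorem sum_map_two (m : Multiset ℕ) : (m.map (· + 2)).sum = m.sum + 2 * m.card := by
  induction m using Multiset.induction_on with
  | empty => simp
  | cons a s ih => simp only [Multiset.map_cons, Multiset.sum_cons, Multiset.card_cons, ih]; ring

theorem V_succ (r a i : ℕ) : V r (a + 1) i =
    (if r ≤ i then (Multiset.cons r) '' V r a (i - r) else ∅) ∪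
    (if 2 * (a + 1) ≤ i then (Multiset.map (· + 2)) '' V r (a + 1) (i - 2 * (a + 1)) else ∅) := by
  ext m
  simp only [Set.mem_union]
  constructor
  · rintro ⟨h1, h2, h3⟩
    by_cases hr : r ∈ m
    · left
      obtain ⟨t, rfl⟩ := Multiset.exists_cons_of_mem hr
      simp only [Multiset.card_cons, Multiset.sum_cons, Multiset.mem_cons] at h1 h2 h3
      rw [if_pos (by omega)]
      exact ⟨t, ⟨by omega, by omega, fun x hx => h3 x (Or.inr hx)⟩, rfl⟩
    · right
      have h4 : ∀ x ∈ m, ∃ k, x = 2 * k + r + 2 := by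
        intro x hx
        obtain ⟨k, hk⟩ := h3 x hx
        rcases k with _ | k
        · exfalso; apply hr; rw [hk] at hx; simpa using hx
        · exact ⟨k, by omega⟩
      have h5 : (m.map (· - 2)).map (· + 2) = m := by
        rw [Multiset.map_map]
        conv_rhs => rw [← Multiset.map_id m]
        apply Multiset.map_congr rfl
        intro x hx
        obtain ⟨k, hk⟩ := h4 x hx
        simp only [Function.comp, id]; omega
      have h6 := sum_map_two (m.map (· - 2))
      rw [h5, Multiset.card_map, h1, h2] at h6
      rw [if_pos (by omega)]
      refine ⟨m.map (· - 2), ⟨by rw [Multiset.card_map, h1], by omega, ?_⟩, h5⟩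
      intro x hx
      obtain ⟨w, hw, rfl⟩ := Multiset.mem_map.mp hx
      obtain ⟨k, hk⟩ := h4 w hw
      exact ⟨k, by omega⟩
  · rintro (h | h)
    · split_ifs at h with hr
      · obtain ⟨t, ⟨h1, h2, h3⟩, rfl⟩ := h
        refine ⟨by simp [h1], by simp only [Multiset.sum_cons]; omega, ?_⟩
        intro x hx
        rcases Multiset.mem_cons.mp hx with rfl | hx
        · exact ⟨0, by omega⟩
        · exact h3 x hx
      · exact h.elim
    · split_ifs at h with hr
      · obtain ⟨t, ⟨h1, h2, h3⟩, rfl⟩ := h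
        refine ⟨by rw [Multiset.card_map, h1], by rw [sum_map_two, h1, h2]; omega, ?_⟩
        intro x hx
        obtain ⟨w, hw, rfl⟩ := Multiset.mem_map.mp hx
        obtain ⟨k, hk⟩ := h3 w hw
        exact ⟨k + 1, by omega⟩
      · exact h.elim

theorem V_finite (r a i : ℕ) : (V r a i).Finite := by
  induction a generalizing i with
  | zero => rw [V_zero]; split_ifs <;> simp
  | succ a ih =>
    induction i using Nat.strong_induction_on with
    | _ i ih2 =>
      rw [V_succ]
      apply Set.Finite.union
      · split_ifs
        · exact (ih _).image _
        · exact Set.finite_empty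
      · split_ifs
        · exact (ih2 _ (by omega)).image _
        · exact Set.finite_empty

theorem V_card_succ (r a i : ℕ) : (V r (a + 1) i).ncard =
    (if r ≤ i then (V r a (i - r)).ncard else 0) +
    (if 2 * (a + 1) ≤ i then (V r (a + 1) (i - 2 * (a + 1))).ncard else 0) := by
  rw [V_succ, Set.ncard_union_eq ?_ ?_ ?_]
  · congr 1
    · split_ifs
      · exact Set.ncard_image_of_injective _ fun s t h => (Multiset.cons_inj_right r).mp h
      · exact Set.ncard_empty _
    · split_ifs
      · exact Set.ncard_image_of_injective _ (Multiset.map_injective (add_left_injective 2))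
      · exact Set.ncard_empty _
  · rw [Set.disjoint_left]
    intro m h1 h2
    split_ifs at h1 h2 with ha hb
    · obtain ⟨s, hs, rfl⟩ := h1
      obtain ⟨t, ht, hst⟩ := h2
      have : r ∈ Multiset.map (· + 2) t := by rw [hst]; exact Multiset.mem_cons_self _ _
      obtain ⟨w, hw, hwr⟩ := Multiset.mem_map.mp this
      obtain ⟨k, hk⟩ := ht.2.2 w hw
      omega
    · exact h2
    · exact h1
    · exact h1
  · split_ifs
    · exact (V_finite _ _ _).image _
    · exact Set.finite_empty
  · split_ifs
    · exact (V_finite _ _ _).image _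
    · exact Set.finite_empty

/-- Generating series of `V r a`. -/
noncomputable def vser (r a : ℕ) : ℤ⟦X⟧ := PowerSeries.mk fun i => ((V r a i).ncard : ℤ)

theorem vser_eq (r a : ℕ) : vser r a = X ^ (r * a) * p a := by
  induction a with
  | zero =>
    ext i
    rw [vser, coeff_mk, V_zero, p_zero, mul_zero, pow_zero, mul_one, coeff_one]
    split_ifs <;> simp
  | succ a ih =>
    have h : vser r (a + 1) = X ^ r * vser r a + X ^ (2 * (a + 1)) * vser r (a + 1) := by
      ext i
      rw [map_add, coeff_X_pow_mul', coeff_X_pow_mul']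
      simp only [vser, coeff_mk]
      rw [V_card_succ]
      push_cast
      rfl
    have g := qgeo a
    rw [Q_pow] at g
    rw [ih] at h
    rw [p_succ]
    linear_combination geo (2 * (a + 1)) * h - vser r (a + 1) * g

/-- Partitions with prescribed numbers of odd and even parts. -/
def A (n a b : ℕ) : Finset n.Partition :=
  Finset.univ.filter fun l => (1 ∉ l.parts ∧ 2 ∉ l.parts) ∧ l.oddCount = a ∧ l.evenCount = b

theorem mem_A {n a b : ℕ} (l : n.Partition) : l ∈ A n a b ↔
    (1 ∉ l.parts ∧ 2 ∉ l.parts) ∧ l.oddCount = a ∧ l.evenCount = b := by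
  simp only [A, Finset.mem_filter, Finset.mem_univ, true_and]

theorem split_parts (m : Multiset ℕ) :
    m.filter (fun x => x % 2 = 1) + m.filter (fun x => x % 2 = 0) = m := by
  have h := Multiset.filter_add_not (fun x : ℕ => x % 2 = 1) m
  have h2 : m.filter (fun x => ¬ x % 2 = 1) = m.filter (fun x => x % 2 = 0) :=
    Multiset.filter_congr fun x _ => by omega
  rwa [h2] at h

theorem A_card (n a b : ℕ) : ((A n a b).card : ℤ) = coeff n (X ^ (3 * a + 4 * b) * (p a * p b)) := by
  have h : X ^ (3 * a + 4 * b) * (p a * p b) = vser 3 a * vser 4 b := by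
    rw [vser_eq, vser_eq]; ring
  rw [h, coeff_mul]
  simp only [vser, coeff_mk]
  have h2 : (A n a b).card = ((Finset.HasAntidiagonal.antidiagonal n).sigma fun x =>
      (V_finite 3 a x.1).toFinset ×ˢ (V_finite 4 b x.2).toFinset).card := by
    refine Finset.card_bij (fun l _ => ⟨((l.parts.filter (fun x => x % 2 = 1)).sum,
      (l.parts.filter (fun x => x % 2 = 0)).sum), (l.parts.filter (fun x => x % 2 = 1),
      l.parts.filter (fun x => x % 2 = 0))⟩) ?_ ?_ ?_
    · intro l hl
      simp only [A, Finset.mem_filter, Finset.mem_univ, true_and] at hl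
      obtain ⟨⟨h1, h2⟩, h3, h4⟩ := hl
      simp only [Finset.mem_sigma, Finset.HasAntidiagonal.mem_antidiagonal, Finset.mem_product,
        Set.Finite.mem_toFinset]
      refine ⟨?_, ⟨h3, rfl, ?_⟩, ⟨h4, rfl, ?_⟩⟩
      · rw [← Multiset.sum_add, split_parts, l.parts_sum]
      · intro x hx
        rw [Multiset.mem_filter] at hx
        have : x ≠ 1 := fun h => h1 (h ▸ hx.1)
        exact ⟨(x - 3) / 2, by omega⟩
      · intro x hx
        rw [Multiset.mem_filter] at hx
        have : x ≠ 2 := fun h => h2 (h ▸ hx.1)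
        have := l.parts_pos hx.1
        exact ⟨(x - 4) / 2, by omega⟩
    · intro l _ l' _ hll
      simp only [Sigma.mk.injEq, Prod.mk.injEq] at hll
      have h5 := eq_of_heq hll.2
      simp only [Prod.mk.injEq] at h5
      apply Nat.Partition.ext
      rw [← split_parts l.parts, ← split_parts l'.parts, h5.1, h5.2]
    · rintro ⟨⟨i, j⟩, ⟨s, t⟩⟩ hx
      simp only [Finset.mem_sigma, Finset.HasAntidiagonal.mem_antidiagonal, Finset.mem_product,
        Set.Finite.mem_toFinset] at hx
      obtain ⟨hij, ⟨hs1, hs2, hs3⟩, ⟨ht1, ht2, ht3⟩⟩ := hx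
      have e1 : (s + t).filter (fun x => x % 2 = 1) = s := by
        rw [Multiset.filter_add, Multiset.filter_eq_self.mpr, Multiset.filter_eq_nil.mpr, add_zero]
        · intro x hx; obtain ⟨k, rfl⟩ := ht3 x hx; omega
        · intro x hx; obtain ⟨k, rfl⟩ := hs3 x hx; omega
      have e2 : (s + t).filter (fun x => x % 2 = 0) = t := by
        rw [Multiset.filter_add, Multiset.filter_eq_nil.mpr, Multiset.filter_eq_self.mpr, zero_add]
        · intro x hx; obtain ⟨k, rfl⟩ := ht3 x hx; omega
        · intro x hx; obtain ⟨k, rfl⟩ := hs3 x hx; omega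
      have big : ∀ x ∈ s + t, 3 ≤ x := by
        intro x hx
        rcases Multiset.mem_add.mp hx with hx | hx
        · obtain ⟨k, rfl⟩ := hs3 x hx; omega
        · obtain ⟨k, rfl⟩ := ht3 x hx; omega
      refine ⟨⟨s + t, fun {x} hx => by have := big x hx; omega, by
        rw [Multiset.sum_add, hs2, ht2, hij]⟩, ?_, ?_⟩
      · rw [mem_A]
        simp only [Nat.Partition.oddCount, Nat.Partition.evenCount]
        refine ⟨⟨fun h => ?_, fun h => ?_⟩, ?_, ?_⟩
        · have := big _ h; omega
        · have := big _ h; omega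
        · rw [e1, hs1]
        · rw [e2, ht1]
      · simp only [e1, e2, hs2, ht2]
  rw [h2, Finset.card_sigma]
  push_cast
  refine Finset.sum_congr rfl fun x _ => ?_
  rw [Finset.card_product, Set.ncard_eq_toFinset_card _ (V_finite 3 a x.1),
    Set.ncard_eq_toFinset_card _ (V_finite 4 b x.2)]
  push_cast
  rfl

theorem card_parts_le {n : ℕ} (l : n.Partition) : l.parts.card ≤ n := by
  have := Multiset.card_nsmul_le_sum (s := l.parts) (a := 1) fun x hx => l.parts_pos hx
  rw [l.parts_sum] at this
  simpa using this

theorem odd_le {n : ℕ} (l : n.Partition) : l.oddCount ≤ n :=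
  (Multiset.card_le_card (Multiset.filter_le _ _)).trans (card_parts_le l)

theorem even_le {n : ℕ} (l : n.Partition) : l.evenCount ≤ n :=
  (Multiset.card_le_card (Multiset.filter_le _ _)).trans (card_parts_le l)

theorem card_odd (n : ℕ) :
    Nat.card {l : n.Partition // (1 ∉ l.parts ∧ 2 ∉ l.parts) ∧ l.evenCount < l.oddCount} =
    ∑ d ∈ Finset.range (n + 1), ∑ b ∈ Finset.range (n + 1), (A n (b + d + 1) b).card := by
  rw [Nat.card_eq_fintype_card, Fintype.card_subtype, ← Finset.sum_product']
  rw [Finset.card_eq_sum_card_fiberwise (t := Finset.range (n + 1) ×ˢ Finset.range (n + 1))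
    (f := fun l => (l.oddCount - l.evenCount - 1, l.evenCount))]
  · refine Finset.sum_congr rfl fun x _ => ?_
    congr 1
    ext l
    rw [mem_A]
    simp only [Finset.mem_filter, Finset.mem_univ, true_and, Prod.ext_iff]
    constructor
    · rintro ⟨⟨h1, h2⟩, h3, h4⟩
      exact ⟨h1, by omega, by omega⟩
    · rintro ⟨h1, h3, h4⟩
      exact ⟨⟨h1, by omega⟩, by omega, by omega⟩
  · intro l _
    have := odd_le l
    have := even_le l
    simp only [Finset.coe_product, Set.mem_prod, Finset.mem_coe, Finset.mem_range]
    omega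

theorem card_even (n : ℕ) :
    Nat.card {l : n.Partition // (1 ∉ l.parts ∧ 2 ∉ l.parts) ∧ l.oddCount < l.evenCount} =
    ∑ d ∈ Finset.range (n + 1), ∑ b ∈ Finset.range (n + 1), (A n b (b + d + 1)).card := by
  rw [Nat.card_eq_fintype_card, Fintype.card_subtype, ← Finset.sum_product']
  rw [Finset.card_eq_sum_card_fiberwise (t := Finset.range (n + 1) ×ˢ Finset.range (n + 1))
    (f := fun l => (l.evenCount - l.oddCount - 1, l.oddCount))]
  · refine Finset.sum_congr rfl fun x _ => ?_
    congr 1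
    ext l
    rw [mem_A]
    simp only [Finset.mem_filter, Finset.mem_univ, true_and, Prod.ext_iff]
    constructor
    · rintro ⟨⟨h1, h2⟩, h3, h4⟩
      exact ⟨h1, by omega, by omega⟩
    · rintro ⟨h1, h3, h4⟩
      exact ⟨⟨h1, by omega⟩, by omega, by omega⟩
  · intro l _
    have := odd_le l
    have := even_le l
    simp only [Finset.coe_product, Set.mem_prod, Finset.mem_coe, Finset.mem_range]
    omega

theorem coeff_F (n c d : ℕ) : coeff n (X ^ c * F d) =
    ∑ b ∈ Finset.range (n + 1), coeff n (X ^ (7 * b + c) * (p b * p (b + d))) := by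
  rw [F, ← S_mul, coeff_S _ (Nat.lt_succ_self n)]
  refine Finset.sum_congr rfl fun b _ => ?_
  rw [pow_add, mul_assoc]

end OddEven

/-- For every integer `n > 8`, among partitions of `n` with no part equal to `1` or `2`,
those with more odd parts than even parts outnumber those with more even parts than
odd parts. -/
theorem po_gt_pe_no_one_two (n : ℕ) (hn : 8 < n) :
    Nat.card {l : n.Partition // (1 ∉ l.parts ∧ 2 ∉ l.parts) ∧ l.evenCount < l.oddCount} >
      Nat.card {l : n.Partition // (1 ∉ l.parts ∧ 2 ∉ l.parts) ∧ l.oddCount < l.evenCount} := by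
  have h := OddEven.total_pos n hn
  rw [OddEven.card_odd, OddEven.card_even]
  zify
  simp only [OddEven.A_card]
  rw [map_sum] at h
  simp only [sub_mul, map_sub, OddEven.coeff_F, Finset.sum_sub_distrib] at h
  have e1 : ∀ d b, (PowerSeries.X : PowerSeries ℤ) ^ (3 * (b + d + 1) + 4 * b) *
      (OddEven.p (b + d + 1) * OddEven.p b) =
      PowerSeries.X ^ (7 * b + 3 * (d + 1)) * (OddEven.p b * OddEven.p (b + (d + 1))) := by
    intro d b
    rw [← add_assoc b d 1]; ring
  have e2 : ∀ d b, (PowerSeries.X : PowerSeries ℤ) ^ (3 * b + 4 * (b + d + 1)) *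
      (OddEven.p b * OddEven.p (b + d + 1)) =
      PowerSeries.X ^ (7 * b + 4 * (d + 1)) * (OddEven.p b * OddEven.p (b + (d + 1))) := by
    intro d b
    rw [← add_assoc b d 1]; ring
  simp only [e1, e2]
  linarith
end

section
/- For every even integer n with n ≥ 14, the following inequality holds: Σ_{k=1}^{(n-6)/2} ⌊(n-2k-2)/4⌋ > 1 + Σ_{k=1}^{⌊(n-2)/6⌋} ⌊(n-6k+2)/4⌋ + Σ_{k=1}^{⌊(n-6)/6⌋} ⌊(n-6k-2)/4⌋. -/
theorem sum_shift_aux (f : ℕ → ℕ) (m : ℕ) :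
    ∑ k ∈ Finset.Icc 1 (m + 1), f k = f 1 + ∑ k ∈ Finset.Icc 1 m, f (k + 1) := by
  induction m with
  | zero => simp
  | succ m ih =>
    rw [Finset.sum_Icc_succ_top (by omega), ih, Finset.sum_Icc_succ_top (by omega)]
    ring

theorem stepA (n : ℕ) (hn : 6 ≤ n) :
    ∑ k ∈ Finset.Icc 1 ((n + 2 - 6) / 2), (n + 2 - 2 * k - 2) / 4
      = (n - 2) / 4 + ∑ k ∈ Finset.Icc 1 ((n - 6) / 2), (n - 2 * k - 2) / 4 := by
  have h : (n + 2 - 6) / 2 = (n - 6) / 2 + 1 := by omega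
  rw [h, sum_shift_aux]
  congr 1
  refine Finset.sum_congr rfl fun k _ => ?_
  congr 1
  omega

theorem stepB (n : ℕ) (hn : 6 ≤ n) :
    ∑ k ∈ Finset.Icc 1 ((n + 6 - 2) / 6), (n + 6 - 6 * k + 2) / 4
      = (n + 2) / 4 + ∑ k ∈ Finset.Icc 1 ((n - 2) / 6), (n - 6 * k + 2) / 4 := by
  have h : (n + 6 - 2) / 6 = (n - 2) / 6 + 1 := by omega
  rw [h, sum_shift_aux]
  congr 1
  refine Finset.sum_congr rfl fun k _ => ?_
  congr 1
  omega

theorem stepC (n : ℕ) (hn : 6 ≤ n) :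
    ∑ k ∈ Finset.Icc 1 ((n + 6 - 6) / 6), (n + 6 - 6 * k - 2) / 4
      = (n - 2) / 4 + ∑ k ∈ Finset.Icc 1 ((n - 6) / 6), (n - 6 * k - 2) / 4 := by
  have h : (n + 6 - 6) / 6 = (n - 6) / 6 + 1 := by omega
  rw [h, sum_shift_aux]
  congr 1
  refine Finset.sum_congr rfl fun k _ => ?_
  congr 1
  omega

/-- For every even integer `n ≥ 14`,
`Σ_{k=1}^{(n-6)/2} ⌊(n-2k-2)/4⌋ > 1 + Σ_{k=1}^{⌊(n-2)/6⌋} ⌊(n-6k+2)/4⌋ +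
Σ_{k=1}^{⌊(n-6)/6⌋} ⌊(n-6k-2)/4⌋`.  (All quantities appearing under the floors are
nonnegative in the given ranges, so natural-number division faithfully encodes the
floors.) -/
theorem sum_ineq_even (n : ℕ) (hev : Even n) (hn : 14 ≤ n) :
    ∑ k ∈ Finset.Icc 1 ((n - 6) / 2), (n - 2 * k - 2) / 4 >
      1 + ∑ k ∈ Finset.Icc 1 ((n - 2) / 6), (n - 6 * k + 2) / 4
        + ∑ k ∈ Finset.Icc 1 ((n - 6) / 6), (n - 6 * k - 2) / 4 := by
  induction n using Nat.strong_induction_on with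
  | _ n ih =>
    by_cases h20 : n < 20
    · interval_cases n <;> first | decide | (exact absurd hev (by decide))
    · obtain ⟨m, rfl⟩ : ∃ m, n = m + 6 := ⟨n - 6, by omega⟩
      have hm : Even m := by
        rw [Nat.even_iff] at hev ⊢
        omega
      have h := ih m (by omega) hm (by omega)
      have a1 := stepA m (by omega)
      have a2 := stepA (m + 2) (by omega)
      have a3 := stepA (m + 2 + 2) (by omega)
      have e : m + 2 + 2 + 2 = m + 6 := by ring
      rw [e] at a3
      rw [a3, a2, a1, stepB m (by omega), stepC m (by omega)]
      omega
end

section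
/- For every odd positive integer n, the number of partitions λ of n having exactly two even parts, all odd parts equal to 1, and more odd parts than even parts equals Σ_{k=1}^{(n-5)/2} ⌊(n-2k-1)/4⌋ (an empty sum being 0). -/
/-- The multiset with even parts `2a`, `n-2k-1-2a` and `2k+1` ones. -/
def poParts (n k a : ℕ) : Multiset ℕ :=
  Multiset.replicate (2 * k + 1) 1 + {2 * a, n - 2 * k - 1 - 2 * a}

theorem poParts_odd (n k a : ℕ) (h : (n - 2 * k - 1 - 2 * a) % 2 = 0) :
    (poParts n k a).filter (fun p => p % 2 = 1) = Multiset.replicate (2 * k + 1) 1 := by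
  have h1 : (Multiset.replicate (2 * k + 1) 1).filter (fun p => p % 2 = 1)
      = Multiset.replicate (2 * k + 1) 1 := by
    rw [Multiset.filter_eq_self]
    intro p hp
    rw [Multiset.eq_of_mem_replicate hp]
  have h2 : ({2 * a, n - 2 * k - 1 - 2 * a} : Multiset ℕ).filter (fun p => p % 2 = 1) = 0 := by
    rw [Multiset.filter_eq_nil]
    intro p hp
    simp only [Multiset.insert_eq_cons, Multiset.mem_cons, Multiset.mem_singleton] at hp
    omega
  rw [poParts, Multiset.filter_add, h1, h2, add_zero]

theorem poParts_even (n k a : ℕ) (h : (n - 2 * k - 1 - 2 * a) % 2 = 0) :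
    (poParts n k a).filter (fun p => p % 2 = 0) = {2 * a, n - 2 * k - 1 - 2 * a} := by
  have h1 : (Multiset.replicate (2 * k + 1) 1).filter (fun p => p % 2 = 0) = 0 := by
    rw [Multiset.filter_eq_nil]
    intro p hp
    rw [Multiset.eq_of_mem_replicate hp]
    decide
  have h2 : ({2 * a, n - 2 * k - 1 - 2 * a} : Multiset ℕ).filter (fun p => p % 2 = 0)
      = {2 * a, n - 2 * k - 1 - 2 * a} := by
    rw [Multiset.filter_eq_self]
    intro p hp
    simp only [Multiset.insert_eq_cons, Multiset.mem_cons, Multiset.mem_singleton] at hp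
    omega
  rw [poParts, Multiset.filter_add, h1, h2, zero_add]

/-- The index set. -/
def poIdx (n : ℕ) : Finset (Σ _ : ℕ, ℕ) :=
  (Finset.Icc 1 ((n - 5) / 2)).sigma (fun k => Finset.Icc 1 ((n - 2 * k - 1) / 4))

theorem mem_poIdx (n : ℕ) (x : Σ _ : ℕ, ℕ) : x ∈ poIdx n ↔
    (1 ≤ x.1 ∧ x.1 ≤ (n - 5) / 2) ∧ 1 ≤ x.2 ∧ x.2 ≤ (n - 2 * x.1 - 1) / 4 := by
  simp [poIdx]

/-- For every odd positive integer `n`, the number of partitions of `n` having exactly two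
even parts, all odd parts equal to `1`, and more odd parts than even parts equals
`Σ_{k=1}^{(n-5)/2} ⌊(n-2k-1)/4⌋`. -/
theorem card_Po_bar_odd (n : ℕ) (hn : 0 < n) (hodd : Odd n) :
    Nat.card {l : n.Partition //
        l.evenCount = 2 ∧ (∀ p ∈ l.parts, p % 2 = 1 → p = 1) ∧ l.evenCount < l.oddCount} =
      ∑ k ∈ Finset.Icc 1 ((n - 5) / 2), (n - 2 * k - 1) / 4 := by
  have hmod : n % 2 = 1 := Nat.odd_iff.mp hodd
  have hc : (poIdx n).card = ∑ k ∈ Finset.Icc 1 ((n - 5) / 2), (n - 2 * k - 1) / 4 := by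
    simp [poIdx, Finset.card_sigma]
  have hc2 : Nat.card {x // x ∈ poIdx n} = (poIdx n).card := by simp
  have hev : ∀ x ∈ poIdx n, (n - 2 * x.1 - 1 - 2 * x.2) % 2 = 0 := by
    intro x hx
    rw [mem_poIdx] at hx
    omega
  rw [← hc, ← hc2]
  symm
  have hpos : ∀ x ∈ poIdx n, ∀ {p : ℕ}, p ∈ poParts n x.1 x.2 → 0 < p := by
    intro x hx p hp
    rw [mem_poIdx] at hx
    simp only [poParts, Multiset.mem_add, Multiset.insert_eq_cons, Multiset.mem_cons,
      Multiset.mem_singleton] at hp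
    rcases hp with hp | hp | hp
    · rw [Multiset.eq_of_mem_replicate hp]; exact one_pos
    · omega
    · omega
  have hsum : ∀ x ∈ poIdx n, (poParts n x.1 x.2).sum = n := by
    intro x hx
    rw [mem_poIdx] at hx
    simp only [poParts, Multiset.sum_add, Multiset.sum_replicate, Multiset.insert_eq_cons,
      Multiset.sum_cons, Multiset.sum_singleton, smul_eq_mul]
    omega
  refine Nat.card_eq_of_bijective (fun x : {x // x ∈ poIdx n} =>
    (⟨⟨poParts n x.1.1 x.1.2, hpos x.1 x.2, hsum x.1 x.2⟩, ?_, ?_, ?_⟩ : {l : n.Partition //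
        l.evenCount = 2 ∧ (∀ p ∈ l.parts, p % 2 = 1 → p = 1) ∧ l.evenCount < l.oddCount}))
    ⟨?_, ?_⟩
  · rw [Nat.Partition.evenCount, poParts_even _ _ _ (hev x.1 x.2)]
    rfl
  · intro p hp h1
    have : p ∈ (poParts n x.1.1 x.1.2).filter (fun p => p % 2 = 1) :=
      Multiset.mem_filter.mpr ⟨hp, h1⟩
    rw [poParts_odd _ _ _ (hev x.1 x.2)] at this
    exact Multiset.eq_of_mem_replicate this
  · rw [Nat.Partition.evenCount, Nat.Partition.oddCount, poParts_even _ _ _ (hev x.1 x.2),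
      poParts_odd _ _ _ (hev x.1 x.2), Multiset.card_replicate]
    have := (mem_poIdx n x.1).mp x.2
    simp only [Multiset.insert_eq_cons, Multiset.card_cons, Multiset.card_singleton]
    omega
  · rintro ⟨⟨k, a⟩, hx⟩ ⟨⟨k', a'⟩, hx'⟩ h
    have h : poParts n k a = poParts n k' a' :=
      congrArg (fun l => l.1.parts) h
    have ho := congrArg (fun s => (Multiset.filter (fun p => p % 2 = 1) s).card) h
    have he := congrArg (Multiset.filter (fun p => p % 2 = 0)) h
    simp only [poParts_odd _ _ _ (hev _ hx), poParts_odd _ _ _ (hev _ hx'),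
      Multiset.card_replicate] at ho
    rw [poParts_even _ _ _ (hev _ hx), poParts_even _ _ _ (hev _ hx')] at he
    have hk : k = k' := by omega
    subst hk
    have hm : 2 * a ∈ ({2 * a', n - 2 * k - 1 - 2 * a'} : Multiset ℕ) := by
      rw [← he]; simp
    simp only [Multiset.insert_eq_cons, Multiset.mem_cons, Multiset.mem_singleton] at hm
    rw [mem_poIdx] at hx hx'
    simp only at hx hx'
    have ha : a = a' := by omega
    subst ha
    rfl
  · rintro ⟨l, h2, h1, h3⟩
    have hsplit : l.parts.filter (fun p => p % 2 = 1) + l.parts.filter (fun p => p % 2 = 0)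
        = l.parts := by
      have := Multiset.filter_add_not (fun p => p % 2 = 1) l.parts
      simpa using this
    have hrep : l.parts.filter (fun p => p % 2 = 1) = Multiset.replicate l.oddCount 1 := by
      rw [Multiset.eq_replicate]
      refine ⟨rfl, fun p hp => ?_⟩
      rw [Multiset.mem_filter] at hp
      exact h1 p hp.1 hp.2
    have hxy : ∃ x y, x ≤ y ∧ l.parts.filter (fun p => p % 2 = 0) = {x, y} := by
      obtain ⟨x, y, hxy⟩ := Multiset.card_eq_two.mp h2
      rcases le_total x y with h | h
      · exact ⟨x, y, h, hxy⟩
      · exact ⟨y, x, h, by rw [hxy, Multiset.pair_comm]⟩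
    obtain ⟨x, y, hle, hxy⟩ := hxy
    have hx : x ∈ l.parts.filter (fun p => p % 2 = 0) := by rw [hxy]; simp
    have hy : y ∈ l.parts.filter (fun p => p % 2 = 0) := by rw [hxy]; simp
    rw [Multiset.mem_filter] at hx hy
    have hx0 := l.parts_pos hx.1
    have hs := l.parts_sum
    rw [← hsplit, hrep, hxy] at hs
    simp only [Multiset.sum_add, Multiset.sum_replicate, Multiset.insert_eq_cons,
      Multiset.sum_cons, Multiset.sum_singleton, smul_eq_mul] at hs
    rw [h2] at h3
    refine ⟨⟨⟨(l.oddCount - 1) / 2, x / 2⟩, ?_⟩, ?_⟩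
    · rw [mem_poIdx]
      simp only
      omega
    · apply Subtype.ext
      apply Nat.Partition.ext
      change poParts n ((l.oddCount - 1) / 2) (x / 2) = l.parts
      rw [← hsplit, hrep, hxy, poParts]
      have e1 : 2 * ((l.oddCount - 1) / 2) + 1 = l.oddCount := by omega
      have e2 : 2 * (x / 2) = x := by omega
      have e3 : n - 2 * ((l.oddCount - 1) / 2) - 1 - x = y := by omega
      rw [e1, e2, e3]
end

section
/- For every even positive integer n, the number of partitions λ of n such that the number of even parts exceeds the number of odd parts by exactly 1, the largest part is even, and at most two parts of λ are greater than 2, equals 1 + Σ_{k=1}^{⌊(n-2)/6⌋} ⌊(n-6k+2)/4⌋ + Σ_{k=1}^{⌊(n-6)/6⌋} ⌊(n-6k-2)/4⌋ (empty sums being 0). -/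
/-- The first family of partitions. -/
def famOne (n : ℕ) (x : (_ : ℕ) × ℕ) : Multiset ℕ :=
  Multiset.replicate (2 * x.1) 1 + Multiset.replicate (2 * x.1 - 1) 2
    + {2 * x.2, n - 6 * x.1 + 2 - 2 * x.2}

/-- The second family of partitions. -/
def famTwo (n : ℕ) (x : (_ : ℕ) × ℕ) : Multiset ℕ :=
  Multiset.replicate (2 * x.1 - 1) 1 + Multiset.replicate (2 * x.1) 2
    + {2 * x.2 + 1, n - 6 * x.1 - 2 * x.2}

/-- Index set of the first family. -/
def idxOne (n : ℕ) : Finset ((_ : ℕ) × ℕ) :=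
  (Finset.Icc 1 ((n - 2) / 6)).sigma (fun k => Finset.Icc 1 ((n - 6 * k + 2) / 4))

/-- Index set of the second family. -/
def idxTwo (n : ℕ) : Finset ((_ : ℕ) × ℕ) :=
  (Finset.Icc 1 ((n - 6) / 6)).sigma (fun k => Finset.Icc 1 ((n - 6 * k - 2) / 4))

/-- The condition on the multiset of parts. -/
def GoodParts (n : ℕ) (m : Multiset ℕ) : Prop :=
  (∀ x ∈ m, 0 < x) ∧ m.sum = n ∧
  (m.filter (fun p => p % 2 = 0)).card = (m.filter (fun p => p % 2 = 1)).card + 1 ∧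
  m.sup % 2 = 0 ∧ (m.filter (fun p => 2 < p)).card ≤ 2

theorem pair_eq_cases {a b c d : ℕ} (h : ({a, b} : Multiset ℕ) = {c, d}) :
    (a = c ∧ b = d) ∨ (a = d ∧ b = c) := by
  have h2 := h
  simp only [Multiset.insert_eq_cons, Multiset.cons_eq_cons] at h2
  rcases h2 with ⟨h1, h2⟩ | ⟨h1, cs, h2, h3⟩
  · left; exact ⟨h1, by simpa using h2⟩
  · right
    have e : cs = 0 := by
      have := congrArg Multiset.card h2
      simpa using this
    subst e
    simp at h2 h3
    exact ⟨h3.symm, h2⟩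

theorem decompose (m : Multiset ℕ) (h : ∀ x ∈ m, 0 < x) :
    m = Multiset.replicate (m.count 1) 1 + Multiset.replicate (m.count 2) 2
      + m.filter (fun p => 2 < p) := by
  ext x
  simp only [Multiset.count_add, Multiset.count_replicate, Multiset.count_filter]
  rcases Nat.lt_or_ge 2 x with hx | hx
  · rw [if_neg (by omega), if_neg (by omega), if_pos hx]; simp
  · interval_cases x
    · simp; intro h0; exact absurd (h 0 h0) (by simp)
    · simp
    · simp

theorem filter_rep (p : ℕ → Prop) [DecidablePred p] (k a : ℕ) :
    ((Multiset.replicate k a).filter p).card = if p a then k else 0 := by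
  split_ifs with h
  · rw [Multiset.filter_eq_self.2]
    · simp
    · intro x hx; rw [Multiset.eq_of_mem_replicate hx]; exact h
  · rw [Multiset.filter_eq_nil.2]
    · simp
    · intro x hx; rw [Multiset.eq_of_mem_replicate hx]; exact h

theorem filter_sing (p : ℕ → Prop) [DecidablePred p] (a : ℕ) :
    (({a} : Multiset ℕ).filter p).card = if p a then 1 else 0 := by
  split_ifs with h <;> simp [Multiset.filter_singleton, h]

theorem filter_pair (p : ℕ → Prop) [DecidablePred p] (a b : ℕ) :
    (({a, b} : Multiset ℕ).filter p).card = (if p a then 1 else 0) + (if p b then 1 else 0) := by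
  rw [Multiset.insert_eq_cons, ← Multiset.singleton_add, Multiset.filter_add, Multiset.card_add,
    filter_sing, filter_sing]

theorem sup_rep (k a : ℕ) :
    (Multiset.replicate k a).sup = if k = 0 then 0 else a := by
  induction k with
  | zero => simp
  | succ k ih => rw [Multiset.replicate_succ, Multiset.sup_cons, ih]; split_ifs <;> simp_all

theorem good_one {n : ℕ} (hev : n % 2 = 0) {x} (hx : x ∈ idxOne n) : GoodParts n (famOne n x) := by
  obtain ⟨k, t⟩ := x
  simp only [idxOne, Finset.mem_sigma, Finset.mem_Icc] at hx
  obtain ⟨⟨h1, h2⟩, h3, h4⟩ := hx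
  refine ⟨?_, ?_, ?_, ?_, ?_⟩
  · intro x hx
    simp only [famOne, Multiset.mem_add, Multiset.mem_replicate, Multiset.insert_eq_cons,
      Multiset.mem_cons, Multiset.mem_singleton] at hx
    omega
  · simp [famOne]; omega
  · have e1 : 2 * t % 2 = 0 := by omega
    have e2 : (n - 6 * k + 2 - 2 * t) % 2 = 0 := by omega
    simp only [famOne, Multiset.filter_add, Multiset.card_add, filter_rep, filter_pair, e1, e2]
    norm_num
    omega
  · simp only [famOne, Multiset.sup_add, sup_rep, Multiset.insert_eq_cons, Multiset.sup_cons,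
      Multiset.sup_singleton]
    split_ifs <;> simp only [Nat.max_def] <;> split_ifs <;> omega
  · simp only [famOne, Multiset.filter_add, Multiset.card_add, filter_rep, filter_pair]
    split_ifs <;> omega

theorem good_two {n : ℕ} (hev : n % 2 = 0) {x} (hx : x ∈ idxTwo n) : GoodParts n (famTwo n x) := by
  obtain ⟨k, t⟩ := x
  simp only [idxTwo, Finset.mem_sigma, Finset.mem_Icc] at hx
  obtain ⟨⟨h1, h2⟩, h3, h4⟩ := hx
  refine ⟨?_, ?_, ?_, ?_, ?_⟩
  · intro x hx
    simp only [famTwo, Multiset.mem_add, Multiset.mem_replicate, Multiset.insert_eq_cons,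
      Multiset.mem_cons, Multiset.mem_singleton] at hx
    omega
  · simp [famTwo]; omega
  · have e1 : (2 * t + 1) % 2 = 1 := by omega
    have e2 : (n - 6 * k - 2 * t) % 2 = 0 := by omega
    simp only [famTwo, Multiset.filter_add, Multiset.card_add, filter_rep, filter_pair, e1, e2]
    norm_num
    omega
  · simp only [famTwo, Multiset.sup_add, sup_rep, Multiset.insert_eq_cons, Multiset.sup_cons,
      Multiset.sup_singleton]
    split_ifs <;> simp only [Nat.max_def] <;> split_ifs <;> omega
  · simp only [famTwo, Multiset.filter_add, Multiset.card_add, filter_rep, filter_pair]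
    split_ifs <;> omega

theorem good_single {n : ℕ} (hn : 0 < n) (hev : n % 2 = 0) : GoodParts n {n} := by
  refine ⟨by simpa using hn, by simp, ?_, by simpa using hev, ?_⟩
  · simp only [filter_sing]; split_ifs <;> omega
  · simp only [filter_sing]; split_ifs <;> omega

theorem count_one {n : ℕ} (hev : n % 2 = 0) {x} (hx : x ∈ idxOne n) :
    (famOne n x).count 1 = 2 * x.1 := by
  obtain ⟨k, t⟩ := x
  simp only [idxOne, Finset.mem_sigma, Finset.mem_Icc] at hx
  simp only [famOne, Multiset.count_add, Multiset.count_replicate, Multiset.insert_eq_cons,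
    Multiset.count_cons, Multiset.count_singleton]
  split_ifs <;> omega

theorem count_two {n : ℕ} (hev : n % 2 = 0) {x} (hx : x ∈ idxTwo n) :
    (famTwo n x).count 1 = 2 * x.1 - 1 := by
  obtain ⟨k, t⟩ := x
  simp only [idxTwo, Finset.mem_sigma, Finset.mem_Icc] at hx
  simp only [famTwo, Multiset.count_add, Multiset.count_replicate, Multiset.insert_eq_cons,
    Multiset.count_cons, Multiset.count_singleton]
  split_ifs <;> omega

theorem inj_one {n : ℕ} (hev : n % 2 = 0) : Set.InjOn (famOne n) (idxOne n) := by
  intro x hx y hy h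
  have hc := congrArg (Multiset.count 1) h
  rw [count_one hev hx, count_one hev hy] at hc
  obtain ⟨k, t⟩ := x
  obtain ⟨k', t'⟩ := y
  simp only [idxOne, Finset.coe_sigma, Set.mem_sigma_iff, Finset.mem_coe, Finset.mem_Icc] at hx hy
  obtain rfl : k = k' := by simpa using hc
  have := pair_eq_cases (add_left_cancel h)
  obtain rfl : t = t' := by dsimp only at this; omega
  rfl

theorem inj_two {n : ℕ} (hev : n % 2 = 0) : Set.InjOn (famTwo n) (idxTwo n) := by
  intro x hx y hy h
  have hc := congrArg (Multiset.count 1) h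
  rw [count_two hev hx, count_two hev hy] at hc
  obtain ⟨k, t⟩ := x
  obtain ⟨k', t'⟩ := y
  simp only [idxTwo, Finset.coe_sigma, Set.mem_sigma_iff, Finset.mem_coe, Finset.mem_Icc] at hx hy
  obtain rfl : k = k' := by dsimp only at hc; omega
  have := pair_eq_cases (add_left_cancel h)
  obtain rfl : t = t' := by dsimp only at this; omega
  rfl

/-- All good multisets. -/
def allGood (n : ℕ) : Finset (Multiset ℕ) :=
  {({n} : Multiset ℕ)} ∪ (idxOne n).image (famOne n) ∪ (idxTwo n).image (famTwo n)

theorem card_allGood {n : ℕ} (hn : 0 < n) (hev : n % 2 = 0) :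
    (allGood n).card = 1 + ∑ k ∈ Finset.Icc 1 ((n - 2) / 6), (n - 6 * k + 2) / 4
        + ∑ k ∈ Finset.Icc 1 ((n - 6) / 6), (n - 6 * k - 2) / 4 := by
  have h0 : Multiset.count 1 ({n} : Multiset ℕ) = 0 := by
    rw [Multiset.count_singleton, if_neg (by omega)]
  have k1 : ∀ x ∈ idxOne n, 1 ≤ x.1 := by
    intro x hx; simp only [idxOne, Finset.mem_sigma, Finset.mem_Icc] at hx; omega
  have k2 : ∀ x ∈ idxTwo n, 1 ≤ x.1 := by
    intro x hx; simp only [idxTwo, Finset.mem_sigma, Finset.mem_Icc] at hx; omega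
  rw [allGood, Finset.card_union_of_disjoint, Finset.card_union_of_disjoint,
    Finset.card_image_of_injOn (inj_one hev), Finset.card_image_of_injOn (inj_two hev)]
  · simp [idxOne, idxTwo]
  · rw [Finset.disjoint_left]
    intro a ha hb
    rw [Finset.mem_singleton] at ha
    obtain ⟨x, hx, rfl⟩ := Finset.mem_image.1 hb
    have := count_one hev hx
    have := k1 x hx
    rw [ha] at *
    omega
  · rw [Finset.disjoint_left]
    intro a ha hb
    obtain ⟨x, hx, rfl⟩ := Finset.mem_image.1 hb
    have e1 := count_two hev hx
    have e2 := k2 x hx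
    rcases Finset.mem_union.1 ha with ha | ha
    · rw [Finset.mem_singleton] at ha
      rw [ha] at e1
      omega
    · obtain ⟨y, hy, e⟩ := Finset.mem_image.1 ha
      have e3 := count_one hev hy
      rw [e] at e3
      omega

theorem two_big {n i j a b : ℕ} (hev : n % 2 = 0) (ha : 2 < a) (hb : 2 < b) (hba : b ≤ a)
    (h : GoodParts n (Multiset.replicate i 1 + Multiset.replicate j 2 + {a, b})) :
    Multiset.replicate i 1 + Multiset.replicate j 2 + {a, b} ∈ allGood n := by
  obtain ⟨-, h2, h3, h4, -⟩ := h
  simp at h2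
  simp only [Multiset.filter_add, Multiset.card_add, filter_rep, filter_pair] at h3
  simp only [Multiset.sup_add, sup_rep, Multiset.insert_eq_cons, Multiset.sup_cons,
      Multiset.sup_singleton] at h4
  have ha2 : a % 2 = 0 := by split_ifs at h4 <;> omega
  rcases Nat.mod_two_eq_zero_or_one b with hb2 | hb2
  · have hij : i = j + 1 := by simp [ha2, hb2] at h3; omega
    refine Finset.mem_union_left _ (Finset.mem_union_right _ (Finset.mem_image.2
      ⟨⟨i / 2, b / 2⟩, ?_, ?_⟩))
    · simp only [idxOne, Finset.mem_sigma, Finset.mem_Icc]; omega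
    · rw [famOne, Multiset.pair_comm a b]
      congr <;> dsimp only <;> omega
  · have hij : j = i + 1 := by simp [ha2, hb2] at h3; omega
    refine Finset.mem_union_right _ (Finset.mem_image.2 ⟨⟨j / 2, b / 2⟩, ?_, ?_⟩)
    · simp only [idxTwo, Finset.mem_sigma, Finset.mem_Icc]; omega
    · rw [famTwo, Multiset.pair_comm a b]
      congr <;> dsimp only <;> omega

theorem one_big {n i a : ℕ} (hev : n % 2 = 0) (ha : 2 ≤ a) (ha2 : a % 2 = 0) (hs : 3 * i + a = n) :
    Multiset.replicate i 1 + Multiset.replicate i 2 + {a} ∈ allGood n := by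
  rcases Nat.eq_zero_or_pos i with rfl | hi
  · obtain rfl : a = n := by omega
    simp [allGood]
  · refine Finset.mem_union_left _ (Finset.mem_union_right _ (Finset.mem_image.2
      ⟨⟨i / 2, 1⟩, ?_, ?_⟩))
    · simp only [idxOne, Finset.mem_sigma, Finset.mem_Icc]; omega
    · obtain ⟨c, rfl⟩ : ∃ c, i = 2 * (c + 1) := ⟨i / 2 - 1, by omega⟩
      have e1 : 2 * (c + 1) / 2 = c + 1 := by omega
      have e2 : n - 6 * (c + 1) + 2 - 2 * 1 = a := by omega
      have e3 : 2 * (c + 1) - 1 = 2 * c + 1 := by omega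
      have e4 : Multiset.replicate (2 * (c + 1)) 2 = Multiset.replicate (2 * c + 1) 2 + {2} := by
        rw [show 2 * (c + 1) = (2 * c + 1) + 1 by ring, Multiset.replicate_succ,
          ← Multiset.singleton_add, add_comm]
      simp only [famOne, e1, e2, e3, e4, mul_one]
      rw [Multiset.insert_eq_cons, ← Multiset.singleton_add]
      simp only [add_assoc]

theorem mem_allGood {n : ℕ} (hn : 0 < n) (hev : n % 2 = 0) (m : Multiset ℕ) :
    m ∈ allGood n ↔ GoodParts n m := by
  constructor
  · intro h
    simp only [allGood, Finset.mem_union, Finset.mem_singleton, Finset.mem_image] at h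
    rcases h with (rfl | ⟨x, hx, rfl⟩) | ⟨x, hx, rfl⟩
    · exact good_single hn hev
    · exact good_one hev hx
    · exact good_two hev hx
  · intro h
    have hd := decompose m h.1
    have hbig : ∀ x ∈ m.filter (fun p => 2 < p), 2 < x := fun x hx => (Multiset.mem_filter.1 hx).2
    have hc := h.2.2.2.2
    generalize m.filter (fun p => 2 < p) = B at hd hbig hc
    generalize m.count 1 = i at hd
    generalize m.count 2 = j at hd
    subst hd
    obtain hB | hB | hB : B.card = 0 ∨ B.card = 1 ∨ B.card = 2 := by omega
    · rw [Multiset.card_eq_zero] at hB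
      subst hB
      obtain ⟨-, h2, h3, h4, -⟩ := h
      simp at h2
      simp only [Multiset.filter_add, Multiset.card_add, filter_rep] at h3
      simp at h3
      subst h3
      have := one_big (n := n) (i := i) (a := 2) hev le_rfl rfl (by omega)
      rw [Multiset.replicate_succ, ← Multiset.singleton_add, add_zero,
        add_comm {2} (Multiset.replicate i 2), ← add_assoc]
      exact this
    · obtain ⟨a, rfl⟩ := Multiset.card_eq_one.1 hB
      have ha := hbig a (by simp)
      obtain ⟨-, h2, h3, h4, -⟩ := h
      simp at h2
      simp only [Multiset.filter_add, Multiset.card_add, filter_rep, filter_sing] at h3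
      simp only [Multiset.sup_add, sup_rep, Multiset.sup_singleton] at h4
      have ha2 : a % 2 = 0 := by split_ifs at h4 <;> omega
      simp [ha2] at h3
      subst h3
      exact one_big hev (by omega) ha2 (by omega)
    · obtain ⟨a, b, rfl⟩ := Multiset.card_eq_two.1 hB
      have ha := hbig a (by simp)
      have hb := hbig b (by simp)
      rcases le_total b a with hab | hab
      · exact two_big hev ha hb hab h
      · rw [Multiset.pair_comm] at h ⊢
        exact two_big hev hb ha hab h

/-- For every even positive integer `n`, the number of partitions `λ` of `n` such that the
number of even parts exceeds the number of odd parts by exactly `1`, the largest part is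
even, and at most two parts of `λ` are greater than `2`, equals
`1 + Σ_{k=1}^{⌊(n-2)/6⌋} ⌊(n-6k+2)/4⌋ + Σ_{k=1}^{⌊(n-6)/6⌋} ⌊(n-6k-2)/4⌋`. -/
theorem card_leftover_even (n : ℕ) (hn : 0 < n) (hev : Even n) :
    Nat.card {l : n.Partition //
        l.evenCount = l.oddCount + 1 ∧ l.parts.sup % 2 = 0 ∧
          (l.parts.filter (fun p => 2 < p)).card ≤ 2} =
      1 + ∑ k ∈ Finset.Icc 1 ((n - 2) / 6), (n - 6 * k + 2) / 4
        + ∑ k ∈ Finset.Icc 1 ((n - 6) / 6), (n - 6 * k - 2) / 4 := by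
  have hev' : n % 2 = 0 := Nat.even_iff.1 hev
  have hcard : Nat.card {m // m ∈ allGood n} = (allGood n).card := by simp
  rw [← card_allGood hn hev', ← hcard]
  refine Nat.card_congr
    { toFun := fun l => ⟨l.1.parts, (mem_allGood hn hev' _).2
        ⟨fun x hx => l.1.parts_pos hx, l.1.parts_sum, l.2.1, l.2.2.1, l.2.2.2⟩⟩
      invFun := fun m => ⟨⟨m.1, fun {x} hx => ((mem_allGood hn hev' _).1 m.2).1 x hx,
        ((mem_allGood hn hev' _).1 m.2).2.1⟩, ((mem_allGood hn hev' _).1 m.2).2.2⟩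
      left_inv := fun l => rfl
      right_inv := fun m => rfl }
end

section
/- For every positive integer n, let A(n) be the set of partitions λ of n with ℓ_e(λ) > ℓ_o(λ), excluding those partitions for which ℓ_e(λ) = ℓ_o(λ) + 1, the largest part is even, and at most two parts are greater than 2; and let B(n) be the set of partitions of n having exactly two even parts, all odd parts equal to 1, and more odd parts than even parts. Then |A(n)| + |B(n)| ≤ p_o(n), where p_o(n) is the number of partitions of n with more odd parts than even parts. -/
namespace ParityBias

/-- number of odd members -/
def oc (s : Multiset ℕ) : ℕ := s.countP (fun p => p % 2 = 1)
/-- number of even members -/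
def ec (s : Multiset ℕ) : ℕ := s.countP (fun p => p % 2 = 0)

lemma oc_cons (x : ℕ) (s : Multiset ℕ) : oc (x ::ₘ s) = oc s + x % 2 := by
  unfold oc
  rw [Multiset.countP_cons]
  split_ifs <;> omega

lemma ec_cons (x : ℕ) (s : Multiset ℕ) : ec (x ::ₘ s) = ec s + (1 - x % 2) := by
  unfold ec
  rw [Multiset.countP_cons]
  split_ifs <;> omega

lemma oc_zero : oc 0 = 0 := rfl
lemma ec_zero : ec 0 = 0 := rfl

lemma oc_add (s t : Multiset ℕ) : oc (s + t) = oc s + oc t := Multiset.countP_add ..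
lemma ec_add (s t : Multiset ℕ) : ec (s + t) = ec s + ec t := Multiset.countP_add ..

lemma oc_rep (k x : ℕ) : oc (Multiset.replicate k x) = k * (x % 2) := by
  induction k with
  | zero => simp [oc]
  | succ k ih => rw [Multiset.replicate_succ, oc_cons, ih]; ring

lemma ec_rep (k x : ℕ) : ec (Multiset.replicate k x) = k * (1 - x % 2) := by
  induction k with
  | zero => simp [ec]
  | succ k ih => rw [Multiset.replicate_succ, ec_cons, ih]; ring

/-- balanced even parts with sum `2 * w` -/
def E (w : ℕ) : Multiset ℕ :=
  if w = 0 then 0 else if w = 1 then {2} else if w % 2 = 0 then {w, w} else {w + 1, w - 1}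

lemma E_sum (w : ℕ) : (E w).sum = 2 * w := by
  unfold E
  split_ifs <;> simp <;> omega

lemma E_even (w : ℕ) : ∀ x ∈ E w, x % 2 = 0 ∧ 0 < x := by
  unfold E
  split_ifs <;> simp <;> omega

lemma E_oc (w : ℕ) : oc (E w) = 0 := by
  rw [oc, Multiset.countP_eq_zero]
  intro x hx
  have := E_even w x hx
  omega

lemma E_ec (w : ℕ) : ec (E w) ≤ 2 := by
  unfold ec
  refine (Multiset.countP_le_card _ _).trans ?_
  unfold E
  split_ifs <;> simp

/-- replacement image -/
def W (w b k : ℕ) : Multiset ℕ := E w + Multiset.replicate b 3 + Multiset.replicate k 1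

lemma W_inj {w b k w' b' k' : ℕ} (h : W w b k = W w' b' k') : w = w' ∧ b = b' ∧ k = k' := by
  have key : ∀ w b k, (W w b k).count 3 = b ∧ (W w b k).count 1 = k ∧
      (W w b k).sum = 2 * w + 3 * b + k := by
    intro w b k
    have h3 : (E w).count 3 = 0 := by
      rw [Multiset.count_eq_zero]; intro hx; have := E_even w 3 hx; omega
    have h1 : (E w).count 1 = 0 := by
      rw [Multiset.count_eq_zero]; intro hx; have := E_even w 1 hx; omega
    refine ⟨?_, ?_, ?_⟩
    · simp [W, h3, Multiset.count_replicate]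
    · simp [W, h1, Multiset.count_replicate]
    · simp [W, E_sum]; ring
  have k1 := key w b k
  have k2 := key w' b' k'
  rw [h] at k1
  omega

lemma W_gap (w b k : ℕ) (hb : 1 ≤ b) (hk : 1 ≤ k) :
    ∃ x s, W w b k = x ::ₘ s ∧ (∀ t ∈ s, t ≤ x) ∧ ∃ t ∈ s, x ≤ t + 2 := by
  obtain ⟨b, rfl⟩ : ∃ c, b = c + 1 := ⟨b - 1, by omega⟩
  obtain ⟨k, rfl⟩ : ∃ c, k = c + 1 := ⟨k - 1, by omega⟩
  unfold W E
  by_cases h3 : w < 3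
  · refine ⟨3, E w + Multiset.replicate b 3 + Multiset.replicate (k + 1) 1, ?_, ?_, 1, ?_, ?_⟩
    · rw [← E, Multiset.replicate_succ]
      simp [Multiset.cons_swap 1 3]
    · intro t ht
      unfold E at ht
      simp only [Multiset.mem_add, Multiset.mem_replicate] at ht
      rcases ht with (ht | ht) | ht
      · split_ifs at ht <;> simp at ht <;> omega
      · omega
      · omega
    · simp
    · omega
  · rw [if_neg (by omega), if_neg (by omega)]
    split_ifs with hw
    · refine ⟨w, w ::ₘ (Multiset.replicate (b+1) 3 + Multiset.replicate (k + 1) 1), ?_, ?_, w, ?_, ?_⟩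
      · simp only [Multiset.insert_eq_cons, ← Multiset.singleton_add]
        abel
      · intro t ht
        simp only [Multiset.mem_cons, Multiset.mem_add, Multiset.mem_replicate] at ht
        omega
      · simp
      · omega
    · refine ⟨w+1, (w-1) ::ₘ (Multiset.replicate (b+1) 3 + Multiset.replicate (k + 1) 1), ?_, ?_, w-1, ?_, ?_⟩
      · simp only [Multiset.insert_eq_cons, ← Multiset.singleton_add]
        abel
      · intro t ht
        simp only [Multiset.mem_cons, Multiset.mem_add, Multiset.mem_replicate] at ht
        omega
      · simp
      · omega

lemma W_cnt (w b k : ℕ) : oc (W w b k) = b + k ∧ ec (W w b k) ≤ 2 := by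
  have := E_ec w
  simp [W, oc_add, ec_add, E_oc, oc_rep, ec_rep, this]

lemma W_sum (w b k : ℕ) : (W w b k).sum = 2 * w + 3 * b + k := by
  simp [W, E_sum]; ring

lemma W_pos (w b k : ℕ) : ∀ x ∈ W w b k, 0 < x := by
  intro x hx
  simp only [W, Multiset.mem_add, Multiset.mem_replicate] at hx
  rcases hx with (hx | hx) | hx
  · exact (E_even w x hx).2
  · omega
  · omega

lemma cons_max {x y : ℕ} {s t : Multiset ℕ} (h : x ::ₘ s = y ::ₘ t) (hs : ∀ z ∈ s, z ≤ x)
    (ht : ∀ z ∈ t, z ≤ y) : x = y ∧ s = t := by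
  have h1 : x ≤ y := by
    have : x ∈ y ::ₘ t := h ▸ Multiset.mem_cons_self x s
    rcases Multiset.mem_cons.1 this with h | h
    · omega
    · exact ht _ h
  have h2 : y ≤ x := by
    have : y ∈ x ::ₘ s := h ▸ Multiset.mem_cons_self y t
    rcases Multiset.mem_cons.1 this with h | h
    · omega
    · exact hs _ h
  obtain rfl := le_antisymm h1 h2
  exact ⟨rfl, (Multiset.cons_inj_right x).1 h⟩

lemma exists_max (m : Multiset ℕ) (h : m ≠ 0) : ∃ x s, m = x ::ₘ s ∧ ∀ z ∈ s, z ≤ x := by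
  induction m using Multiset.induction with
  | empty => exact absurd rfl h
  | cons a m ih =>
    by_cases hm : m = 0
    · exact ⟨a, 0, by simp [hm], by simp⟩
    · obtain ⟨x, s, rfl, hs⟩ := ih hm
      by_cases hax : a ≤ x
      · refine ⟨x, a ::ₘ s, Multiset.cons_swap .., ?_⟩
        intro z hz
        rcases Multiset.mem_cons.1 hz with h | h
        · omega
        · exact hs _ h
      · refine ⟨a, x ::ₘ s, rfl, ?_⟩
        intro z hz
        rcases Multiset.mem_cons.1 hz with h | h
        · omega
        · have := hs _ h; omega

/-- the relation between a (parity-swapped) partition `M ::ₘ r` and its image `v` -/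
def Sig (M : ℕ) (r v : Multiset ℕ) : Prop :=
  ∃ x s, v = x ::ₘ s ∧ (∀ t ∈ s, t ≤ x) ∧
    ((∃ a, 1 ≤ a ∧ x = M + a ∧ s = r ∧ (∀ t ∈ s, t + a ≤ x) ∧
        ((a % 2 = 0 ∧ oc v = ec v + a) ∨ (a % 2 = 1 ∧ x % 2 = 1 ∧ oc v = ec v + a + 2) ∨
          (a % 2 = 1 ∧ 3 ≤ a ∧ x % 2 = 0 ∧ oc v + 2 = ec v + a)))
    ∨ (x = M ∧ s = 1 ::ₘ r ∧ oc v = ec v + 2 ∧ ∃ t ∈ s, x ≤ t + 1)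
    ∨ (x + 2 = M ∧ s = 2 ::ₘ 1 ::ₘ r ∧ x % 2 = 1 ∧ oc v = ec v + 1)
    ∨ (ec v + 4 ≤ oc v ∧ (∃ t ∈ s, x ≤ t + 2) ∧ ∃ q a,
        (M % 2 = 0 ∧ 2 ≤ M ∧ q % 2 = 0 ∧ a % 2 = 0 ∧ r = q ::ₘ Multiset.replicate (a + 2) 1 ∧
          v = W ((M - 2) / 2) ((a + 2) / 2) ((a + 2) / 2 + q)) ∨
        (M % 2 = 1 ∧ q % 2 = 0 ∧ a % 2 = 1 ∧ r = q ::ₘ Multiset.replicate a 1 ∧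
          v = W ((M - 1) / 2) ((a - 1) / 2) ((a - 1) / 2 + q + 3))))

lemma Sig_inj {M M' : ℕ} {r r' v : Multiset ℕ} (h : Sig M r v) (h' : Sig M' r' v) :
    M ::ₘ r = M' ::ₘ r' := by
  obtain ⟨x, s, hv, hs, H⟩ := h
  obtain ⟨x', s', hv', hs', H'⟩ := h'
  obtain ⟨rfl, rfl⟩ := cons_max (hv.symm.trans hv') hs hs'
  clear hv'
  rcases H with ⟨a, ha, h1, h2, h3, h4⟩ | ⟨h1, h2, h3, t, ht, h4⟩ | ⟨h1, h2, h3, h4⟩ |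
    ⟨h1, ⟨t, ht, h2⟩, q, a, h3⟩ <;>
  rcases H' with ⟨a', ha', h1', h2', h3', h4'⟩ | ⟨h1', h2', h3', t', ht', h4'⟩ |
    ⟨h1', h2', h3', h4'⟩ | ⟨h1', ⟨t', ht', h2'⟩, q', a', h3'⟩
  · have : M = M' := by omega
    rw [this, ← h2, ← h2']
  · have := h3 _ ht'; omega
  · omega
  · have := h3 _ ht'; omega
  · have := h3' _ ht; omega
  · have : M = M' := by omega
    rw [h2] at h2'
    rw [this, (Multiset.cons_inj_right _).1 h2']
  · omega
  · omega
  · omega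
  · omega
  · have : M = M' := by omega
    rw [h2] at h2'
    rw [this, (Multiset.cons_inj_right _).1 ((Multiset.cons_inj_right _).1 h2')]
  · omega
  · have := h3' _ ht; omega
  · omega
  · omega
  · rcases h3 with ⟨e1, e2, e3, e4, e5, e6⟩ | ⟨e1, e3, e4, e5, e6⟩ <;>
    rcases h3' with ⟨f1, f2, f3, f4, f5, f6⟩ | ⟨f1, f3, f4, f5, f6⟩ <;>
    obtain ⟨g1, g2, g3⟩ := W_inj (e6.symm.trans f6)
    · have i1 : M = M' := by omega
      have i2 : a = a' := by omega
      have i3 : q = q' := by omega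
      rw [e5, f5, i1, i2, i3]
    · omega
    · omega
    · have i1 : M = M' := by omega
      have i2 : a = a' := by omega
      have i3 : q = q' := by omega
      rw [e5, f5, i1, i2, i3]

/-- `v` avoids the set `B` -/
def NB (v : Multiset ℕ) : Prop := ¬ (ec v = 2 ∧ ∀ p ∈ v, p % 2 = 1 → p = 1)

lemma one_even (r : Multiset ℕ) (h : ec r = 1) (h1 : ∀ p ∈ r, p % 2 = 1 → p = 1) :
    ∃ q, q % 2 = 0 ∧ r = q ::ₘ Multiset.replicate (oc r) 1 := by
  have e1 : r.filter (fun p => p % 2 = 0) + r.filter (fun p => ¬ p % 2 = 0) = r :=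
    Multiset.filter_add_not _ _
  rw [ec, Multiset.countP_eq_card_filter, Multiset.card_eq_one] at h
  obtain ⟨q, hq⟩ := h
  have hq2 : q % 2 = 0 := by
    have : q ∈ r.filter (fun p => p % 2 = 0) := by rw [hq]; simp
    exact (Multiset.mem_filter.1 this).2
  have e2 : r.filter (fun p => ¬ p % 2 = 0) = Multiset.replicate (oc r) 1 := by
    rw [Multiset.eq_replicate]
    constructor
    · rw [oc, Multiset.countP_eq_card_filter]
      congr 1
      apply Multiset.filter_congr
      intro x _; omega
    · intro b hb
      have := Multiset.mem_filter.1 hb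
      exact h1 b this.1 (by omega)
  refine ⟨q, hq2, ?_⟩
  conv_lhs => rw [← e1, hq, e2]
  simp

lemma exists_image (M : ℕ) (r : Multiset ℕ) (hr : ∀ t ∈ r, t ≤ M) (hp : ∀ t ∈ r, 0 < t)
    (hM : 0 < M) (a : ℕ) (ha : 1 ≤ a) (hoe : oc (M ::ₘ r) = ec (M ::ₘ r) + a)
    (hex : a = 1 → M % 2 = 1 → ∃ t ∈ r, 3 ≤ t) :
    ∃ v, Sig M r v ∧ NB v ∧ (∀ t ∈ v, 0 < t) ∧ ec v < oc v ∧ v.sum = M + r.sum + a := by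
  rw [oc_cons, ec_cons] at hoe
  by_cases hR : a = 1 ∧ M % 2 = 1
  · obtain ⟨rfl, hM1⟩ := hR
    obtain ⟨t0, ht0, ht3⟩ := hex rfl hM1
    have htM := hr _ ht0
    by_cases hg : ∃ t ∈ r, M ≤ t + 1
    · obtain ⟨t, ht, hg⟩ := hg
      have hc : oc (M ::ₘ 1 ::ₘ r) = ec (M ::ₘ 1 ::ₘ r) + 2 := by
        simp only [oc_cons, ec_cons]; omega
      refine ⟨M ::ₘ 1 ::ₘ r, ⟨M, 1 ::ₘ r, rfl, ?_, Or.inr (Or.inl ⟨rfl, rfl, hc, t, ?_, hg⟩)⟩,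
        ?_, ?_, by omega, ?_⟩
      · intro z hz
        rcases Multiset.mem_cons.1 hz with h | h
        · omega
        · exact hr _ h
      · exact Multiset.mem_cons_of_mem ht
      · rintro ⟨_, h⟩
        have := h M (by simp) hM1
        omega
      · intro z hz
        rcases Multiset.mem_cons.1 hz with h | hz
        · omega
        rcases Multiset.mem_cons.1 hz with h | h
        · omega
        · exact hp _ h
      · simp; ring
    · push Not at hg
      have hg0 := hg _ ht0
      have hc : oc ((M-2) ::ₘ 2 ::ₘ 1 ::ₘ r) = ec ((M-2) ::ₘ 2 ::ₘ 1 ::ₘ r) + 1 := by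
        simp only [oc_cons, ec_cons]; omega
      refine ⟨(M-2) ::ₘ 2 ::ₘ 1 ::ₘ r, ⟨M-2, 2 ::ₘ 1 ::ₘ r, rfl, ?_,
        Or.inr (Or.inr (Or.inl ⟨by omega, rfl, by omega, hc⟩))⟩,
        ?_, ?_, by omega, ?_⟩
      · intro z hz
        rcases Multiset.mem_cons.1 hz with h | hz
        · omega
        rcases Multiset.mem_cons.1 hz with h | h
        · omega
        · have := hg _ h; omega
      · rintro ⟨_, h⟩
        have := h (M-2) (by simp) (by omega)
        omega
      · intro z hz
        rcases Multiset.mem_cons.1 hz with h | hz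
        · omega
        rcases Multiset.mem_cons.1 hz with h | hz
        · omega
        rcases Multiset.mem_cons.1 hz with h | h
        · omega
        · exact hp _ h
      · simp; omega
  · clear hex
    by_cases hB : NB ((M + a) ::ₘ r)
    · refine ⟨(M + a) ::ₘ r, ⟨M + a, r, rfl, ?_, Or.inl ⟨a, ha, rfl, rfl, ?_, ?_⟩⟩, hB, ?_, ?_, ?_⟩
      · intro z hz; have := hr _ hz; omega
      · intro z hz; have := hr _ hz; omega
      · simp only [oc_cons, ec_cons]; omega
      · intro z hz
        rcases Multiset.mem_cons.1 hz with h | h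
        · omega
        · exact hp _ h
      · simp only [oc_cons, ec_cons]; omega
      · simp; ring
    · unfold NB at hB
      push Not at hB
      obtain ⟨hB1, hB2⟩ := hB
      have hMa : (M + a) % 2 = 0 := by
        by_contra hcon
        have := hB2 (M + a) (by simp) (by omega)
        omega
      rw [ec_cons] at hB1
      have her : ec r = 1 := by omega
      obtain ⟨q, hq2, hq⟩ := one_even r her
        (fun p hp => hB2 p (Multiset.mem_cons_of_mem hp))
      have hqr : q ∈ r := by rw [hq]; simp
      have hqp := hp _ hqr
      have hrs : r.sum = q + oc r := by
        conv_lhs => rw [hq]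
        simp
      have hNB : ∀ w b k, 1 ≤ b → NB (W w b k) := by
        rintro w b k hb ⟨_, h⟩
        have := h 3 (by simp [W, Multiset.mem_replicate]; omega) (by omega)
        omega
      rcases Nat.mod_two_eq_zero_or_one M with hM2 | hM2
      · have hk : oc r = a + 2 := by omega
        have hb : 1 ≤ (a + 2) / 2 := by omega
        have hcn := W_cnt ((M - 2) / 2) ((a + 2) / 2) ((a + 2) / 2 + q)
        obtain ⟨x, s, g1, g2, g3⟩ := W_gap ((M - 2) / 2) ((a + 2) / 2) ((a + 2) / 2 + q) hb
          (by omega)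
        refine ⟨W ((M - 2) / 2) ((a + 2) / 2) ((a + 2) / 2 + q),
          ⟨x, s, g1, g2, Or.inr (Or.inr (Or.inr ⟨by omega, g3, q, a, Or.inl
            ⟨hM2, by omega, hq2, by omega, ?_, rfl⟩⟩))⟩, hNB _ _ _ hb, W_pos _ _ _, by omega, ?_⟩
        · rw [← hk]; exact hq
        · rw [W_sum]; omega
      · have hk : oc r = a := by omega
        have hb : 1 ≤ (a - 1) / 2 := by omega
        have hcn := W_cnt ((M - 1) / 2) ((a - 1) / 2) ((a - 1) / 2 + q + 3)
        obtain ⟨x, s, g1, g2, g3⟩ := W_gap ((M - 1) / 2) ((a - 1) / 2) ((a - 1) / 2 + q + 3) hb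
          (by omega)
        refine ⟨W ((M - 1) / 2) ((a - 1) / 2) ((a - 1) / 2 + q + 3),
          ⟨x, s, g1, g2, Or.inr (Or.inr (Or.inr ⟨by omega, g3, q, a, Or.inr
            ⟨hM2, hq2, by omega, ?_, rfl⟩⟩))⟩, hNB _ _ _ hb, W_pos _ _ _, by omega, ?_⟩
        · rw [← hk]; exact hq
        · rw [W_sum]; omega

/-- the parity swap on positive integers -/
def sw (x : ℕ) : ℕ := if x % 2 = 0 then x - 1 else x + 1

lemma sw_sw {x : ℕ} (h : 0 < x) : sw (sw x) = x := by
  unfold sw; split_ifs <;> omega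

lemma map_sw_sw (s : Multiset ℕ) (h : ∀ x ∈ s, 0 < x) : (s.map sw).map sw = s := by
  rw [Multiset.map_map]
  conv_rhs => rw [← Multiset.map_id s]
  exact Multiset.map_congr rfl (fun x hx => sw_sw (h x hx))

lemma sw_facts (s : Multiset ℕ) (h : ∀ x ∈ s, 0 < x) :
    oc (s.map sw) = ec s ∧ ec (s.map sw) = oc s ∧ (s.map sw).sum + ec s = s.sum + oc s := by
  induction s using Multiset.induction with
  | empty => simp [oc, ec]
  | cons a m ih =>
    have ih := ih (fun x hx => h x (Multiset.mem_cons_of_mem hx))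
    have ha := h a (by simp)
    simp only [Multiset.map_cons, oc_cons, ec_cons, Multiset.sum_cons]
    have : sw a = if a % 2 = 0 then a - 1 else a + 1 := rfl
    split_ifs at this <;> omega

lemma exists_image' (s : Multiset ℕ) (h : ∀ x ∈ s, 0 < x) (hlt : oc s < ec s)
    (hx : ¬(ec s = oc s + 1 ∧ s.sup % 2 = 0 ∧ (s.filter (fun p => 2 < p)).card ≤ 2)) :
    ∃ v, (∃ M r, s.map sw = M ::ₘ r ∧ Sig M r v) ∧ NB v ∧ (∀ t ∈ v, 0 < t) ∧ ec v < oc v ∧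
      v.sum = s.sum := by
  obtain ⟨f1, f2, f3⟩ := sw_facts s h
  have hpos : ∀ x ∈ s.map sw, 0 < x := by
    intro x hx
    obtain ⟨y, hy, rfl⟩ := Multiset.mem_map.1 hx
    have := h y hy
    unfold sw; split_ifs <;> omega
  have hne : s.map sw ≠ 0 := by
    intro h0
    rw [h0, oc_zero] at f1
    omega
  have hss := map_sw_sw s h
  obtain ⟨M, r, hMr, hr⟩ := exists_max _ hne
  rw [hMr] at f1 f2 f3 hpos hss
  rw [Multiset.sum_cons] at f3
  obtain ⟨v, hv1, hv2, hv3, hv4, hv5⟩ := exists_image M r hr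
    (fun t ht => hpos t (Multiset.mem_cons_of_mem ht)) (hpos M (by simp)) (ec s - oc s)
    (by omega) (by omega) (by
      intro ha hM
      by_contra hcon
      push Not at hcon
      apply hx
      have hMsw : sw M = M + 1 := by unfold sw; rw [if_neg (by omega)]
      refine ⟨by omega, ?_, ?_⟩
      · have : s.sup = M + 1 := by
          apply le_antisymm
          · rw [Multiset.sup_le]
            intro b hb
            rw [← hss] at hb
            obtain ⟨y, hy, rfl⟩ := Multiset.mem_map.1 hb
            have : y ≤ M := by
              rcases Multiset.mem_cons.1 hy with h | h
              · omega
              · exact hr _ h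
            unfold sw; split_ifs <;> omega
          · apply Multiset.le_sup
            rw [← hss, ← hMsw]
            exact Multiset.mem_map_of_mem _ (by simp)
        omega
      · rw [← hss, Multiset.map_cons]
        have h0 : (r.map sw).filter (fun p => 2 < p) = 0 := by
          rw [Multiset.filter_eq_nil]
          intro b hb
          obtain ⟨y, hy, rfl⟩ := Multiset.mem_map.1 hb
          have := hcon y hy
          unfold sw; split_ifs <;> omega
        rw [Multiset.filter_cons, h0]
        split_ifs <;> simp)
  exact ⟨v, ⟨M, r, hMr, hv1⟩, hv2, hv3, hv4, by omega⟩

end ParityBias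

open ParityBias

/-- For every positive integer `n`: let `A n` be the set of partitions of `n` with more even
parts than odd parts, excluding those for which the number of even parts exceeds the
number of odd parts by exactly `1`, the largest part is even, and at most two parts are
greater than `2`; let `B n` be the set of partitions of `n` with exactly two even parts,
all odd parts equal to `1`, and more odd parts than even parts.  Then
`|A n| + |B n| ≤ p_o(n)`. -/
theorem card_A_add_card_B_le_po (n : ℕ) (hn : 0 < n) :
    Nat.card {l : n.Partition //
        l.oddCount < l.evenCount ∧
          ¬(l.evenCount = l.oddCount + 1 ∧ l.parts.sup % 2 = 0 ∧
              (l.parts.filter (fun p => 2 < p)).card ≤ 2)} +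
      Nat.card {l : n.Partition //
        l.evenCount = 2 ∧ (∀ p ∈ l.parts, p % 2 = 1 → p = 1) ∧ l.evenCount < l.oddCount} ≤
      Nat.card {l : n.Partition // l.evenCount < l.oddCount} := by
  classical
  have ho : ∀ l : n.Partition, l.oddCount = oc l.parts := fun l =>
    (Multiset.countP_eq_card_filter _ _).symm
  have he : ∀ l : n.Partition, l.evenCount = ec l.parts := fun l =>
    (Multiset.countP_eq_card_filter _ _).symm
  have key : ∀ l : {l : n.Partition //
        l.oddCount < l.evenCount ∧
          ¬(l.evenCount = l.oddCount + 1 ∧ l.parts.sup % 2 = 0 ∧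
              (l.parts.filter (fun p => 2 < p)).card ≤ 2)},
      ∃ v : {l : n.Partition // l.evenCount < l.oddCount},
        (∃ M r, l.1.parts.map sw = M ::ₘ r ∧ Sig M r v.1.parts) ∧ NB v.1.parts := by
    rintro ⟨l, h1, h2⟩
    rw [ho, he] at h1 h2
    obtain ⟨v, hv1, hv2, hv3, hv4, hv5⟩ := exists_image' l.parts (fun x hx => l.parts_pos hx) h1 h2
    refine ⟨⟨⟨v, fun {i} hi => hv3 i hi, hv5.trans l.parts_sum⟩, ?_⟩, hv1, hv2⟩
    rw [ho, he]
    exact hv4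
  choose f hf1 hf2 using key
  rw [← Nat.card_sum]
  refine Nat.card_le_card_of_injective (Sum.elim f (fun l => ⟨l.1, l.2.2.2⟩)) ?_
  refine Function.Injective.sumElim ?_ ?_ ?_
  · intro l l' hll
    obtain ⟨M, r, e1, e2⟩ := hf1 l
    obtain ⟨M', r', e1', e2'⟩ := hf1 l'
    rw [hll] at e2
    have := Sig_inj e2 e2'
    rw [← e1, ← e1'] at this
    have h3 := congrArg (Multiset.map sw) this
    rw [map_sw_sw _ (fun x hx => l.1.parts_pos hx),
      map_sw_sw _ (fun x hx => l'.1.parts_pos hx)] at h3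
    exact Subtype.ext (Nat.Partition.ext h3)
  · intro l l' hll
    exact Subtype.ext (congrArg (fun z => z.1) hll)
  · intro l l' hll
    apply hf2 l
    rw [hll, ← he]
    exact ⟨l'.2.1, l'.2.2.1⟩
end

section
/- For every even integer n with n ≥ 14, the number of partitions of n having exactly two even parts, all odd parts equal to 1, and more odd parts than even parts is strictly greater than the number of partitions λ of n such that the number of even parts exceeds the number of odd parts by exactly 1, the largest part is even, and at most two parts of λ are greater than 2. -/
/-- Index set: pairs `(s, b)` with `1 ≤ b`, `2 b ≤ s`, `s + 2 ≤ m`. -/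
def pairSet (m : ℕ) : Finset (ℕ × ℕ) :=
  (Finset.range m ×ˢ Finset.range m).filter
    (fun t => 1 ≤ t.2 ∧ 2 * t.2 ≤ t.1 ∧ t.1 + 2 ≤ m)

lemma mem_pairSet {m s b : ℕ} : (s, b) ∈ pairSet m ↔ 1 ≤ b ∧ 2 * b ≤ s ∧ s + 2 ≤ m := by
  simp [pairSet]
  omega

/-- Parametrization of the leftover partitions by pairs. -/
def leftParts (m : ℕ) (t : ℕ × ℕ) : Multiset ℕ :=
  if (m - t.1) % 3 = 0 then
    ({2 * (t.1 - t.2), 2 * t.2 + 1} : Multiset ℕ) + Multiset.replicate (2 * ((m - t.1) / 3) - 1) 1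
      + Multiset.replicate (2 * ((m - t.1) / 3)) 2
  else if (m + 1 - t.1) % 3 = 0 then
    if t.2 = t.1 / 2 then
      ({2 * (t.1 + 2)} : Multiset ℕ) + Multiset.replicate (2 * ((m + 1 - t.1) / 3 - 1)) 1
        + Multiset.replicate (2 * ((m + 1 - t.1) / 3 - 1)) 2
    else
      ({2 * (t.1 - t.2 - 1), 2 * (t.2 + 1)} : Multiset ℕ)
        + Multiset.replicate (2 * ((m + 1 - t.1) / 3)) 1
        + Multiset.replicate (2 * ((m + 1 - t.1) / 3) - 1) 2
  else if m % 3 = 1 then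
    (0 : Multiset ℕ) + Multiset.replicate (2 * ((m - 1) / 3)) 1
      + Multiset.replicate (2 * ((m - 1) / 3) + 1) 2
  else
    ({2 * (m - 3 * ((m - 2) / 3))} : Multiset ℕ) + Multiset.replicate (2 * ((m - 2) / 3)) 1
      + Multiset.replicate (2 * ((m - 2) / 3)) 2

/-- A pair not needed in the parametrization. -/
def excPair (m : ℕ) : ℕ × ℕ := if m = 7 then (4, 2) else (m - 4, 2)

lemma split_parts (M : Multiset ℕ) (hM : ∀ p ∈ M, 0 < p) :
    M = M.filter (fun p => 2 < p) + Multiset.replicate (M.count 1) 1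
      + Multiset.replicate (M.count 2) 2 := by
  ext a
  simp only [Multiset.count_add, Multiset.count_filter, Multiset.count_replicate]
  rcases Nat.lt_or_ge 2 a with h | h
  · have h1 : ¬ (1 = a) := by omega
    have h2 : ¬ (2 = a) := by omega
    simp [h, h1, h2]
  · have h0 : M.count 0 = 0 := Multiset.count_eq_zero.2 (fun h => absurd (hM 0 h) (by simp))
    interval_cases a <;> simp [h0]

lemma classify (m : ℕ) (hm : 7 ≤ m) (M : Multiset ℕ) (hM : ∀ p ∈ M, 0 < p)
    (hs : M.sum = 2 * m)
    (h1 : (M.filter (fun p => p % 2 = 0)).card = (M.filter (fun p => p % 2 = 1)).card + 1)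
    (h2 : M.sup % 2 = 0) (h3 : (M.filter (fun p => 2 < p)).card ≤ 2) :
    ∃ t ∈ (pairSet m).erase (excPair m), leftParts m t = M := by
  have hF : ∀ p ∈ M.filter (fun p => 2 < p), 2 < p := fun p hp => (Multiset.mem_filter.1 hp).2
  have hsp := split_parts M hM
  generalize M.filter (fun p => 2 < p) = F at *
  generalize M.count 1 = a at *
  generalize M.count 2 = c at *
  subst hsp
  simp only [Multiset.filter_add, Multiset.card_add, Multiset.sum_add, Multiset.sum_replicate,
    smul_eq_mul, Multiset.sup_add] at hs h1 h2
  have e1 : (Multiset.replicate a 1).filter (fun p => p % 2 = 0) = 0 := by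
    rw [Multiset.filter_eq_nil]; intro p hp; rw [Multiset.eq_of_mem_replicate hp]; decide
  have e2 : (Multiset.replicate c 2).filter (fun p => p % 2 = 1) = 0 := by
    rw [Multiset.filter_eq_nil]; intro p hp; rw [Multiset.eq_of_mem_replicate hp]; decide
  have e3 : (Multiset.replicate a 1).filter (fun p => p % 2 = 1) = Multiset.replicate a 1 := by
    rw [Multiset.filter_eq_self]; intro p hp; rw [Multiset.eq_of_mem_replicate hp]
  have e4 : (Multiset.replicate c 2).filter (fun p => p % 2 = 0) = Multiset.replicate c 2 := by
    rw [Multiset.filter_eq_self]; intro p hp; rw [Multiset.eq_of_mem_replicate hp]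
  have s1 : (Multiset.replicate a 1).sup ≤ 1 :=
    Multiset.sup_le.2 fun p hp => (Multiset.eq_of_mem_replicate hp).le
  have s2 : (Multiset.replicate c 2).sup ≤ 2 :=
    Multiset.sup_le.2 fun p hp => (Multiset.eq_of_mem_replicate hp).le
  rw [e1, e2, e3, e4] at h1
  simp only [Multiset.card_replicate, Multiset.card_zero, add_zero] at h1
  generalize (Multiset.replicate a 1).sup = u at *
  generalize (Multiset.replicate c 2).sup = v at *
  -- the exceptional pair `(m - 4, 1)`
  have hexc : (m - 4, 1) ∈ (pairSet m).erase (excPair m) := by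
    rw [Finset.mem_erase, mem_pairSet]
    refine ⟨?_, by omega⟩
    unfold excPair; split_ifs <;> simp
  have hc : F.card = 0 ∨ F.card = 1 ∨ F.card = 2 := by omega
  rcases hc with hc | hc | hc
  · rw [Multiset.card_eq_zero] at hc
    subst hc
    simp at h1 hs
    refine ⟨_, hexc, ?_⟩
    unfold leftParts
    rw [if_neg (by dsimp only; omega), if_neg (by dsimp only; omega), if_pos (by omega)]
    congr 2 <;> congr 1 <;> omega
  · rw [Multiset.card_eq_one] at hc
    obtain ⟨x, rfl⟩ := hc
    have hx := hF x (by simp)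
    simp only [Multiset.sup_singleton, Multiset.sum_singleton] at h2 hs
    have hxe : x % 2 = 0 := by
      rw [sup_eq_left.2 (by omega : u ≤ x), sup_eq_left.2 (by omega : v ≤ x)] at h2; exact h2
    simp [Multiset.filter_singleton, hxe] at h1
    by_cases hbig : 8 ≤ x
    · refine ⟨(x / 2 - 2, (x / 2 - 2) / 2), ?_, ?_⟩
      · rw [Finset.mem_erase, mem_pairSet]
        refine ⟨?_, by omega⟩
        unfold excPair; split_ifs <;> rw [Ne, Prod.mk.injEq] <;> omega
      · unfold leftParts
        rw [if_neg (by dsimp only; omega), if_pos (by dsimp only; omega), if_pos rfl]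
        dsimp only
        congr 2 <;> (try congr 1) <;> omega
    · refine ⟨_, hexc, ?_⟩
      unfold leftParts
      rw [if_neg (by dsimp only; omega), if_neg (by dsimp only; omega), if_neg (by omega)]
      congr 2 <;> (try congr 1) <;> omega
  · rw [Multiset.card_eq_two] at hc
    obtain ⟨x, y, rfl, hle⟩ : ∃ x y, F = {x, y} ∧ y ≤ x := by
      obtain ⟨x', y', hF'⟩ := hc
      rcases le_total y' x' with h | h
      · exact ⟨x', y', hF', h⟩
      · exact ⟨y', x', hF'.trans (Multiset.pair_comm _ _), h⟩
    have hx := hF x (by simp)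
    have hy := hF y (by simp)
    simp only [Multiset.insert_eq_cons, Multiset.sup_cons, Multiset.sum_cons,
      Multiset.sup_singleton, Multiset.sum_singleton] at h2 hs
    have hxe : x % 2 = 0 := by
      rw [sup_eq_left.2 hle, sup_eq_left.2 (by omega : u ≤ x),
        sup_eq_left.2 (by omega : v ≤ x)] at h2; exact h2
    rcases Nat.mod_two_eq_zero_or_one y with hye | hyo
    · simp [Multiset.insert_eq_cons, Multiset.filter_cons, Multiset.filter_singleton,
        hxe, hye] at h1
      refine ⟨(x / 2 + y / 2, y / 2 - 1), ?_, ?_⟩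
      · rw [Finset.mem_erase, mem_pairSet]
        refine ⟨?_, by omega⟩
        unfold excPair; split_ifs <;> rw [Ne, Prod.mk.injEq] <;> omega
      · unfold leftParts
        rw [if_neg (by dsimp only; omega), if_pos (by dsimp only; omega),
          if_neg (by dsimp only; omega)]
        dsimp only
        rw [show 2 * (x / 2 + y / 2 - (y / 2 - 1) - 1) = x by omega,
          show 2 * (y / 2 - 1 + 1) = y by omega]
        congr 2 <;> congr 1 <;> omega
    · simp [Multiset.insert_eq_cons, Multiset.filter_cons, Multiset.filter_singleton,
        hxe, hyo] at h1
      refine ⟨(x / 2 + y / 2, y / 2), ?_, ?_⟩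
      · rw [Finset.mem_erase, mem_pairSet]
        refine ⟨?_, by omega⟩
        unfold excPair; split_ifs <;> rw [Ne, Prod.mk.injEq] <;> omega
      · unfold leftParts
        rw [if_pos (by dsimp only; omega)]
        dsimp only
        rw [show 2 * (x / 2 + y / 2 - y / 2) = x by omega,
          show 2 * (y / 2) + 1 = y by omega]
        congr 2 <;> congr 1 <;> omega

/-- The partition of `2 m` with even parts `2 (s - b)`, `2 b` and all other parts `1`. -/
def pairPartition (m : ℕ) (t : ℕ × ℕ) (h : t ∈ pairSet m) : (2 * m).Partition where
  parts := ({2 * (t.1 - t.2), 2 * t.2} : Multiset ℕ) + Multiset.replicate (2 * (m - t.1)) 1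
  parts_pos := by
    obtain ⟨s, b⟩ := t
    rw [mem_pairSet] at h
    intro i hi
    simp only [Multiset.mem_add, Multiset.insert_eq_cons, Multiset.mem_cons,
      Multiset.mem_singleton, Multiset.mem_replicate] at hi
    omega
  parts_sum := by
    obtain ⟨s, b⟩ := t
    rw [mem_pairSet] at h
    simp
    omega

lemma pairPartition_spec (m : ℕ) (t : ℕ × ℕ) (h : t ∈ pairSet m) :
    (pairPartition m t h).evenCount = 2 ∧
      (∀ p ∈ (pairPartition m t h).parts, p % 2 = 1 → p = 1) ∧
      (pairPartition m t h).evenCount < (pairPartition m t h).oddCount := by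
  obtain ⟨s, b⟩ := t
  have h' := mem_pairSet.1 h
  have e1 : (Multiset.replicate (2 * (m - s)) 1).filter (fun p => p % 2 = 0) = 0 := by
    rw [Multiset.filter_eq_nil]; intro p hp; rw [Multiset.eq_of_mem_replicate hp]; decide
  have e3 : (Multiset.replicate (2 * (m - s)) 1).filter (fun p => p % 2 = 1)
      = Multiset.replicate (2 * (m - s)) 1 := by
    rw [Multiset.filter_eq_self]; intro p hp; rw [Multiset.eq_of_mem_replicate hp]
  have he : (pairPartition m (s, b) h).evenCount = 2 := by
    simp only [Nat.Partition.evenCount, pairPartition, Multiset.filter_add, e1]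
    simp [Multiset.filter_cons, Multiset.filter_singleton]
  have ho : (pairPartition m (s, b) h).oddCount = 2 * (m - s) := by
    simp only [Nat.Partition.oddCount, pairPartition, Multiset.filter_add, e3]
    simp [Multiset.filter_cons, Multiset.filter_singleton]
  refine ⟨he, ?_, by omega⟩
  intro p hp hp1
  simp only [pairPartition, Multiset.mem_add, Multiset.insert_eq_cons, Multiset.mem_cons,
      Multiset.mem_singleton, Multiset.mem_replicate] at hp
  omega

lemma pairPartition_inj (m : ℕ) (t t' : ℕ × ℕ) (h : t ∈ pairSet m) (h' : t' ∈ pairSet m)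
    (heq : pairPartition m t h = pairPartition m t' h') : t = t' := by
  obtain ⟨s, b⟩ := t
  obtain ⟨s', b'⟩ := t'
  have hp := congrArg Nat.Partition.parts heq
  simp only [pairPartition] at hp
  rw [mem_pairSet] at h h'
  have hc := congrArg (Multiset.count 1) hp
  have hne : ∀ k : ℕ, ¬ (1 = 2 * k) := by intro k; omega
  simp [Multiset.count_cons, Multiset.count_singleton, hne] at hc
  have hs : s = s' := by omega
  subst hs
  rw [add_left_inj] at hp
  have hm : 2 * b ∈ ({2 * (s - b'), 2 * b'} : Multiset ℕ) := by rw [← hp]; simp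
  simp only [Multiset.insert_eq_cons, Multiset.mem_cons, Multiset.mem_singleton] at hm
  rw [Prod.mk.injEq]
  omega

theorem card_B_gt_card_leftover_even (n : ℕ) (hev : Even n) (hn : 14 ≤ n) :
    Nat.card {l : n.Partition //
        l.evenCount = 2 ∧ (∀ p ∈ l.parts, p % 2 = 1 → p = 1) ∧ l.evenCount < l.oddCount} >
      Nat.card {l : n.Partition //
        l.evenCount = l.oddCount + 1 ∧ l.parts.sup % 2 = 0 ∧
          (l.parts.filter (fun p => 2 < p)).card ≤ 2} := by
  obtain ⟨m, rfl⟩ := hev.two_dvd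
  have hm : 7 ≤ m := by omega
  have hB : (pairSet m).card ≤ Nat.card {l : (2 * m).Partition //
        l.evenCount = 2 ∧ (∀ p ∈ l.parts, p % 2 = 1 → p = 1) ∧ l.evenCount < l.oddCount} := by
    rw [← Nat.card_eq_finsetCard]
    refine Nat.card_le_card_of_injective
      (fun t => ⟨pairPartition m t.1 t.2, pairPartition_spec m t.1 t.2⟩) ?_
    intro t t' h
    exact Subtype.ext (pairPartition_inj m _ _ t.2 t'.2 (congrArg Subtype.val h))
  have hL : Nat.card {l : (2 * m).Partition //
        l.evenCount = l.oddCount + 1 ∧ l.parts.sup % 2 = 0 ∧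
          (l.parts.filter (fun p => 2 < p)).card ≤ 2} ≤ ((pairSet m).erase (excPair m)).card := by
    have key : ∀ l : {l : (2 * m).Partition //
        l.evenCount = l.oddCount + 1 ∧ l.parts.sup % 2 = 0 ∧
          (l.parts.filter (fun p => 2 < p)).card ≤ 2},
        ∃ t : {t // t ∈ (pairSet m).erase (excPair m)}, leftParts m t.1 = l.1.parts := by
      intro l
      obtain ⟨t, ht, h⟩ := classify m hm l.1.parts (fun p hp => l.1.parts_pos hp) l.1.parts_sum
        l.2.1 l.2.2.1 l.2.2.2
      exact ⟨⟨t, ht⟩, h⟩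
    choose f hf using key
    rw [← Nat.card_eq_finsetCard]
    refine Nat.card_le_card_of_injective f ?_
    intro l l' h
    apply Subtype.ext
    apply Nat.Partition.ext
    rw [← hf l, ← hf l', h]
  have hlt : ((pairSet m).erase (excPair m)).card < (pairSet m).card := by
    apply Finset.card_erase_lt_of_mem
    unfold excPair
    split_ifs <;> rw [mem_pairSet] <;> omega
  omega
end
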